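/- Let Q be a monic cubic complex polynomial and P a complex polynomial of degree at most 2. Suppose that for each sufficiently large n there are complex polynomials S_n of degree exactly n and V_n of degree exactly 1 with Q·S_n'' + P·S_n' + V_n·S_n = 0 identically, and that the unique root b_n of V_n converges to a point b̃ ∈ ℂ. Then there exists a unique compactly supported positive Borel probability measure ν on ℂ whose Cauchy transform satisfies C_ν(z)² = (z − b̃)/Q(z) for Lebesgue-almost every z ∈ ℂ, and the root-counting measures of the polynomials S_n converge weakly to ν. -/

import Mathlib

open MeasureTheory Polynomial Filter

/-- The root-counting measure of a polynomial: the uniform probability measure on the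
roots (counted with multiplicity). -/
noncomputable def rootMeasure (p : Polynomial ℂ) : Measure ℂ :=
  ((p.natDegree : ENNReal))⁻¹ • (p.roots.map (fun z => (Measure.dirac z))).sum

section

open Metric Set Topology ComplexConjugate

/-- The planar integral of `‖w‖ ^ (-s)` over a disc centred at the origin. -/
lemma lintegral_ball_zero_norm_rpow {s : ℝ} (hs : s < 2) {r : ℝ} (hr : 0 < r) :
    ∫⁻ w in ball (0 : ℂ) r, ENNReal.ofReal (‖w‖ ^ (-s)) =
      ENNReal.ofReal (2 * Real.pi / (2 - s) * r ^ (2 - s)) := by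
  have hint : IntegrableOn (fun y : ℝ => y ^ (1 - s)) (Ioo 0 r) := by
    have h := intervalIntegral.intervalIntegrable_rpow' (a := 0) (b := r) (r := 1 - s) (by linarith)
    rw [intervalIntegrable_iff_integrableOn_Ioo_of_le hr.le] at h
    exact h
  set f : ℝ → ℝ := (Iio r).indicator (fun y => y ^ (-s)) with hf
  have hpow : ∀ y ∈ Ioi (0 : ℝ), y ^ (2 - 1) * f y = (Ioo 0 r).indicator (fun y => y ^ (1 - s)) y := by
    intro y hy
    have hy0 : (0 : ℝ) < y := hy
    by_cases h : y < r
    · rw [hf, indicator_of_mem (by exact h), indicator_of_mem (by exact ⟨hy0, h⟩),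
        sub_eq_add_neg 1 s, Real.rpow_add hy0]
      simp
    · rw [hf, indicator_of_notMem (by simpa using h), indicator_of_notMem (by simp [h])]
      simp
  have hfi : Integrable (fun w : ℂ => f ‖w‖) := by
    rw [integrable_fun_norm_addHaar]
    simp only [Complex.finrank_real_complex, smul_eq_mul]
    rw [integrableOn_congr_fun hpow measurableSet_Ioi]
    exact (hint.integrable_indicator measurableSet_Ioo).integrableOn
  have hval : ∫ w : ℂ, f ‖w‖ = 2 * Real.pi / (2 - s) * r ^ (2 - s) := by
    rw [integral_fun_norm_addHaar]
    simp only [Complex.finrank_real_complex, smul_eq_mul, nsmul_eq_mul]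
    rw [setIntegral_congr_fun measurableSet_Ioi hpow, setIntegral_indicator measurableSet_Ioo,
      inter_eq_self_of_subset_right Ioo_subset_Ioi_self,
      ← integral_Ioc_eq_integral_Ioo, ← intervalIntegral.integral_of_le hr.le,
      integral_rpow (Or.inl (by linarith))]
    have h2 : (2 : ℝ) - s ≠ 0 := by linarith
    have : (1 : ℝ) - s + 1 = 2 - s := by ring
    rw [this, Real.zero_rpow h2, measureReal_def, Complex.volume_ball]
    simp
    field_simp
  rw [← hval, ofReal_integral_eq_lintegral_ofReal hfi, ← lintegral_indicator measurableSet_ball]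
  · congr 1
    ext w
    by_cases h : ‖w‖ < r
    · simp [hf, indicator, h]
    · simp [hf, indicator, h]
  · refine Eventually.of_forall fun w => ?_
    simp only [hf, indicator]
    split_ifs
    · exact Real.rpow_nonneg (norm_nonneg _) _
    · exact le_rfl

/-- The planar integral of `‖z - ξ‖ ^ (-s)` over a disc is bounded uniformly in `ξ`. -/
lemma lintegral_ball_norm_sub_rpow_le {s : ℝ} (hs0 : 0 ≤ s) (hs : s < 2) (a ξ : ℂ) {r : ℝ}
    (hr : 0 < r) :
    ∫⁻ z in ball a r, ENNReal.ofReal (‖z - ξ‖ ^ (-s)) ≤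
      ENNReal.ofReal ((2 * Real.pi / (2 - s) + Real.pi) * r ^ (2 - s)) := by
  have h1 : ∫⁻ z in ball ξ r, ENNReal.ofReal (‖z - ξ‖ ^ (-s)) =
      ENNReal.ofReal (2 * Real.pi / (2 - s) * r ^ (2 - s)) := by
    rw [← lintegral_ball_zero_norm_rpow hs hr, ← lintegral_indicator measurableSet_ball,
      ← lintegral_indicator measurableSet_ball,
      ← lintegral_sub_right_eq_self ((ball (0 : ℂ) r).indicator _) ξ]
    congr 1
    ext z
    simp [indicator, dist_eq_norm]
  have h2 : ∫⁻ z in ball a r \ ball ξ r, ENNReal.ofReal (‖z - ξ‖ ^ (-s)) ≤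
      ENNReal.ofReal (Real.pi * r ^ (2 - s)) := by
    calc ∫⁻ z in ball a r \ ball ξ r, ENNReal.ofReal (‖z - ξ‖ ^ (-s))
        ≤ ∫⁻ z in ball a r \ ball ξ r, ENNReal.ofReal (r ^ (-s)) := by
          refine setLIntegral_mono' (measurableSet_ball.diff measurableSet_ball) fun z hz => ?_
          refine ENNReal.ofReal_le_ofReal ?_
          have : r ≤ ‖z - ξ‖ := by simpa [dist_eq_norm] using hz.2
          exact Real.rpow_le_rpow_of_nonpos hr this (by linarith)
      _ ≤ ENNReal.ofReal (r ^ (-s)) * volume (ball a r) := by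
          rw [setLIntegral_const]
          gcongr
          exact sdiff_subset
      _ = ENNReal.ofReal (Real.pi * r ^ (2 - s)) := by
          rw [Complex.volume_ball, ← ENNReal.ofReal_pow hr.le,
            show (NNReal.pi : ENNReal) = ENNReal.ofReal Real.pi by
              rw [← NNReal.coe_real_pi, ENNReal.ofReal_coe_nnreal],
            ← ENNReal.ofReal_mul (by positivity), ← ENNReal.ofReal_mul (by positivity),
            sub_eq_add_neg, Real.rpow_add hr]
          congr 1
          norm_cast
          ring
  calc ∫⁻ z in ball a r, ENNReal.ofReal (‖z - ξ‖ ^ (-s))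
      ≤ ∫⁻ z in ball ξ r ∪ (ball a r \ ball ξ r), ENNReal.ofReal (‖z - ξ‖ ^ (-s)) :=
        lintegral_mono_set (by intro z hz; by_cases h : z ∈ ball ξ r <;> simp_all)
    _ ≤ _ := (lintegral_union_le _ _ _)
    _ ≤ ENNReal.ofReal (2 * Real.pi / (2 - s) * r ^ (2 - s)) +
        ENNReal.ofReal (Real.pi * r ^ (2 - s)) := add_le_add h1.le h2
    _ = _ := by
        rw [← ENNReal.ofReal_add (mul_nonneg (div_nonneg (by positivity) (by linarith))
          (by positivity)) (by positivity)]
        congr 1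
        ring

lemma lintegral_ball_enorm_inv_sub_le (a ξ : ℂ) {r : ℝ} (hr : 0 < r) :
    ∫⁻ z in ball a r, ‖(z - ξ)⁻¹‖ₑ ≤ ENNReal.ofReal (3 * Real.pi * r) := by
  have h := lintegral_ball_norm_sub_rpow_le zero_le_one one_lt_two a ξ hr
  refine le_trans (le_of_eq ?_) (h.trans (le_of_eq ?_))
  · congr 1
    ext z
    rw [← ofReal_norm, norm_inv, Real.rpow_neg_one]
  · congr 1
    rw [show (2 : ℝ) - 1 = 1 by norm_num, Real.rpow_one]
    ring

section Kernels

/-- The Cauchy transform of a measure on the plane. -/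
noncomputable def cauchyTransform (μ : Measure ℂ) (z : ℂ) : ℂ := ∫ ξ, (z - ξ)⁻¹ ∂μ

/-- A convolution kernel dominated by `‖w‖⁻¹` is integrable on discs, jointly in both variables. -/
lemma integrable_prod_kernel {k : ℂ → ℂ} (hk : Measurable k) (hb : ∀ w, ‖k w‖ ≤ ‖w⁻¹‖)
    (μ : Measure ℂ) [IsFiniteMeasure μ] (a : ℂ) (r : ℝ) :
    Integrable (fun p : ℂ × ℂ => k (p.1 - p.2)) ((volume.restrict (ball a r)).prod μ) := by
  have hm : Measurable (fun p : ℂ × ℂ => k (p.1 - p.2)) := hk.comp (measurable_fst.sub measurable_snd)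
  refine ⟨hm.aestronglyMeasurable, ?_⟩
  rcases le_or_gt r 0 with hr | hr
  · rw [ball_eq_empty.2 hr]; simp
  rw [HasFiniteIntegral, lintegral_prod_symm _ hm.enorm.aemeasurable]
  calc ∫⁻ y, (∫⁻ x in ball a r, ‖k (x - y)‖ₑ) ∂μ ≤ ∫⁻ y, ENNReal.ofReal (3 * Real.pi * r) ∂μ := by
        refine lintegral_mono fun y => le_trans ?_ (lintegral_ball_enorm_inv_sub_le a y hr)
        refine lintegral_mono fun x => ?_
        simpa only [enorm_le_iff_norm_le] using hb (x - y)
    _ < ⊤ := by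
        rw [lintegral_const]
        exact ENNReal.mul_lt_top ENNReal.ofReal_lt_top (measure_lt_top _ _)

lemma ae_of_forall_ball {p : ℂ → Prop}
    (h : ∀ n : ℕ, ∀ᵐ z ∂(volume.restrict (ball (0 : ℂ) n)), p z) : ∀ᵐ z : ℂ, p z := by
  have h' := (ae_restrict_iUnion_iff (μ := volume) (fun n : ℕ => ball (0 : ℂ) n) p).2 h
  rwa [iUnion_ball_nat, Measure.restrict_univ] at h'

lemma ae_integrable_inv_sub (μ : Measure ℂ) [IsFiniteMeasure μ] :
    ∀ᵐ z : ℂ, Integrable (fun ξ => (z - ξ)⁻¹) μ :=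
  ae_of_forall_ball fun n =>
    (integrable_prod_kernel measurable_inv (fun _ => le_rfl) μ 0 n).prod_right_ae

lemma integrableOn_cauchyTransform (μ : Measure ℂ) [IsFiniteMeasure μ] (a : ℂ) (r : ℝ) :
    IntegrableOn (cauchyTransform μ) (ball a r) :=
  (integrable_prod_kernel measurable_inv (fun _ => le_rfl) μ a r).integral_prod_left

lemma locallyIntegrable_cauchyTransform (μ : Measure ℂ) [IsFiniteMeasure μ] :
    LocallyIntegrable (cauchyTransform μ) := fun z =>
  ⟨ball z 1, ball_mem_nhds z one_pos, integrableOn_cauchyTransform μ z 1⟩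

/-- Fubini's theorem for a continuous compactly supported function against the convolution of a
measure with a kernel. -/
lemma integral_mul_kernel_comm {k : ℂ → ℂ} {μ : Measure ℂ} [IsFiniteMeasure μ]
    (hk : ∀ r, Integrable (fun p : ℂ × ℂ => k (p.1 - p.2))
      ((volume.restrict (ball 0 r)).prod μ))
    {g : ℂ → ℂ} (hg : Continuous g) (hgs : HasCompactSupport g) :
    ∫ z, g z * ∫ ξ, k (z - ξ) ∂μ = ∫ ξ, (∫ z, g z * k (z - ξ)) ∂μ := by
  obtain ⟨r, hr⟩ := hgs.isCompact.isBounded.subset_ball 0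
  have h0 : ∀ z, z ∉ ball (0 : ℂ) r → g z = 0 := fun z hz =>
    image_eq_zero_of_notMem_tsupport fun h => hz (hr h)
  obtain ⟨M, hM⟩ := hg.bounded_above_of_compact_support hgs
  have hI : Integrable (fun p : ℂ × ℂ => g p.1 * k (p.1 - p.2))
      ((volume.restrict (ball 0 r)).prod μ) :=
    (hk r).bdd_mul (c := M)
      ((hg.comp continuous_fst).aestronglyMeasurable) (Eventually.of_forall fun p => hM p.1)
  have h1 := integral_integral_swap (f := fun z ξ => g z * k (z - ξ)) hI
  have h2 : ∀ F : ℂ → ℂ, ∫ z in ball 0 r, g z * F z = ∫ z, g z * F z := fun F =>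
    setIntegral_eq_integral_of_forall_compl_eq_zero fun z hz => by rw [h0 z hz, zero_mul]
  simp_rw [integral_const_mul] at h1
  simpa only [h2] using h1

lemma integrable_prod_of_bounded {k : ℂ → ℂ} (hk : Measurable k) {M : ℝ} (hb : ∀ w, ‖k w‖ ≤ M)
    (μ : Measure ℂ) [IsFiniteMeasure μ] (a : ℂ) (r : ℝ) :
    Integrable (fun p : ℂ × ℂ => k (p.1 - p.2)) ((volume.restrict (ball a r)).prod μ) := by
  have : IsFiniteMeasure (volume.restrict (ball a r)) := ⟨by
    rw [Measure.restrict_apply_univ]; exact measure_ball_lt_top⟩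
  exact .of_bound (hk.comp (measurable_fst.sub measurable_snd)).aestronglyMeasurable M
    (Eventually.of_forall fun p => hb _)

end Kernels

section Regularised

/-- The operator `∂ₓ + i ∂ᵧ`. -/
noncomputable def dbar (g : ℂ → ℂ) (z : ℂ) : ℂ := fderiv ℝ g z 1 + Complex.I * fderiv ℝ g z Complex.I

lemma ContDiff.continuous_dbar {g : ℂ → ℂ} (hg : ContDiff ℝ 1 g) : Continuous (dbar g) := by
  have h := hg.continuous_fderiv one_ne_zero
  exact (h.clm_apply continuous_const).add (continuous_const.mul (h.clm_apply continuous_const))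

lemma HasCompactSupport.dbar {g : ℂ → ℂ} (hg : HasCompactSupport g) :
    HasCompactSupport (dbar g) := by
  refine (hg.fderiv ℝ).mono' ?_
  refine Function.support_subset_iff'.2 fun z hz => ?_
  simp [_root_.dbar, image_eq_zero_of_notMem_tsupport hz]

lemma dbar_mul {g h : ℂ → ℂ} {z : ℂ} (hg : DifferentiableAt ℝ g z) (hh : DifferentiableAt ℝ h z) :
    dbar (fun z => g z * h z) z = dbar g z * h z + g z * dbar h z := by
  have := (hg.hasFDerivAt.mul hh.hasFDerivAt).fderiv
  simp only [dbar]
  rw [show (fun z => g z * h z) = g * h from rfl, this]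
  simp
  ring

/-- Integration by parts for `∂ₓ + i ∂ᵧ`. -/
lemma integral_mul_dbar {g F : ℂ → ℂ} (hg : ContDiff ℝ 1 g) (hgs : HasCompactSupport g)
    (hF : ContDiff ℝ 1 F) : ∫ z, g z * dbar F z = -∫ z, dbar g z * F z := by
  have hgF : ∀ v, Continuous fun z => fderiv ℝ g z v := fun v =>
    (hg.continuous_fderiv one_ne_zero).clm_apply continuous_const
  have hFF : ∀ v, Continuous fun z => fderiv ℝ F z v := fun v =>
    (hF.continuous_fderiv one_ne_zero).clm_apply continuous_const
  have hs : ∀ v, HasCompactSupport fun z => fderiv ℝ g z v := fun v => hgs.fderiv_apply ℝ v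
  have i1 : ∀ v, Integrable fun z => fderiv ℝ g z v * F z := fun v =>
    ((hgF v).mul hF.continuous).integrable_of_hasCompactSupport ((hs v).mul_right)
  have i2 : ∀ v, Integrable fun z => g z * fderiv ℝ F z v := fun v =>
    (hg.continuous.mul (hFF v)).integrable_of_hasCompactSupport hgs.mul_right
  have i3 : Integrable fun z => g z * F z :=
    (hg.continuous.mul hF.continuous).integrable_of_hasCompactSupport hgs.mul_right
  have key : ∀ v, ∫ z, g z * fderiv ℝ F z v = -∫ z, fderiv ℝ g z v * F z := fun v =>
    integral_mul_fderiv_eq_neg_fderiv_mul_of_integrable (i1 v) (i2 v) i3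
      (fun z _ => hg.differentiable one_ne_zero z) (fun z _ => hF.differentiable one_ne_zero z)
  have e1 : ∀ z, g z * dbar F z
      = g z * fderiv ℝ F z 1 + Complex.I * (g z * fderiv ℝ F z Complex.I) := by
    intro z; simp only [dbar]; ring
  have e2 : ∀ z, dbar g z * F z
      = fderiv ℝ g z 1 * F z + Complex.I * (fderiv ℝ g z Complex.I * F z) := by
    intro z; simp only [dbar]; ring
  simp_rw [e1, e2]
  rw [integral_add (i2 1) ((i2 _).const_mul _), integral_add (i1 1) ((i1 _).const_mul _),
    integral_const_mul, integral_const_mul, key, key]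
  ring

/-- A smooth approximation of the Cauchy kernel `w⁻¹`. -/
noncomputable def regCauchy (e : ℝ) (w : ℂ) : ℂ := ((‖w‖ ^ 2 + e ^ 2)⁻¹ : ℝ) • conj w

/-- A smooth approximation of the logarithmic kernel. -/
noncomputable def regLog (e : ℝ) (w : ℂ) : ℝ := Real.log (‖w‖ ^ 2 + e ^ 2) / 2

/-- A smooth approximation of a multiple of the Dirac mass at the origin. -/
noncomputable def regDelta (e : ℝ) (w : ℂ) : ℝ := e ^ 2 / (‖w‖ ^ 2 + e ^ 2) ^ 2

variable {e : ℝ}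

lemma hasFDerivAt_norm_sq_add (w : ℂ) :
    HasFDerivAt (fun w : ℂ => ‖w‖ ^ 2 + e ^ 2) (2 • innerSL ℝ w) w :=
  (hasStrictFDerivAt_norm_sq w).hasFDerivAt.add_const _

lemma norm_sq_add_pos (he : 0 < e) (w : ℂ) : 0 < ‖w‖ ^ 2 + e ^ 2 := by positivity

lemma contDiff_regCauchy (he : 0 < e) : ContDiff ℝ 1 (regCauchy e) := by
  refine ContDiff.smul (ContDiff.inv ((contDiff_norm_sq ℝ).add contDiff_const)
    fun w => (norm_sq_add_pos he w).ne') ?_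
  exact Complex.conjCLE.contDiff

lemma dbar_regCauchy (he : 0 < e) (w : ℂ) : dbar (regCauchy e) w = 2 * regDelta e w := by
  have hd := norm_sq_add_pos he w
  have h := ((hasDerivAt_inv hd.ne').comp_hasFDerivAt w (hasFDerivAt_norm_sq_add (e := e) w)).smul
    (Complex.conjCLE.hasFDerivAt (x := w))
  have h' : fderiv ℝ (regCauchy e) w = _ := h.fderiv
  have hv : ∀ v, fderiv ℝ (regCauchy e) w v = ((‖w‖ ^ 2 + e ^ 2 : ℝ) : ℂ)⁻¹ * conj v -
      (((‖w‖ ^ 2 + e ^ 2 : ℝ) : ℂ) ^ 2)⁻¹ * (2 * ((inner ℝ w v : ℝ) : ℂ)) * conj w := by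
    intro v
    rw [h']
    simp
    ring
  have h3 : conj w * w = ((‖w‖ ^ 2 : ℝ) : ℂ) := by
    rw [Complex.sq_norm, mul_comm, Complex.mul_conj]
  have h4 : (w.re : ℂ) + w.im * Complex.I = w := Complex.re_add_im w
  have hd' : ((‖w‖ ^ 2 + e ^ 2 : ℝ) : ℂ) ≠ 0 := by exact_mod_cast hd.ne'
  have h5 : inner ℝ w 1 = w.re := by simp [Complex.inner]
  have h6 : inner ℝ w Complex.I = w.im := by simp [Complex.inner]
  simp only [dbar, hv, regDelta, h5, h6, map_one, Complex.conj_I]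
  push_cast at hd' h3 ⊢
  field_simp
  linear_combination (-2 * conj w) * h4 - 2 * h3 - (‖w‖ ^ 2 + e ^ 2) * Complex.I_sq

lemma contDiff_regCauchy_sub (he : 0 < e) (ξ : ℂ) :
    ContDiff ℝ 1 (fun z => regCauchy e (z - ξ)) :=
  (contDiff_regCauchy he).comp (contDiff_id.sub contDiff_const)

lemma dbar_regCauchy_sub (he : 0 < e) (ξ z : ℂ) :
    dbar (fun z => regCauchy e (z - ξ)) z = 2 * regDelta e (z - ξ) := by
  rw [← dbar_regCauchy he]
  simp only [dbar, fderiv_comp_sub]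

lemma norm_regCauchy (he : 0 < e) (w : ℂ) : ‖regCauchy e w‖ = ‖w‖ / (‖w‖ ^ 2 + e ^ 2) := by
  rw [regCauchy, norm_smul, Real.norm_of_nonneg (inv_nonneg.2 (norm_sq_add_pos he w).le)]
  simp [div_eq_inv_mul]

lemma norm_regCauchy_le_inv (he : 0 < e) (w : ℂ) : ‖regCauchy e w‖ ≤ ‖w⁻¹‖ := by
  rw [norm_regCauchy he, norm_inv]
  rcases eq_or_ne w 0 with rfl | hw
  · simp
  have : 0 < ‖w‖ := norm_pos_iff.2 hw
  rw [div_le_iff₀ (by positivity), inv_mul_eq_div, le_div_iff₀ this]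
  nlinarith [sq_nonneg e]

lemma norm_regCauchy_le (he : 0 < e) (w : ℂ) : ‖regCauchy e w‖ ≤ 1 / e := by
  rw [norm_regCauchy he, div_le_div_iff₀ (by positivity) he]
  nlinarith [sq_nonneg (‖w‖ - e), norm_nonneg w]

lemma norm_regCauchy_sub_inv_le (he : 0 < e) (w : ℂ) :
    ‖regCauchy e w - w⁻¹‖ ≤ e ^ (1 / 2 : ℝ) * ‖w‖ ^ (-(3 / 2) : ℝ) := by
  rcases eq_or_ne w 0 with rfl | hw
  · simp [regCauchy]
  have hw' : 0 < ‖w‖ := norm_pos_iff.2 hw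
  have hd := norm_sq_add_pos he w
  have h1 : regCauchy e w - w⁻¹ = ((-(e ^ 2 / (‖w‖ ^ 2 + e ^ 2)) : ℝ) : ℂ) * w⁻¹ := by
    have h2 : ((‖w‖ ^ 2 + e ^ 2 : ℝ) : ℂ) ≠ 0 := by exact_mod_cast hd.ne'
    have h3 : conj w * w = ((‖w‖ ^ 2 : ℝ) : ℂ) := by
      rw [Complex.sq_norm, mul_comm, Complex.mul_conj]
    rw [regCauchy, Complex.real_smul]
    push_cast at h2 h3 ⊢
    field_simp
    linear_combination h3
  rw [h1, norm_mul, norm_inv, Complex.norm_real, norm_neg, Real.norm_of_nonneg (by positivity),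
    show (-(3 / 2) : ℝ) = -(1 / 2) + -1 by norm_num, Real.rpow_add hw', Real.rpow_neg_one,
    ← mul_assoc, Real.rpow_neg hw'.le, ← div_eq_mul_inv (e ^ (1 / 2 : ℝ)),
    ← Real.div_rpow he.le hw'.le]
  refine mul_le_mul_of_nonneg_right ?_ (by positivity)
  rcases le_total e ‖w‖ with h | h
  · calc e ^ 2 / (‖w‖ ^ 2 + e ^ 2) ≤ e / ‖w‖ := by
          rw [div_le_div_iff₀ hd hw']
          nlinarith [mul_nonneg (mul_nonneg he.le hw'.le) (sub_nonneg.2 h), pow_pos he 3]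
      _ = (e / ‖w‖) ^ (1 : ℝ) := (Real.rpow_one _).symm
      _ ≤ _ := Real.rpow_le_rpow_of_exponent_ge (by positivity) ((div_le_one hw').2 h) (by norm_num)
  · calc e ^ 2 / (‖w‖ ^ 2 + e ^ 2) ≤ 1 := by
          rw [div_le_one hd]; nlinarith [sq_nonneg ‖w‖]
      _ ≤ _ := Real.one_le_rpow ((one_le_div hw').2 h) (by norm_num)

lemma tendsto_regCauchy (w : ℂ) : Tendsto (fun e => regCauchy e w) (𝓝[>] 0) (𝓝 w⁻¹) := by
  rw [tendsto_iff_norm_sub_tendsto_zero]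
  refine squeeze_zero' (Eventually.of_forall fun _ => norm_nonneg _)
    (eventually_nhdsWithin_of_forall fun e he => norm_regCauchy_sub_inv_le he w) ?_
  have : Tendsto (fun e : ℝ => e ^ (1 / 2 : ℝ) * ‖w‖ ^ (-(3 / 2) : ℝ)) (𝓝 0)
      (𝓝 ((0 : ℝ) ^ (1 / 2 : ℝ) * ‖w‖ ^ (-(3 / 2) : ℝ))) :=
    ((Real.continuousAt_rpow_const 0 (1 / 2) (by norm_num)).tendsto).mul_const _
  rw [Real.zero_rpow (by norm_num), zero_mul] at this
  exact this.mono_left nhdsWithin_le_nhds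

lemma hasFDerivAt_regLog (he : 0 < e) (w : ℂ) :
    HasFDerivAt (regLog e)
      (Complex.reCLM.comp (ContinuousLinearMap.mul ℝ ℂ (regCauchy e w))) w := by
  have hd := norm_sq_add_pos he w
  have h := ((Real.hasDerivAt_log hd.ne').comp_hasFDerivAt w
    (hasFDerivAt_norm_sq_add (e := e) w)).mul_const (2⁻¹ : ℝ)
  refine (h.congr_fderiv ?_)
  ext v
  simp only [regCauchy, ContinuousLinearMap.comp_apply, ContinuousLinearMap.mul_apply',
    smul_mul_assoc, Complex.reCLM_apply, Complex.smul_re, smul_eq_mul, smul_apply, innerSL_apply_apply,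
    Complex.inner, nsmul_eq_mul]
  rw [mul_comm v]
  push_cast
  ring

lemma continuous_regLog (he : 0 < e) : Continuous (regLog e) :=
  continuous_iff_continuousAt.2 fun w => (hasFDerivAt_regLog he w).continuousAt

lemma regDelta_nonneg (e : ℝ) (w : ℂ) : 0 ≤ regDelta e w := by
  unfold regDelta; positivity

lemma continuous_regDelta (he : 0 < e) : Continuous (regDelta e) := by
  unfold regDelta
  exact continuous_const.div (by fun_prop) fun w => (pow_pos (norm_sq_add_pos he w) 2).ne'

lemma regDelta_le (he : 0 < e) (w : ℂ) : regDelta e w ≤ 1 / e ^ 2 := by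
  unfold regDelta
  rw [div_le_div_iff₀ (by positivity) (by positivity)]
  nlinarith [sq_nonneg (‖w‖ ^ 2), sq_nonneg (‖w‖ * e)]

end Regularised

section RegTransforms

/-- The convolution of a measure with the regularised Cauchy kernel. -/
noncomputable def cauchyReg (e : ℝ) (μ : Measure ℂ) (z : ℂ) : ℂ := ∫ ξ, regCauchy e (z - ξ) ∂μ

/-- The convolution of a measure with the regularised Dirac mass. -/
noncomputable def deltaReg (e : ℝ) (μ : Measure ℂ) (z : ℂ) : ℝ := ∫ ξ, regDelta e (z - ξ) ∂μ

variable {e : ℝ} (μ : Measure ℂ) [IsFiniteMeasure μ]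

lemma integrable_regCauchy_sub (he : 0 < e) (z : ℂ) :
    Integrable (fun ξ => regCauchy e (z - ξ)) μ :=
  .of_bound (((contDiff_regCauchy he).continuous.comp
    (continuous_const.sub continuous_id)).aestronglyMeasurable) (1 / e)
    (Eventually.of_forall fun _ => norm_regCauchy_le he _)

lemma continuous_cauchyReg (he : 0 < e) : Continuous (cauchyReg e μ) :=
  continuous_of_dominated (bound := fun _ => 1 / e)
    (fun z => (integrable_regCauchy_sub μ he z).aestronglyMeasurable)
    (fun _ => Eventually.of_forall fun _ => norm_regCauchy_le he _) (integrable_const _)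
    (Eventually.of_forall fun _ =>
      (contDiff_regCauchy he).continuous.comp (continuous_id.sub continuous_const))

lemma integrable_regDelta_sub (he : 0 < e) (z : ℂ) :
    Integrable (fun ξ => regDelta e (z - ξ)) μ :=
  .of_bound (((continuous_regDelta he).comp
    (continuous_const.sub continuous_id)).aestronglyMeasurable) (1 / e ^ 2)
    (Eventually.of_forall fun _ => by
      rw [Real.norm_of_nonneg (regDelta_nonneg _ _)]; exact regDelta_le he _)

lemma continuous_deltaReg (he : 0 < e) : Continuous (deltaReg e μ) :=
  continuous_of_dominated (bound := fun _ => 1 / e ^ 2)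
    (fun z => (integrable_regDelta_sub μ he z).aestronglyMeasurable)
    (fun _ => Eventually.of_forall fun _ => by
      rw [Real.norm_of_nonneg (regDelta_nonneg _ _)]; exact regDelta_le he _) (integrable_const _)
    (Eventually.of_forall fun _ =>
      (continuous_regDelta he).comp (continuous_id.sub continuous_const))

lemma deltaReg_nonneg (e : ℝ) (μ : Measure ℂ) (z : ℂ) : 0 ≤ deltaReg e μ z :=
  integral_nonneg fun _ => regDelta_nonneg _ _

lemma integral_mul_deltaReg_eq_integral_integral (he : 0 < e) {g : ℂ → ℂ} (hg : Continuous g)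
    (hgs : HasCompactSupport g) :
    ∫ z, g z * (2 * deltaReg e μ z) = ∫ ξ, (∫ z, g z * (2 * regDelta e (z - ξ))) ∂μ := by
  have hm : Measurable fun w => 2 * (regDelta e w : ℂ) :=
    (continuous_const.mul (Complex.continuous_ofReal.comp (continuous_regDelta he))).measurable
  have h := integral_mul_kernel_comm (k := fun w => 2 * (regDelta e w : ℂ)) (μ := μ)
    (fun r => integrable_prod_of_bounded hm
      (M := 2 * (1 / e ^ 2)) (fun w => by
        rw [norm_mul, Complex.norm_real, Real.norm_of_nonneg (regDelta_nonneg _ _)]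
        simpa using regDelta_le he w) μ 0 r) hg hgs
  rw [← h]
  congr 1
  ext z
  rw [integral_const_mul, integral_complex_ofReal]
  rfl

/-- The Cauchy–Pompeiu formula for the regularised kernels. -/
lemma integral_mul_deltaReg (he : 0 < e) {g : ℂ → ℂ} (hg : ContDiff ℝ 1 g)
    (hgs : HasCompactSupport g) :
    ∫ z, g z * (2 * deltaReg e μ z) = -∫ z, dbar g z * cauchyReg e μ z := by
  have h2 := integral_mul_kernel_comm (k := regCauchy e) (μ := μ)
    (fun r => integrable_prod_kernel (contDiff_regCauchy he).continuous.measurable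
      (norm_regCauchy_le_inv he) μ 0 r) hg.continuous_dbar hgs.dbar
  unfold cauchyReg
  rw [h2, integral_mul_deltaReg_eq_integral_integral μ he hg.continuous hgs, ← integral_neg]
  congr 1
  ext ξ
  rw [← integral_mul_dbar hg hgs (contDiff_regCauchy_sub he ξ)]
  simp_rw [dbar_regCauchy_sub he]

lemma lintegral_ball_cauchyReg_sub_le (he : 0 < e) (a : ℂ) {r : ℝ} (hr : 0 < r) :
    ∫⁻ z in ball a r, ‖cauchyReg e μ z - cauchyTransform μ z‖ₑ ≤
      ENNReal.ofReal (e ^ (1 / 2 : ℝ) * (5 * Real.pi * r ^ (1 / 2 : ℝ))) * μ univ := by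
  have hm : Measurable (fun w : ℂ => regCauchy e w - w⁻¹) :=
    (contDiff_regCauchy he).continuous.measurable.sub measurable_inv
  calc ∫⁻ z in ball a r, ‖cauchyReg e μ z - cauchyTransform μ z‖ₑ
      ≤ ∫⁻ z in ball a r, ∫⁻ ξ, ‖regCauchy e (z - ξ) - (z - ξ)⁻¹‖ₑ ∂μ := by
        refine lintegral_mono_ae (ae_restrict_of_ae ?_)
        filter_upwards [ae_integrable_inv_sub μ] with z hz
        rw [cauchyReg, cauchyTransform, ← integral_sub (integrable_regCauchy_sub μ he z) hz]
        exact enorm_integral_le_lintegral_enorm _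
    _ = ∫⁻ ξ, (∫⁻ z in ball a r, ‖regCauchy e (z - ξ) - (z - ξ)⁻¹‖ₑ) ∂μ := by
        refine lintegral_lintegral_swap ?_
        exact (hm.comp (measurable_fst.sub measurable_snd)).enorm.aemeasurable
    _ ≤ ∫⁻ ξ, ENNReal.ofReal (e ^ (1 / 2 : ℝ) * (5 * Real.pi * r ^ (1 / 2 : ℝ))) ∂μ := by
        refine lintegral_mono fun ξ => ?_
        have h := lintegral_ball_norm_sub_rpow_le (s := 3 / 2) (by norm_num) (by norm_num) a ξ hr
        calc ∫⁻ z in ball a r, ‖regCauchy e (z - ξ) - (z - ξ)⁻¹‖ₑ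
            ≤ ∫⁻ z in ball a r, ENNReal.ofReal (e ^ (1 / 2 : ℝ)) *
                ENNReal.ofReal (‖z - ξ‖ ^ (-(3 / 2) : ℝ)) := by
              refine lintegral_mono fun z => ?_
              rw [← ofReal_norm, ← ENNReal.ofReal_mul (by positivity)]
              exact ENNReal.ofReal_le_ofReal (norm_regCauchy_sub_inv_le he _)
          _ ≤ _ := by
              rw [lintegral_const_mul' _ _ ENNReal.ofReal_ne_top, ENNReal.ofReal_mul (by positivity)]
              gcongr
              refine h.trans (le_of_eq ?_)
              congr 1
              norm_num
              left
              ring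
    _ = _ := by rw [lintegral_const]

/-- The regularised Cauchy transforms converge in `L¹` on discs. -/
lemma tendsto_lintegral_ball_cauchyReg_sub (a : ℂ) (r : ℝ) :
    Tendsto (fun e => ∫⁻ z in ball a r, ‖cauchyReg e μ z - cauchyTransform μ z‖ₑ) (𝓝[>] 0)
      (𝓝 0) := by
  rcases le_or_gt r 0 with hr | hr
  · simp [ball_eq_empty.2 hr]
  refine tendsto_of_tendsto_of_tendsto_of_le_of_le' tendsto_const_nhds (h := fun e =>
    ENNReal.ofReal (e ^ (1 / 2 : ℝ) * (5 * Real.pi * r ^ (1 / 2 : ℝ))) * μ univ) ?_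
    (Eventually.of_forall fun _ => zero_le)
    (eventually_nhdsWithin_of_forall fun e he => lintegral_ball_cauchyReg_sub_le μ he a hr)
  have h : Tendsto (fun e : ℝ => e ^ (1 / 2 : ℝ) * (5 * Real.pi * r ^ (1 / 2 : ℝ))) (𝓝 0)
      (𝓝 ((0 : ℝ) ^ (1 / 2 : ℝ) * (5 * Real.pi * r ^ (1 / 2 : ℝ)))) :=
    ((Real.continuousAt_rpow_const 0 (1 / 2) (by norm_num)).tendsto).mul_const _
  rw [Real.zero_rpow (by norm_num), zero_mul] at h
  have h2 := ENNReal.Tendsto.mul_const (ENNReal.tendsto_ofReal h) (b := μ univ)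
    (Or.inr (measure_ne_top _ _))
  rw [ENNReal.ofReal_zero, zero_mul] at h2
  exact h2.mono_left nhdsWithin_le_nhds

lemma tendsto_cauchyReg {z : ℂ} (hz : Integrable (fun ξ => (z - ξ)⁻¹) μ) :
    Tendsto (fun e => cauchyReg e μ z) (𝓝[>] 0) (𝓝 (cauchyTransform μ z)) := by
  refine tendsto_integral_filter_of_dominated_convergence (fun ξ => ‖(z - ξ)⁻¹‖) ?_ ?_ hz.norm ?_
  · exact eventually_nhdsWithin_of_forall fun e he =>
      (integrable_regCauchy_sub μ he z).aestronglyMeasurable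
  · exact eventually_nhdsWithin_of_forall fun e he =>
      Eventually.of_forall fun ξ => norm_regCauchy_le_inv he _
  · exact Eventually.of_forall fun ξ => tendsto_regCauchy _

/-- Convergence in `L¹` on discs passes to integrals against bounded compactly supported
weights depending on the parameter. -/
lemma tendsto_integral_mul_sub_zero {h : ℂ → ℂ} (hh : Continuous h) (hhs : HasCompactSupport h) :
    Tendsto (fun e => ∫ z, ‖h z‖ * ‖cauchyReg e μ z - cauchyTransform μ z‖) (𝓝[>] 0) (𝓝 0) := by
  obtain ⟨r, hr⟩ := hhs.isCompact.isBounded.subset_ball 0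
  obtain ⟨M, hM⟩ := hh.bounded_above_of_compact_support hhs
  have hM0 : 0 ≤ M := (norm_nonneg _).trans (hM 0)
  have h0 : ∀ z, z ∉ ball (0 : ℂ) r → h z = 0 := fun z hz =>
    image_eq_zero_of_notMem_tsupport fun h => hz (hr h)
  have hT := ENNReal.Tendsto.const_mul (tendsto_lintegral_ball_cauchyReg_sub μ 0 r)
    (a := ENNReal.ofReal M) (Or.inr ENNReal.ofReal_ne_top)
  rw [mul_zero] at hT
  have hT2 := (ENNReal.tendsto_toReal ENNReal.zero_ne_top).comp hT
  rw [ENNReal.toReal_zero] at hT2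
  have hlt : ∀ᶠ e in 𝓝[>] (0 : ℝ), ENNReal.ofReal M *
      ∫⁻ z in ball 0 r, ‖cauchyReg e μ z - cauchyTransform μ z‖ₑ < ⊤ :=
    hT.eventually (gt_mem_nhds ENNReal.zero_lt_top)
  refine squeeze_zero' (Eventually.of_forall fun e => integral_nonneg fun z => by positivity) ?_ hT2
  filter_upwards [hlt] with e he
  rw [Function.comp_apply, ← ENNReal.ofReal_le_iff_le_toReal he.ne]
  have h1 : ∫ z, ‖h z‖ * ‖cauchyReg e μ z - cauchyTransform μ z‖ =
      ∫ z in ball 0 r, ‖h z‖ * ‖cauchyReg e μ z - cauchyTransform μ z‖ := by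
    rw [setIntegral_eq_integral_of_forall_compl_eq_zero]
    intro z hz
    rw [h0 z hz, norm_zero, zero_mul]
  rw [h1, ← lintegral_const_mul' _ _ ENNReal.ofReal_ne_top]
  refine le_trans ?_ (lintegral_mono (f := fun z =>
    ‖(‖h z‖ * ‖cauchyReg e μ z - cauchyTransform μ z‖ : ℝ)‖ₑ) fun z => ?_)
  · refine le_trans ?_ (enorm_integral_le_lintegral_enorm _)
    rw [← ofReal_norm]
    exact ENNReal.ofReal_le_ofReal (Real.le_norm_self _)
  · dsimp only
    rw [enorm_mul, enorm_norm, enorm_norm]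
    gcongr
    rw [← ofReal_norm]
    exact ENNReal.ofReal_le_ofReal (hM z)

lemma integrable_mul_cauchyTransform {h : ℂ → ℂ} (hh : Continuous h) (hhs : HasCompactSupport h) :
    Integrable (fun z => h z * cauchyTransform μ z) :=
  (locallyIntegrable_cauchyTransform μ).integrable_smul_left_of_hasCompactSupport hh hhs

lemma integrable_mul_cauchyReg (he : 0 < e) {h : ℂ → ℂ} (hh : Continuous h)
    (hhs : HasCompactSupport h) : Integrable (fun z => h z * cauchyReg e μ z) :=
  (hh.mul (continuous_cauchyReg μ he)).integrable_of_hasCompactSupport hhs.mul_right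

lemma tendsto_integral_mul_cauchyReg {h : ℂ → ℂ} (hh : Continuous h)
    (hhs : HasCompactSupport h) :
    Tendsto (fun e => ∫ z, h z * cauchyReg e μ z) (𝓝[>] 0)
      (𝓝 (∫ z, h z * cauchyTransform μ z)) := by
  rw [tendsto_iff_norm_sub_tendsto_zero]
  refine squeeze_zero' (Eventually.of_forall fun e => norm_nonneg _) ?_
    (tendsto_integral_mul_sub_zero μ hh hhs)
  refine eventually_nhdsWithin_of_forall fun e he => ?_
  rw [← integral_sub (integrable_mul_cauchyReg μ he hh hhs)
    (integrable_mul_cauchyTransform μ hh hhs)]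
  refine (norm_integral_le_integral_norm _).trans (le_of_eq ?_)
  congr 1
  ext z
  rw [← mul_sub, norm_mul]

lemma integrable_regDelta_one : Integrable (regDelta 1) := by
  have h := integrable_rpow_neg_one_add_norm_sq (E := ℂ) (r := 4) (μ := volume)
    (by simp; norm_num)
  refine h.congr (Eventually.of_forall fun w => ?_)
  simp only [regDelta]
  rw [show (-4 / 2 : ℝ) = -2 by norm_num, Real.rpow_neg (by positivity)]
  rw [Real.rpow_two, one_pow, add_comm, one_div]

/-- The total mass of the regularised Dirac mass. -/
noncomputable def deltaMass : ℝ := ∫ w, regDelta 1 w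

lemma deltaMass_pos : 0 < deltaMass := by
  refine (integral_pos_iff_support_of_nonneg (fun w => regDelta_nonneg 1 w)
    integrable_regDelta_one).2 ?_
  have : Function.support (regDelta 1) = univ := by
    ext w
    simp only [Function.mem_support, mem_univ, iff_true, regDelta]
    positivity
  simp [this]

lemma integral_mul_regDelta_sub (he : 0 < e) (g : ℂ → ℂ) (ξ : ℂ) :
    ∫ z, g z * regDelta e (z - ξ) = ∫ w, g (ξ + e • w) * regDelta 1 w := by
  have h1 : ∫ z, g z * regDelta e (z - ξ) = ∫ z, g (ξ + z) * regDelta e z := by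
    rw [← integral_add_left_eq_self _ ξ]
    simp
  have h2 := Measure.integral_comp_smul volume (fun z => g (ξ + z) * regDelta e z) e
  rw [h1]
  have h3 : ∀ w, ((regDelta 1 w : ℝ) : ℂ) = (e ^ 2 : ℝ) • ((regDelta e (e • w) : ℝ) : ℂ) := by
    intro w
    rw [Complex.real_smul, ← Complex.ofReal_mul]
    congr 1
    simp only [regDelta, norm_smul, Real.norm_of_nonneg he.le]
    field_simp
  simp_rw [h3, mul_smul_comm]
  rw [integral_smul, h2]
  simp only [Complex.finrank_real_complex]
  rw [abs_of_pos (by positivity), smul_smul, mul_inv_cancel₀ (by positivity), one_smul]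

lemma tendsto_integral_mul_regDelta_sub {g : ℂ → ℂ} (hg : Continuous g) {M : ℝ}
    (hM : ∀ z, ‖g z‖ ≤ M) (ξ : ℂ) :
    Tendsto (fun e => ∫ z, g z * (2 * regDelta e (z - ξ))) (𝓝[>] 0)
      (𝓝 (2 * deltaMass * g ξ)) := by
  have h : Tendsto (fun e : ℝ => 2 * ∫ w, g (ξ + e • w) * regDelta 1 w) (𝓝[>] 0)
      (𝓝 (2 * ∫ w, g ξ * regDelta 1 w)) := by
    refine Tendsto.const_mul _ (tendsto_integral_filter_of_dominated_convergence
      (fun w => M * regDelta 1 w) ?_ ?_ (integrable_regDelta_one.const_mul M) ?_)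
    · exact Eventually.of_forall fun e => (Continuous.mul (by fun_prop)
        (Complex.continuous_ofReal.comp (continuous_regDelta one_pos))).aestronglyMeasurable
    · refine Eventually.of_forall fun e => Eventually.of_forall fun w => ?_
      rw [norm_mul, Complex.norm_real, Real.norm_of_nonneg (regDelta_nonneg _ _)]
      exact mul_le_mul_of_nonneg_right (hM _) (regDelta_nonneg _ _)
    · refine Eventually.of_forall fun w => Tendsto.mul_const _ ?_
      have : Continuous fun e : ℝ => g (ξ + e • w) := by fun_prop
      have := this.tendsto 0
      simp only [zero_smul, add_zero] at this
      exact this.mono_left nhdsWithin_le_nhds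
  rw [integral_const_mul, integral_complex_ofReal] at h
  have h' : (2 : ℂ) * deltaMass * g ξ = 2 * (g ξ * ((∫ w, regDelta 1 w : ℝ) : ℂ)) := by
    rw [deltaMass]; ring
  rw [h']
  refine h.congr' (eventually_nhdsWithin_of_forall fun e he => ?_)
  rw [← integral_mul_regDelta_sub he, ← integral_const_mul]
  congr 1
  ext z
  ring

/-- The Cauchy–Pompeiu formula integrated against a measure. -/
lemma integral_eq_neg_integral_dbar_mul_cauchyTransform {g : ℂ → ℂ} (hg : ContDiff ℝ 1 g)
    (hgs : HasCompactSupport g) :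
    2 * deltaMass * ∫ ξ, g ξ ∂μ = -∫ z, dbar g z * cauchyTransform μ z := by
  obtain ⟨M, hM⟩ := hg.continuous.bounded_above_of_compact_support hgs
  have hR := (tendsto_integral_mul_cauchyReg μ hg.continuous_dbar hgs.dbar).neg
  have hL : Tendsto (fun e => ∫ ξ, (∫ z, g z * (2 * regDelta e (z - ξ))) ∂μ) (𝓝[>] 0)
      (𝓝 (∫ ξ, 2 * deltaMass * g ξ ∂μ)) := by
    refine tendsto_integral_filter_of_dominated_convergence
      (fun _ => 2 * (M * deltaMass)) ?_ ?_ (integrable_const _)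
      (Eventually.of_forall fun ξ => tendsto_integral_mul_regDelta_sub hg.continuous hM ξ)
    · refine eventually_nhdsWithin_of_forall fun e he => Continuous.aestronglyMeasurable ?_
      have h1 : ∀ ξ, ∫ z, g z * (2 * regDelta e (z - ξ)) =
          2 * ∫ w, g (ξ + e • w) * regDelta 1 w := by
        intro ξ
        rw [← integral_mul_regDelta_sub he, ← integral_const_mul]
        congr 1; ext z; ring
      simp_rw [h1]
      have hgc := hg.continuous
      refine continuous_const.mul (continuous_of_dominated (bound := fun w => M * regDelta 1 w)
        ?_ ?_ (integrable_regDelta_one.const_mul M) ?_)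
      · exact fun ξ => (Continuous.mul (by fun_prop)
          (Complex.continuous_ofReal.comp (continuous_regDelta one_pos))).aestronglyMeasurable
      · refine fun ξ => Eventually.of_forall fun w => ?_
        rw [norm_mul, Complex.norm_real, Real.norm_of_nonneg (regDelta_nonneg _ _)]
        exact mul_le_mul_of_nonneg_right (hM _) (regDelta_nonneg _ _)
      · exact Eventually.of_forall fun w => by fun_prop
    · refine eventually_nhdsWithin_of_forall fun e he => Eventually.of_forall fun ξ => ?_
      have h1 : ∫ z, g z * (2 * regDelta e (z - ξ)) =
          2 * ∫ w, g (ξ + e • w) * regDelta 1 w := by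
        rw [← integral_mul_regDelta_sub he, ← integral_const_mul]
        congr 1; ext z; ring
      rw [h1, norm_mul, Complex.norm_ofNat]
      gcongr
      refine (norm_integral_le_of_norm_le (integrable_regDelta_one.const_mul M)
        (Eventually.of_forall fun w => ?_)).trans (le_of_eq ?_)
      · rw [norm_mul, Complex.norm_real, Real.norm_of_nonneg (regDelta_nonneg _ _)]
        exact mul_le_mul_of_nonneg_right (hM _) (regDelta_nonneg _ _)
      · rw [integral_const_mul, deltaMass]
  rw [integral_const_mul] at hL
  refine tendsto_nhds_unique hL (hR.congr' (eventually_nhdsWithin_of_forall fun e he => ?_))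
  rw [← integral_mul_deltaReg μ he hg hgs,
    integral_mul_deltaReg_eq_integral_integral μ he hg.continuous hgs]

/-- A finite measure is determined by its Cauchy transform. -/
theorem eq_of_cauchyTransform_ae_eq {μ ν : Measure ℂ} [IsFiniteMeasure μ] [IsFiniteMeasure ν]
    (h : cauchyTransform μ =ᵐ[volume] cauchyTransform ν) : μ = ν := by
  have hμ : μ ≪ μ + ν := Measure.absolutelyContinuous_of_le (Measure.le_add_right le_rfl)
  have hν : ν ≪ μ + ν := Measure.absolutelyContinuous_of_le (Measure.le_add_left le_rfl)
  have key := ae_eq_of_integral_contDiff_smul_eq (μ := μ + ν)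
    (f := fun x => (μ.rnDeriv (μ + ν) x).toReal) (f' := fun x => (ν.rnDeriv (μ + ν) x).toReal)
    Measure.integrable_toReal_rnDeriv.locallyIntegrable
    Measure.integrable_toReal_rnDeriv.locallyIntegrable ?_
  · refine (Measure.withDensity_rnDeriv_eq μ (μ + ν) hμ).symm.trans
      (Eq.trans (withDensity_congr_ae ?_) (Measure.withDensity_rnDeriv_eq ν (μ + ν) hν))
    filter_upwards [key, Measure.rnDeriv_lt_top μ (μ + ν), Measure.rnDeriv_lt_top ν (μ + ν)]
      with x hx h1 h2
    exact (ENNReal.toReal_eq_toReal_iff' h1.ne h2.ne).1 hx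
  · intro g hg hgs
    have e1 := integral_rnDeriv_smul (f := g) hμ
    have e2 := integral_rnDeriv_smul (f := g) hν
    have e3 : ∀ x y : ℝ, x • y = y • x := fun x y => mul_comm x y
    simp_rw [e3 (g _)]
    refine e1.trans (Eq.trans ?_ e2.symm)
    have hG : ContDiff ℝ 1 (fun z => (g z : ℂ)) :=
      Complex.ofRealCLM.contDiff.comp (hg.of_le (by exact_mod_cast le_top))
    have hGs : HasCompactSupport (fun z => (g z : ℂ)) := hgs.comp_left Complex.ofReal_zero
    have p1 := integral_eq_neg_integral_dbar_mul_cauchyTransform μ hG hGs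
    have p2 := integral_eq_neg_integral_dbar_mul_cauchyTransform ν hG hGs
    have p3 : ∫ z, dbar (fun z => (g z : ℂ)) z * cauchyTransform μ z =
        ∫ z, dbar (fun z => (g z : ℂ)) z * cauchyTransform ν z :=
      integral_congr_ae (h.mono fun z hz => by simp only [hz])
    rw [p3, ← p2, integral_complex_ofReal, integral_complex_ofReal] at p1
    have hne : (2 : ℂ) * deltaMass ≠ 0 := by exact_mod_cast (mul_pos two_pos deltaMass_pos).ne'
    exact_mod_cast mul_left_cancel₀ hne p1

end RegTransforms

section Cutoffs

lemma dbar_ofReal_of_hasFDerivAt {g : ℂ → ℝ} {L : ℂ →L[ℝ] ℝ} {z : ℂ} (h : HasFDerivAt g L z) :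
    dbar (fun z => (g z : ℂ)) z = L 1 + Complex.I * L Complex.I := by
  have := (Complex.ofRealCLM.hasFDerivAt.comp z h).fderiv
  unfold dbar
  rw [show (fun z => (g z : ℂ)) = Complex.ofRealCLM ∘ g from rfl, this]
  simp

/-- A smooth function equal to `1` on the disc of radius `r` and vanishing off the disc of radius
`2 * r`. -/
noncomputable def bump (c : ℂ) (r : ℝ) (z : ℂ) : ℝ :=
  Real.smoothTransition (2 - ‖z - c‖ ^ 2 / r ^ 2)

variable {c z : ℂ} {r : ℝ}

lemma contDiff_bump (c : ℂ) (r : ℝ) : ContDiff ℝ 1 (bump c r) :=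
  (Real.smoothTransition.contDiff (n := 1)).comp (contDiff_const.sub
    (((contDiff_norm_sq ℝ).comp (contDiff_id.sub contDiff_const)).div_const _))

lemma bump_nonneg (c : ℂ) (r : ℝ) (z : ℂ) : 0 ≤ bump c r z := Real.smoothTransition.nonneg _

lemma bump_le_one (c : ℂ) (r : ℝ) (z : ℂ) : bump c r z ≤ 1 := Real.smoothTransition.le_one _

lemma bump_eq_one (hr : 0 < r) (h : ‖z - c‖ ≤ r) : bump c r z = 1 := by
  refine Real.smoothTransition.one_of_one_le ?_
  have : ‖z - c‖ ^ 2 / r ^ 2 ≤ 1 := div_le_one_of_le₀ (by gcongr) (by positivity)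
  linarith

lemma bump_eq_zero (hr : 0 < r) (h : 2 * r ≤ ‖z - c‖) : bump c r z = 0 := by
  refine Real.smoothTransition.zero_of_nonpos ?_
  have : 2 ^ 2 ≤ ‖z - c‖ ^ 2 / r ^ 2 := by
    rw [le_div_iff₀ (by positivity), ← mul_pow]
    gcongr
  linarith

lemma hasCompactSupport_bump (c : ℂ) (hr : 0 < r) : HasCompactSupport (bump c r) := by
  refine HasCompactSupport.intro (isCompact_closedBall c (2 * r)) fun z hz => bump_eq_zero hr ?_
  rw [mem_closedBall, dist_eq_norm, not_le] at hz
  exact hz.le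

lemma hasFDerivAt_bump (c : ℂ) (r : ℝ) (z : ℂ) : HasFDerivAt (bump c r)
    (-(2 * deriv Real.smoothTransition (2 - ‖z - c‖ ^ 2 / r ^ 2) / r ^ 2) • innerSL ℝ (z - c)) z := by
  have hs : HasDerivAt Real.smoothTransition _ (2 - ‖z - c‖ ^ 2 / r ^ 2) :=
    ((Real.smoothTransition.contDiff (n := 1)).differentiable one_ne_zero _).hasDerivAt
  have h1 : HasFDerivAt (fun z => ‖z - c‖ ^ 2) (2 • innerSL ℝ (z - c)) z := by
    have := (hasStrictFDerivAt_norm_sq (F := ℂ) (z - c)).hasFDerivAt.comp z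
      ((hasFDerivAt_id z).sub_const c)
    rwa [ContinuousLinearMap.comp_id] at this
  have h2 : HasFDerivAt (fun z => 2 - ‖z - c‖ ^ 2 / r ^ 2)
      (-((r ^ 2)⁻¹ • (2 • innerSL ℝ (z - c)))) z := by
    simp only [div_eq_mul_inv]
    exact (h1.mul_const (r ^ 2)⁻¹).const_sub 2
  refine (hs.comp_hasFDerivAt z h2).congr_fderiv ?_
  ext v
  simp
  ring

lemma dbar_bump (c : ℂ) (r : ℝ) (z : ℂ) : dbar (fun z => (bump c r z : ℂ)) z =
    -((2 * deriv Real.smoothTransition (2 - ‖z - c‖ ^ 2 / r ^ 2) / r ^ 2 : ℝ) : ℂ) * (z - c) := by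
  rw [dbar_ofReal_of_hasFDerivAt (hasFDerivAt_bump c r z)]
  generalize 2 * deriv Real.smoothTransition (2 - ‖z - c‖ ^ 2 / r ^ 2) / r ^ 2 = t
  apply Complex.ext <;> simp [Complex.inner]

lemma deriv_smoothTransition_nonneg (x : ℝ) : 0 ≤ deriv Real.smoothTransition x :=
  Real.smoothTransition.monotone.deriv_nonneg

lemma dbar_bump_eq_zero (hr : 0 < r) (h : 2 * r ≤ ‖z - c‖) :
    dbar (fun z => (bump c r z : ℂ)) z = 0 := by
  have : deriv Real.smoothTransition (2 - ‖z - c‖ ^ 2 / r ^ 2) = 0 := by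
    have h4 : 2 ^ 2 ≤ ‖z - c‖ ^ 2 / r ^ 2 := by
      rw [le_div_iff₀ (by positivity), ← mul_pow]
      gcongr
    have : Real.smoothTransition =ᶠ[𝓝 (2 - ‖z - c‖ ^ 2 / r ^ 2)] fun _ => 0 := by
      filter_upwards [gt_mem_nhds (show 2 - ‖z - c‖ ^ 2 / r ^ 2 < 0 by linarith)] with x hx
      exact Real.smoothTransition.zero_of_nonpos hx.le
    rw [this.deriv_eq, deriv_const]
  rw [dbar_bump, this]
  simp

lemma dbar_bump_eq_zero_of_le (hr : 0 < r) (h : ‖z - c‖ < r) :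
    dbar (fun z => (bump c r z : ℂ)) z = 0 := by
  have h' : (fun z => (bump c r z : ℂ)) =ᶠ[𝓝 z] fun _ => 1 := by
    filter_upwards [(continuous_id.sub continuous_const).norm.continuousAt.eventually_lt
      continuousAt_const h] with w hw
    rw [bump_eq_one hr (show ‖w - c‖ ≤ r from hw.le), Complex.ofReal_one]
  simp [dbar, h'.fderiv_eq]

/-- The gradient of `bump c r` is of order `r⁻¹`. -/
lemma exists_norm_dbar_bump_le :
    ∃ L : ℝ, 0 ≤ L ∧ ∀ (c : ℂ) (r : ℝ), 0 < r → ∀ z,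
      ‖dbar (fun z => (bump c r z : ℂ)) z‖ ≤ L / r := by
  have hc : Continuous (deriv Real.smoothTransition) :=
    (Real.smoothTransition.contDiff (n := 1)).continuous_deriv_one
  obtain ⟨L, hL⟩ := (isCompact_Icc (a := (-2 : ℝ)) (b := 2)).exists_bound_of_continuousOn
    hc.continuousOn
  have hL0 : 0 ≤ L := (norm_nonneg _).trans (hL 0 (by norm_num))
  refine ⟨4 * L, by positivity, fun c r hr z => ?_⟩
  rcases le_or_gt (2 * r) ‖z - c‖ with h | h
  · rw [dbar_bump_eq_zero hr h, norm_zero]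
    positivity
  · have h4 : ‖z - c‖ ^ 2 / r ^ 2 ≤ 2 ^ 2 := by
      rw [div_le_iff₀ (by positivity), ← mul_pow]
      gcongr
    have h5 : 0 ≤ ‖z - c‖ ^ 2 / r ^ 2 := by positivity
    have h6 := hL (2 - ‖z - c‖ ^ 2 / r ^ 2) ⟨by linarith, by linarith⟩
    rw [dbar_bump, norm_mul, norm_neg, Complex.norm_real, norm_div, norm_mul, Real.norm_two,
      Real.norm_of_nonneg (by positivity : (0 : ℝ) ≤ r ^ 2)]
    calc 2 * ‖deriv Real.smoothTransition (2 - ‖z - c‖ ^ 2 / r ^ 2)‖ / r ^ 2 * ‖z - c‖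
        ≤ 2 * L / r ^ 2 * (2 * r) := by gcongr
      _ = 4 * L / r := by field_simp; ring

/-- The gradient of `bump c r` points towards the centre. -/
lemma re_dbar_bump_mul_inv_nonpos (c : ℂ) (r : ℝ) (z : ℂ) :
    (dbar (fun z => (bump c r z : ℂ)) z * (z - c)⁻¹).re ≤ 0 := by
  rw [dbar_bump]
  rcases eq_or_ne (z - c) 0 with h | h
  · simp [h]
  rw [mul_assoc, mul_inv_cancel₀ h, mul_one, Complex.neg_re, Complex.ofReal_re, neg_nonpos]
  have := deriv_smoothTransition_nonneg (2 - ‖z - c‖ ^ 2 / r ^ 2)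
  positivity

/-- A smooth cutoff of a large disc with small discs about the points of `A` removed. -/
noncomputable def holeCutoff (A : Finset ℂ) (R d : ℝ) (z : ℂ) : ℝ :=
  bump 0 R z - ∑ a ∈ A, bump a d z

variable {A : Finset ℂ} {R d : ℝ}

lemma contDiff_holeCutoff (A : Finset ℂ) (R d : ℝ) : ContDiff ℝ 1 (holeCutoff A R d) :=
  (contDiff_bump 0 R).sub (ContDiff.sum fun a _ => contDiff_bump a d)

lemma dbar_holeCutoff (A : Finset ℂ) (R d : ℝ) (z : ℂ) :
    dbar (fun z => (holeCutoff A R d z : ℂ)) z = dbar (fun z => (bump 0 R z : ℂ)) z -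
      ∑ a ∈ A, dbar (fun z => (bump a d z : ℂ)) z := by
  have h1 := hasFDerivAt_bump 0 R z
  have h2 := HasFDerivAt.fun_sum (u := A) fun a _ => hasFDerivAt_bump a d z
  rw [dbar_ofReal_of_hasFDerivAt (g := holeCutoff A R d) (h1.sub h2), dbar_ofReal_of_hasFDerivAt h1]
  simp_rw [fun a => dbar_ofReal_of_hasFDerivAt (hasFDerivAt_bump a d z)]
  rw [Finset.sum_add_distrib, ← Finset.mul_sum]
  simp only [_root_.sub_apply, _root_.sum_apply, Complex.ofReal_sub,
    Complex.ofReal_sum]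
  ring

/-- The removed discs are disjoint and contained in the large disc. -/
structure HolesFit (A : Finset ℂ) (R d : ℝ) : Prop where
  pos : 0 < d
  sep : ∀ a ∈ A, ∀ a' ∈ A, a ≠ a' → 4 * d < ‖a - a'‖
  le : ∀ a ∈ A, ‖a‖ + 2 * d ≤ R
  Rpos : 0 < R

lemma HolesFit.eq_of_near (h : HolesFit A R d) {a : ℂ} (ha : a ∈ A) (hz : ‖z - a‖ < 2 * d) :
    holeCutoff A R d z = 1 - bump a d z := by
  have h1 : bump 0 R z = 1 := by
    refine bump_eq_one h.Rpos ?_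
    have := h.le a ha
    calc ‖z - 0‖ = ‖(z - a) + a‖ := by simp
      _ ≤ ‖z - a‖ + ‖a‖ := norm_add_le _ _
      _ ≤ R := by linarith
  rw [holeCutoff, h1, Finset.sum_eq_single_of_mem a ha]
  intro a' ha' hne
  refine bump_eq_zero h.pos ?_
  have h2 := h.sep a ha a' ha' hne.symm
  have h3 : ‖a - a'‖ ≤ ‖z - a‖ + ‖z - a'‖ := by
    rw [← norm_neg (z - a)]
    refine le_trans (le_of_eq ?_) (norm_add_le (-(z - a)) (z - a'))
    congr 1
    ring
  linarith

lemma HolesFit.eq_of_far (h : HolesFit A R d) (hz : ∀ a ∈ A, 2 * d ≤ ‖z - a‖) :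
    holeCutoff A R d z = bump 0 R z := by
  rw [holeCutoff, Finset.sum_eq_zero fun a ha => bump_eq_zero h.pos (hz a ha), sub_zero]

lemma HolesFit.mem_Icc (h : HolesFit A R d) (z : ℂ) : holeCutoff A R d z ∈ Icc 0 1 := by
  by_cases hz : ∀ a ∈ A, 2 * d ≤ ‖z - a‖
  · rw [h.eq_of_far hz]; exact ⟨bump_nonneg _ _ _, bump_le_one _ _ _⟩
  · push Not at hz
    obtain ⟨a, ha, hz⟩ := hz
    rw [h.eq_of_near ha hz]
    exact ⟨by linarith [bump_le_one a d z], by linarith [bump_nonneg a d z]⟩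

lemma HolesFit.eq_one (h : HolesFit A R d) (hz : ∀ a ∈ A, 2 * d ≤ ‖z - a‖) (hR : ‖z‖ ≤ R) :
    holeCutoff A R d z = 1 := by
  rw [h.eq_of_far hz, bump_eq_one h.Rpos (by simpa using hR)]

lemma HolesFit.eq_zero_of_near (h : HolesFit A R d) {a : ℂ} (ha : a ∈ A) (hz : ‖z - a‖ ≤ d) :
    holeCutoff A R d z = 0 := by
  rw [h.eq_of_near ha (by linarith [h.pos]), bump_eq_one h.pos hz, sub_self]

lemma HolesFit.eq_zero_of_far (h : HolesFit A R d) (hz : 2 * R ≤ ‖z‖) :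
    holeCutoff A R d z = 0 := by
  rw [h.eq_of_far, bump_eq_zero h.Rpos (by simpa using hz)]
  intro a ha
  have h1 := norm_sub_norm_le z a
  have := h.le a ha
  linarith [norm_nonneg a, h.pos]

lemma HolesFit.hasCompactSupport (h : HolesFit A R d) : HasCompactSupport (holeCutoff A R d) := by
  refine HasCompactSupport.intro (isCompact_closedBall 0 (2 * R)) fun z hz => h.eq_zero_of_far ?_
  rw [mem_closedBall, dist_zero_right, not_le] at hz
  exact hz.le

lemma HolesFit.mono (h : HolesFit A R d) {R' d' : ℝ} (hR : R ≤ R') (hd' : 0 < d') (hd : d' ≤ d) :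
    HolesFit A R' d' :=
  ⟨hd', fun a ha a' ha' hne => by linarith [h.sep a ha a' ha' hne],
    fun a ha => by linarith [h.le a ha], h.Rpos.trans_le hR⟩

lemma eventually_holesFit (A : Finset ℂ) : ∃ R₀ d₀ : ℝ, HolesFit A R₀ d₀ := by
  have hd : ∀ᶠ d in 𝓝[>] (0 : ℝ), ∀ a ∈ A, ∀ a' ∈ A, a ≠ a' → 4 * d < ‖a - a'‖ := by
    rw [Finset.eventually_all]
    intro a _
    rw [Finset.eventually_all]
    intro a' _
    by_cases hne : a = a'
    · simp [hne]
    have hp : 0 < ‖a - a'‖ := norm_pos_iff.2 (sub_ne_zero.2 hne)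
    filter_upwards [nhdsWithin_le_nhds (gt_mem_nhds (show 0 < ‖a - a'‖ / 4 by positivity))]
      with d hd _
    linarith
  obtain ⟨d, hd, hd0⟩ := (hd.and self_mem_nhdsWithin).exists
  refine ⟨∑ a ∈ A, ‖a‖ + 2 * d, d, hd0, hd, fun a ha => ?_, ?_⟩
  · have := Finset.single_le_sum (f := fun a : ℂ => ‖a‖) (fun a _ => norm_nonneg a) ha
    linarith
  · have : 0 ≤ ∑ a ∈ A, ‖a‖ := Finset.sum_nonneg fun a _ => norm_nonneg a
    have : 0 < d := hd0
    linarith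

end Cutoffs

section Averages

variable (μ : Measure ℂ) [IsFiniteMeasure μ]

lemma lintegral_ball_cauchyTransform_sub_atom_le (a : ℂ) (r : ℝ) :
    ∫⁻ z in ball a r, ‖cauchyTransform μ z - μ.real {a} * (z - a)⁻¹‖ₑ ≤
      ∫⁻ ξ in {a}ᶜ, (∫⁻ z in ball a r, ‖(z - ξ)⁻¹‖ₑ) ∂μ := by
  calc ∫⁻ z in ball a r, ‖cauchyTransform μ z - μ.real {a} * (z - a)⁻¹‖ₑ
      ≤ ∫⁻ z in ball a r, ∫⁻ ξ in {a}ᶜ, ‖(z - ξ)⁻¹‖ₑ ∂μ := by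
        refine lintegral_mono_ae (ae_restrict_of_ae ?_)
        filter_upwards [ae_integrable_inv_sub μ] with z hz
        have h := integral_add_compl (measurableSet_singleton a) hz
        rw [integral_singleton, Complex.real_smul] at h
        rw [cauchyTransform, ← h, add_sub_cancel_left]
        exact enorm_integral_le_lintegral_enorm _
    _ = _ := by
        refine lintegral_lintegral_swap ?_
        exact (measurable_inv.comp (measurable_fst.sub measurable_snd)).enorm.aemeasurable

lemma tendsto_average_enorm_inv_sub {a ξ : ℂ} (h : ξ ≠ a) :
    Tendsto (fun d : ℝ => ENNReal.ofReal (1 / d) * ∫⁻ z in ball a (2 * d), ‖(z - ξ)⁻¹‖ₑ) (𝓝[>] 0)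
      (𝓝 0) := by
  have hp : 0 < ‖ξ - a‖ := norm_pos_iff.2 (sub_ne_zero.2 h)
  have hT : Tendsto (fun d : ℝ => ENNReal.ofReal (d * (8 * Real.pi / ‖ξ - a‖))) (𝓝[>] 0) (𝓝 0) := by
    have : Continuous fun d : ℝ => ENNReal.ofReal (d * (8 * Real.pi / ‖ξ - a‖)) :=
      ENNReal.continuous_ofReal.comp (continuous_id.mul continuous_const)
    have := this.tendsto 0
    rw [zero_mul, ENNReal.ofReal_zero] at this
    exact this.mono_left nhdsWithin_le_nhds
  refine tendsto_of_tendsto_of_tendsto_of_le_of_le' tendsto_const_nhds hT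
    (Eventually.of_forall fun _ => zero_le) ?_
  filter_upwards [self_mem_nhdsWithin, nhdsWithin_le_nhds
    (gt_mem_nhds (show 0 < ‖ξ - a‖ / 4 by positivity))] with d hd0 hd
  have hd0 : 0 < d := hd0
  calc ENNReal.ofReal (1 / d) * ∫⁻ z in ball a (2 * d), ‖(z - ξ)⁻¹‖ₑ
      ≤ ENNReal.ofReal (1 / d) * ∫⁻ z in ball a (2 * d), ENNReal.ofReal (2 / ‖ξ - a‖) := by
        gcongr 1
        refine setLIntegral_mono measurable_const fun z hz => ?_
        rw [mem_ball, dist_eq_norm] at hz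
        rw [← ofReal_norm, norm_inv]
        refine ENNReal.ofReal_le_ofReal ?_
        have h3 : ‖ξ - a‖ ≤ ‖z - a‖ + ‖z - ξ‖ := by
          refine le_trans (le_of_eq ?_) (norm_sub_le (z - a) (z - ξ))
          congr 1
          ring
        rw [inv_le_comm₀ (by linarith) (by positivity), inv_div]
        linarith
    _ = ENNReal.ofReal (d * (8 * Real.pi / ‖ξ - a‖)) := by
        rw [setLIntegral_const, Complex.volume_ball, ← ENNReal.ofReal_pow (by positivity)]
        rw [show (NNReal.pi : ENNReal) = ENNReal.ofReal Real.pi by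
          rw [ENNReal.ofReal, ← NNReal.coe_real_pi, Real.toNNReal_coe]]
        rw [← ENNReal.ofReal_mul (by positivity), ← ENNReal.ofReal_mul (by positivity),
          ← ENNReal.ofReal_mul (by positivity)]
        congr 1
        field_simp
        ring

/-- Near a point `a` the Cauchy transform is, on average, that of the atom at `a`. -/
lemma tendsto_average_cauchyTransform_sub_atom (a : ℂ) :
    Tendsto (fun d : ℝ => ENNReal.ofReal (1 / d) *
      ∫⁻ z in ball a (2 * d), ‖cauchyTransform μ z - μ.real {a} * (z - a)⁻¹‖ₑ) (𝓝[>] 0) (𝓝 0) := by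
  have hT : Tendsto (fun d : ℝ => ∫⁻ ξ in {a}ᶜ, (ENNReal.ofReal (1 / d) *
      ∫⁻ z in ball a (2 * d), ‖(z - ξ)⁻¹‖ₑ) ∂μ) (𝓝[>] 0) (𝓝 (∫⁻ ξ in {a}ᶜ, 0 ∂μ)) := by
    refine tendsto_lintegral_filter_of_dominated_convergence
      (fun _ => ENNReal.ofReal (6 * Real.pi)) ?_ ?_ ?_ ?_
    · refine Eventually.of_forall fun d => Measurable.const_mul ?_ _
      exact Measurable.lintegral_prod_right'
        (f := fun p : ℂ × ℂ => ‖(p.2 - p.1)⁻¹‖ₑ)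
        (measurable_inv.comp (measurable_snd.sub measurable_fst)).enorm
    · filter_upwards [self_mem_nhdsWithin] with d hd
      have hd : 0 < d := hd
      refine Eventually.of_forall fun ξ => ?_
      calc _ ≤ ENNReal.ofReal (1 / d) * ENNReal.ofReal (3 * Real.pi * (2 * d)) := by
            gcongr
            exact lintegral_ball_enorm_inv_sub_le a ξ (by positivity)
        _ = _ := by
            rw [← ENNReal.ofReal_mul (by positivity)]
            congr 1
            field_simp
            ring
    · rw [lintegral_const]
      exact ENNReal.mul_ne_top ENNReal.ofReal_ne_top (measure_ne_top _ _)
    · filter_upwards [ae_restrict_mem (measurableSet_singleton a).compl] with ξ hξ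
      exact tendsto_average_enorm_inv_sub hξ
  rw [lintegral_zero] at hT
  refine tendsto_of_tendsto_of_tendsto_of_le_of_le tendsto_const_nhds hT
    (fun _ => zero_le) fun d => ?_
  dsimp only
  rw [lintegral_const_mul' _ _ ENNReal.ofReal_ne_top]
  exact mul_le_mul_right (lintegral_ball_cauchyTransform_sub_atom_le μ a _) _

lemma aestronglyMeasurable_cauchyTransform : AEStronglyMeasurable (cauchyTransform μ) :=
  (locallyIntegrable_cauchyTransform μ).aestronglyMeasurable

lemma tendsto_integral_dbar_bump_mul (a : ℂ) :
    Tendsto (fun d : ℝ => ∫ z, ‖dbar (fun z => (bump a d z : ℂ)) z‖ *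
      ‖cauchyTransform μ z - μ.real {a} * (z - a)⁻¹‖) (𝓝[>] 0) (𝓝 0) := by
  obtain ⟨L, hL0, hL⟩ := exists_norm_dbar_bump_le
  have hT := ENNReal.Tendsto.const_mul (tendsto_average_cauchyTransform_sub_atom μ a)
    (a := ENNReal.ofReal L) (Or.inr ENNReal.ofReal_ne_top)
  rw [mul_zero] at hT
  have hT2 := (ENNReal.tendsto_toReal ENNReal.zero_ne_top).comp hT
  rw [ENNReal.toReal_zero] at hT2
  refine squeeze_zero' (Eventually.of_forall fun e => integral_nonneg fun z => by positivity) ?_ hT2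
  filter_upwards [hT.eventually (gt_mem_nhds ENNReal.zero_lt_top), self_mem_nhdsWithin]
    with d hlt hd
  have hd : 0 < d := hd
  rw [Function.comp_apply, ← ENNReal.ofReal_le_iff_le_toReal hlt.ne]
  have h1 : ∫ z, ‖dbar (fun z => (bump a d z : ℂ)) z‖ *
      ‖cauchyTransform μ z - μ.real {a} * (z - a)⁻¹‖ =
      ∫ z in ball a (2 * d), ‖dbar (fun z => (bump a d z : ℂ)) z‖ *
        ‖cauchyTransform μ z - μ.real {a} * (z - a)⁻¹‖ := by
    rw [setIntegral_eq_integral_of_forall_compl_eq_zero]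
    intro z hz
    rw [mem_ball, dist_eq_norm, not_lt] at hz
    rw [dbar_bump_eq_zero hd hz, norm_zero, zero_mul]
  rw [h1, ← mul_assoc, ← ENNReal.ofReal_mul hL0, ← lintegral_const_mul' _ _ ENNReal.ofReal_ne_top]
  refine le_trans ?_ (lintegral_mono (f := fun z =>
    ‖(‖dbar (fun z => (bump a d z : ℂ)) z‖ *
      ‖cauchyTransform μ z - μ.real {a} * (z - a)⁻¹‖ : ℝ)‖ₑ) fun z => ?_)
  · refine le_trans ?_ (enorm_integral_le_lintegral_enorm _)
    rw [← ofReal_norm]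
    exact ENNReal.ofReal_le_ofReal (Real.le_norm_self _)
  · dsimp only
    rw [enorm_mul, enorm_norm, enorm_norm]
    gcongr
    rw [← ofReal_norm]
    refine ENNReal.ofReal_le_ofReal ((hL a d hd z).trans (le_of_eq ?_))
    ring

/-- Measures whose Cauchy transforms agree up to sign have the same atoms. -/
lemma atom_eq_of_sq_cauchyTransform_ae_eq {μ ν : Measure ℂ} [IsFiniteMeasure μ] [IsFiniteMeasure ν]
    (h : ∀ᵐ z, cauchyTransform μ z ^ 2 = cauchyTransform ν z ^ 2) (a : ℂ) :
    μ.real {a} = ν.real {a} := by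
  set m := μ.real {a} with hm
  set n := ν.real {a} with hn
  have hm0 : 0 ≤ m := measureReal_nonneg
  have hn0 : 0 ≤ n := measureReal_nonneg
  have hT := (tendsto_average_cauchyTransform_sub_atom μ a).add
    (tendsto_average_cauchyTransform_sub_atom ν a)
  rw [add_zero] at hT
  have hle : ∀ᶠ d : ℝ in 𝓝[>] 0, ENNReal.ofReal (2 * Real.pi * |m - n|) ≤
      (ENNReal.ofReal (1 / d) *
        ∫⁻ z in ball a (2 * d), ‖cauchyTransform μ z - m * (z - a)⁻¹‖ₑ) +
      ENNReal.ofReal (1 / d) *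
        ∫⁻ z in ball a (2 * d), ‖cauchyTransform ν z - n * (z - a)⁻¹‖ₑ := by
    filter_upwards [self_mem_nhdsWithin] with d hd
    have hd : 0 < d := hd
    rw [← mul_add, ← lintegral_add_left']
    swap
    · have hmeas : Measurable fun z : ℂ => (m : ℂ) * (z - a)⁻¹ := by fun_prop
      exact ((aestronglyMeasurable_cauchyTransform μ).sub
        hmeas.aestronglyMeasurable).enorm.restrict
    calc ENNReal.ofReal (2 * Real.pi * |m - n|)
        = ENNReal.ofReal (1 / d) * ∫⁻ z in ball a (2 * d), ENNReal.ofReal (|m - n| / (2 * d)) := by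
          rw [setLIntegral_const, Complex.volume_ball, ← ENNReal.ofReal_pow (by positivity)]
          rw [show (NNReal.pi : ENNReal) = ENNReal.ofReal Real.pi by
            rw [ENNReal.ofReal, ← NNReal.coe_real_pi, Real.toNNReal_coe]]
          rw [← ENNReal.ofReal_mul (by positivity), ← ENNReal.ofReal_mul (by positivity),
            ← ENNReal.ofReal_mul (by positivity)]
          congr 1
          field_simp
      _ ≤ _ := by
          gcongr 1
          refine lintegral_mono_ae ?_
          filter_upwards [ae_restrict_of_ae h, ae_restrict_mem measurableSet_ball,
            ae_restrict_of_ae (show ∀ᵐ z : ℂ, z ≠ a from compl_mem_ae_iff.2 (measure_singleton a))] with z hz hzb hza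
          rw [mem_ball, dist_eq_norm] at hzb
          have hp : 0 < ‖z - a‖ := norm_pos_iff.2 (sub_ne_zero.2 hza)
          rw [← ofReal_norm, ← ofReal_norm, ← ENNReal.ofReal_add (norm_nonneg _) (norm_nonneg _)]
          refine ENNReal.ofReal_le_ofReal ?_
          have h1 : |m - n| / (2 * d) ≤ |m - n| * ‖(z - a)⁻¹‖ := by
            rw [norm_inv, div_eq_mul_inv]
            gcongr
          refine h1.trans ?_
          rcases sq_eq_sq_iff_eq_or_eq_neg.1 hz with h2 | h2
          · rw [← Real.norm_eq_abs, ← Complex.norm_real, ← norm_mul, h2]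
            refine le_trans (le_of_eq ?_) (norm_sub_le _ _)
            rw [← norm_neg]
            congr 1
            push_cast
            ring
          · calc |m - n| * ‖(z - a)⁻¹‖ ≤ (m + n) * ‖(z - a)⁻¹‖ := by
                  gcongr
                  rw [abs_le]; constructor <;> linarith
              _ = ‖((m + n : ℝ) : ℂ) * (z - a)⁻¹‖ := by
                  rw [norm_mul, Complex.norm_real, Real.norm_of_nonneg (by positivity)]
              _ ≤ _ := by
                  rw [h2]
                  refine le_trans (le_of_eq ?_) (norm_add_le _ _)
                  rw [← norm_neg]
                  congr 1
                  push_cast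
                  ring
  have h0 := ge_of_tendsto hT hle
  rw [nonpos_iff_eq_zero, ENNReal.ofReal_eq_zero] at h0
  have : |m - n| ≤ 0 := by
    by_contra hc
    have := Real.pi_pos
    have : 0 < 2 * Real.pi * |m - n| := by push Not at hc; positivity
    linarith
  exact sub_eq_zero.1 (abs_nonpos_iff.1 this)

end Averages

section Potentials

/-- The regularised logarithmic potential of a measure. -/
noncomputable def logReg (e : ℝ) (μ : Measure ℂ) (z : ℂ) : ℝ := ∫ ξ, regLog e (z - ξ) ∂μ

variable {e : ℝ} {μ : Measure ℂ} [IsFiniteMeasure μ] {r : ℝ}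

lemma integrable_of_continuous_of_support (hμ : μ (closedBall 0 r)ᶜ = 0) {f : ℂ → ℝ}
    (hf : Continuous f) : Integrable f μ := by
  have h : μ.restrict (closedBall 0 r) = μ := Measure.restrict_eq_self_of_ae_mem hμ
  rw [← h]
  exact hf.continuousOn.integrableOn_compact (isCompact_closedBall 0 r)

lemma integrable_regLog_sub (hμ : μ (closedBall 0 r)ᶜ = 0) (he : 0 < e) (z : ℂ) :
    Integrable (fun ξ => regLog e (z - ξ)) μ :=
  integrable_of_continuous_of_support hμ
    ((continuous_regLog he).comp (continuous_const.sub continuous_id))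

lemma hasFDerivAt_logReg (hμ : μ (closedBall 0 r)ᶜ = 0) (he : 0 < e) (z : ℂ) :
    HasFDerivAt (logReg e μ)
      (Complex.reCLM.comp (ContinuousLinearMap.mul ℝ ℂ (cauchyReg e μ z))) z := by
  let Φ : ℂ →L[ℝ] ℂ →L[ℝ] ℝ := (ContinuousLinearMap.compL ℝ ℂ ℂ ℝ Complex.reCLM).comp
    (ContinuousLinearMap.mul ℝ ℂ)
  have hΦ : ∀ w : ℂ, ‖Φ w‖ ≤ ‖w‖ := fun w => by
    refine ContinuousLinearMap.opNorm_le_bound _ (norm_nonneg _) fun v => ?_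
    calc ‖Φ w v‖ = |(w * v).re| := rfl
      _ ≤ ‖w * v‖ := Complex.abs_re_le_norm _
      _ = ‖w‖ * ‖v‖ := norm_mul _ _
  have hint := integrable_regCauchy_sub μ he z
  have h := hasFDerivAt_integral_of_dominated_of_fderiv_le (μ := μ) (𝕜 := ℝ)
    (F := fun z ξ => regLog e (z - ξ)) (F' := fun z ξ => Φ (regCauchy e (z - ξ)))
    (bound := fun _ => 1 / e) (x₀ := z) (s := univ) univ_mem
    (Eventually.of_forall fun z => (integrable_regLog_sub hμ he z).aestronglyMeasurable)
    (integrable_regLog_sub hμ he z)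
    (Φ.continuous.comp_aestronglyMeasurable hint.aestronglyMeasurable)
    (Eventually.of_forall fun ξ z _ => (hΦ _).trans (norm_regCauchy_le he _))
    (integrable_const _)
    (Eventually.of_forall fun ξ z _ => by
      have := (hasFDerivAt_regLog he (z - ξ)).comp z ((hasFDerivAt_id z).sub_const ξ)
      rwa [ContinuousLinearMap.comp_id] at this)
  refine h.congr_fderiv ?_
  exact Φ.integral_comp_comm hint

/-- The kernel of the regularised logarithmic potential is bounded uniformly in the
regularisation. -/
lemma abs_regLog_le (he : 0 < e) (he1 : e ≤ 1) {w : ℂ} (hw : w ≠ 0) :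
    |regLog e w| ≤ ‖w‖ ^ 2 + ‖w⁻¹‖ := by
  have hp : 0 < ‖w‖ := norm_pos_iff.2 hw
  have h1 : Real.log (‖w‖ ^ 2 + e ^ 2) ≤ ‖w‖ ^ 2 := by
    have := Real.log_le_sub_one_of_pos (norm_sq_add_pos he w)
    nlinarith
  have h2 : -(2 * ‖w⁻¹‖) ≤ Real.log (‖w‖ ^ 2 + e ^ 2) := by
    have h3 : Real.log (‖w‖ ^ 2) ≤ Real.log (‖w‖ ^ 2 + e ^ 2) :=
      Real.log_le_log (by positivity) (by nlinarith)
    have h4 := Real.log_le_sub_one_of_pos (inv_pos.2 hp)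
    rw [Real.log_inv] at h4
    rw [Real.log_pow] at h3
    push_cast at h3
    rw [norm_inv]
    linarith
  have h5 : 0 ≤ ‖w⁻¹‖ := norm_nonneg _
  have h6 : 0 ≤ ‖w‖ ^ 2 := by positivity
  rw [regLog, abs_le]
  constructor <;> linarith

lemma ae_measure_singleton_eq_zero (μ : Measure ℂ) [IsFiniteMeasure μ] :
    ∀ᵐ z : ℂ, μ {z} = 0 := by
  have hd : MeasurableSet {p : ℂ × ℂ | p.2 = p.1} := measurableSet_eq_fun measurable_snd measurable_fst
  have h : (volume.prod μ) {p : ℂ × ℂ | p.2 = p.1} = 0 := by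
    rw [Measure.prod_apply_symm hd]
    refine (lintegral_congr fun ξ => ?_).trans lintegral_zero
    have : (fun x : ℂ => (x, ξ)) ⁻¹' {p : ℂ × ℂ | p.2 = p.1} = {ξ} := by
      ext x; simp [eq_comm]
    rw [this, measure_singleton]
  filter_upwards [Measure.ae_ae_of_ae_prod (p := fun p : ℂ × ℂ => p.2 ≠ p.1) (μ := volume) (ν := μ)
    (by rw [ae_iff]; simpa using h)] with z hz
  rw [ae_iff] at hz
  simpa using hz

lemma ae_exists_abs_logReg_le (hμ : μ (closedBall 0 r)ᶜ = 0) :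
    ∀ᵐ z : ℂ, ∃ M, ∀ e, 0 < e → e ≤ 1 → |logReg e μ z| ≤ M := by
  filter_upwards [ae_measure_singleton_eq_zero μ, ae_integrable_inv_sub μ] with z h0 hz
  have hz' : ∀ᵐ ξ ∂μ, z - ξ ≠ 0 := by
    have : ∀ᵐ ξ ∂μ, ξ ≠ z := compl_mem_ae_iff.2 h0
    filter_upwards [this] with ξ hξ
    exact sub_ne_zero.2 hξ.symm
  refine ⟨∫ ξ, (‖z - ξ‖ ^ 2 + ‖(z - ξ)⁻¹‖) ∂μ, fun e he he1 => ?_⟩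
  rw [← Real.norm_eq_abs]
  refine norm_integral_le_of_norm_le ?_ (hz'.mono fun ξ hξ => abs_regLog_le he he1 hξ)
  exact (integrable_of_continuous_of_support hμ (by fun_prop)).add hz.norm

lemma norm_sub_ge_half {z ξ : ℂ} (hξ : ‖ξ‖ ≤ r) (hz : 2 * r ≤ ‖z‖) : ‖z‖ / 2 ≤ ‖z - ξ‖ := by
  have := norm_sub_norm_le z ξ
  linarith

lemma norm_cauchyReg_le_of_far [IsProbabilityMeasure μ] (hμ : μ (closedBall 0 r)ᶜ = 0) (he : 0 < e)
    {z : ℂ} (hz : 2 * r ≤ ‖z‖) (hz0 : 0 < ‖z‖) : ‖cauchyReg e μ z‖ ≤ 2 / ‖z‖ := by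
  have h := norm_integral_le_of_norm_le_const (μ := μ) (f := fun ξ => regCauchy e (z - ξ))
    (C := 2 / ‖z‖) ?_
  · simpa [cauchyReg] using h
  have hμ' : ∀ᵐ ξ ∂μ, ξ ∈ closedBall (0 : ℂ) r := hμ
  filter_upwards [hμ'] with ξ hξ
  rw [mem_closedBall, dist_zero_right] at hξ
  refine (norm_regCauchy_le_inv he _).trans ?_
  have := norm_sub_ge_half hξ hz
  rw [norm_inv, inv_le_comm₀ (by linarith) (by positivity), inv_div]
  exact this

lemma abs_regLog_sub_le (he : 0 < e) {z ξ : ℂ} (hξ : ‖ξ‖ ≤ r) (hz : 2 * r ≤ ‖z‖)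
    (hz0 : 0 < ‖z‖) : |regLog e (z - ξ) - regLog e z| ≤ 5 * r / ‖z‖ := by
  have hr : 0 ≤ r := (norm_nonneg _).trans hξ
  set x := ‖z - ξ‖ ^ 2 + e ^ 2 with hx
  set y := ‖z‖ ^ 2 + e ^ 2 with hy
  have hge := norm_sub_ge_half hξ hz
  have hx1 : ‖z‖ ^ 2 / 4 ≤ x := by nlinarith
  have hy1 : ‖z‖ ^ 2 / 4 ≤ y := by nlinarith
  have hx0 : 0 < x := norm_sq_add_pos he _
  have hy0 : 0 < y := norm_sq_add_pos he _
  have hdiff : |x - y| ≤ r * (5 / 2 * ‖z‖) := by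
    have h1 : x - y = (‖z - ξ‖ - ‖z‖) * (‖z - ξ‖ + ‖z‖) := by rw [hx, hy]; ring
    have h2 : |‖z - ξ‖ - ‖z‖| ≤ ‖ξ‖ := by
      refine (abs_norm_sub_norm_le _ _).trans (le_of_eq ?_)
      rw [sub_sub_cancel_left, norm_neg]
    have h3 : ‖z - ξ‖ ≤ ‖z‖ + ‖ξ‖ := norm_sub_le _ _
    rw [h1, abs_mul, abs_of_nonneg (by positivity : 0 ≤ ‖z - ξ‖ + ‖z‖)]
    exact mul_le_mul (h2.trans hξ) (by linarith) (by positivity) hr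
  have hlog : ∀ {s t : ℝ}, 0 < s → ‖z‖ ^ 2 / 4 ≤ t → |s - t| ≤ r * (5 / 2 * ‖z‖) →
      Real.log s - Real.log t ≤ 10 * r / ‖z‖ := by
    intro s t hs ht hst
    have ht0 : 0 < t := lt_of_lt_of_le (by positivity) ht
    rw [← Real.log_div hs.ne' ht0.ne']
    calc Real.log (s / t) ≤ s / t - 1 := Real.log_le_sub_one_of_pos (by positivity)
      _ = (s - t) / t := by field_simp
      _ ≤ (r * (5 / 2 * ‖z‖)) / (‖z‖ ^ 2 / 4) := by
        have : s - t ≤ r * (5 / 2 * ‖z‖) := (le_abs_self _).trans hst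
        exact div_le_div₀ (by positivity) this (by positivity) ht
      _ = 10 * r / ‖z‖ := by field_simp; ring
  have a1 := hlog hx0 hy1 hdiff
  have a2 := hlog hy0 hx1 (by rwa [abs_sub_comm])
  have a3 : 10 * r / ‖z‖ = 2 * (5 * r / ‖z‖) := by ring
  rw [regLog, regLog, abs_le]
  constructor <;> linarith

lemma abs_logReg_sub_regLog_le [IsProbabilityMeasure μ] (hμ : μ (closedBall 0 r)ᶜ = 0) (he : 0 < e)
    {z : ℂ} (hz : 2 * r ≤ ‖z‖) (hz0 : 0 < ‖z‖) : |logReg e μ z - regLog e z| ≤ 5 * r / ‖z‖ := by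
  have h := norm_integral_le_of_norm_le_const (μ := μ)
    (f := fun ξ => regLog e (z - ξ) - regLog e z) (C := 5 * r / ‖z‖) ?_
  · rw [integral_sub (integrable_regLog_sub hμ he z) (integrable_const _)] at h
    simpa [logReg] using h
  have hμ' : ∀ᵐ ξ ∂μ, ξ ∈ closedBall (0 : ℂ) r := hμ
  filter_upwards [hμ'] with ξ hξ
  rw [mem_closedBall, dist_zero_right] at hξ
  exact abs_regLog_sub_le he hξ hz hz0

end Potentials

section Bounds

variable {e : ℝ} (μ : Measure ℂ) [IsFiniteMeasure μ]

lemma regCauchy_neg (e : ℝ) (w : ℂ) : regCauchy e (-w) = -regCauchy e w := by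
  simp [regCauchy]

lemma dbar_neg {g : ℂ → ℂ} (z : ℂ) : dbar (fun z => -g z) z = -dbar g z := by
  unfold dbar
  rw [fderiv_fun_neg]
  simp
  ring

lemma integral_regDelta_sub (he : 0 < e) (ξ : ℂ) : ∫ z, regDelta e (z - ξ) = deltaMass := by
  have h := integral_mul_regDelta_sub he (fun _ => 1) ξ
  simp only [one_mul] at h
  rw [integral_complex_ofReal, integral_complex_ofReal] at h
  exact_mod_cast h

lemma integrable_regDelta_sub_volume (he : 0 < e) (ξ : ℂ) :
    Integrable (fun z => regDelta e (z - ξ)) := by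
  by_contra h
  have := integral_undef h
  rw [integral_regDelta_sub he] at this
  exact deltaMass_pos.ne' this

/-- Local boundedness of the Cauchy transform is inherited by its regularisations, uniformly in the
regularisation parameter. -/
lemma norm_cauchyReg_le_of_bound {η : ℂ → ℝ} (hη : ContDiff ℝ 1 η) (hηs : HasCompactSupport η)
    (hη1 : ∀ z, η z ∈ Icc 0 1) {M : ℝ} (hM0 : 0 ≤ M)
    (hM : ∀ᵐ z, η z ≠ 0 → ‖cauchyTransform μ z‖ ≤ M) {d : ℝ} (hd : 0 < d) (he : 0 < e)
    {z : ℂ} (hz : ∀ w, ‖w - z‖ ≤ d → η w = 1) :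
    ‖cauchyReg e μ z‖ ≤ (2 * deltaMass)⁻¹ * (2 * M * deltaMass +
      d⁻¹ * ∫ w, ‖dbar (fun w => (η w : ℂ)) w * cauchyTransform μ w‖) + μ.real univ * d⁻¹ := by
  have hκ := deltaMass_pos
  have hηc : ContDiff ℝ 1 (fun w => (η w : ℂ)) := Complex.ofRealCLM.contDiff.comp hη
  have hηcs : HasCompactSupport (fun w => (η w : ℂ)) := hηs.comp_left Complex.ofReal_zero
  set k : ℂ → ℂ := fun w => -regCauchy e (w - z) with hk
  have hkd : ContDiff ℝ 1 k := (contDiff_regCauchy_sub he z).neg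
  have hk' : ∀ w, k w = regCauchy e (z - w) := fun w => by
    change -regCauchy e (w - z) = _
    rw [← neg_sub z w, regCauchy_neg, neg_neg]
  have hdk : ∀ w, dbar k w = -(2 * regDelta e (w - z)) := fun w => by
    rw [hk, dbar_neg, dbar_regCauchy_sub he]
  set g : ℂ → ℂ := fun w => (η w : ℂ) * k w with hg
  have hgd : ContDiff ℝ 1 g := hηc.mul hkd
  have hgs : HasCompactSupport g := hηcs.mul_right
  have P := integral_eq_neg_integral_dbar_mul_cauchyTransform μ hgd hgs
  have hkfar : ∀ w, d ≤ ‖w - z‖ → ‖k w‖ ≤ d⁻¹ := fun w hw => by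
    rw [hk, norm_neg]
    refine (norm_regCauchy_le_inv he _).trans ?_
    rw [norm_inv]
    exact inv_anti₀ hd hw
  have hdη : ∀ w, ‖w - z‖ < d → dbar (fun w => (η w : ℂ)) w = 0 := fun w hw => by
    have h' : (fun w => (η w : ℂ)) =ᶠ[𝓝 w] fun _ => 1 := by
      filter_upwards [(continuous_id.sub (continuous_const (y := z))).norm.continuousAt.eventually_lt
        continuousAt_const hw] with v hv
      rw [hz v (show ‖v - z‖ ≤ d from hv.le), Complex.ofReal_one]
    simp [dbar, h'.fderiv_eq]
  have hbound : ‖∫ w, dbar g w * cauchyTransform μ w‖ ≤ 2 * M * deltaMass +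
      d⁻¹ * ∫ w, ‖dbar (fun w => (η w : ℂ)) w * cauchyTransform μ w‖ := by
    have i2 := (integrable_mul_cauchyTransform μ hηc.continuous_dbar hηcs.dbar).norm
    have i1 := integrable_regDelta_sub_volume he z
    refine (norm_integral_le_of_norm_le ((i1.const_mul (2 * M)).add (i2.const_mul d⁻¹))
      (hM.mono fun w hw => ?_)).trans (le_of_eq ?_)
    · have hw1 : dbar g w = dbar (fun w => (η w : ℂ)) w * k w + (η w : ℂ) * dbar k w :=
        dbar_mul (hηc.differentiable one_ne_zero w) (hkd.differentiable one_ne_zero w)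
      rw [hw1, add_mul, add_comm]
      refine (norm_add_le _ _).trans (add_le_add ?_ ?_)
      · by_cases h0 : η w = 0
        · rw [h0]
          have := regDelta_nonneg e (w - z)
          simp only [Complex.ofReal_zero, zero_mul, norm_zero]
          positivity
        · rw [hdk, norm_mul, norm_mul, norm_neg, norm_mul, Complex.norm_real, Complex.norm_real,
            Complex.norm_ofNat, Real.norm_of_nonneg (hη1 w).1,
            Real.norm_of_nonneg (regDelta_nonneg _ _)]
          have h1 := hw h0
          have h2 := (hη1 w).2
          have h3 := regDelta_nonneg e (w - z)
          have h4 := (hη1 w).1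
          calc η w * (2 * regDelta e (w - z)) * ‖cauchyTransform μ w‖
              ≤ 1 * (2 * regDelta e (w - z)) * M := by gcongr
            _ = 2 * M * regDelta e (w - z) := by ring
      · rcases lt_or_ge ‖w - z‖ d with h | h
        · rw [hdη w h, zero_mul, zero_mul, norm_zero]
          positivity
        · rw [mul_right_comm, norm_mul, mul_comm]
          exact mul_le_mul_of_nonneg_right (hkfar w h) (norm_nonneg _)
    · have := integral_add (i1.const_mul (2 * M)) (i2.const_mul d⁻¹)
      rw [integral_const_mul, integral_const_mul, integral_regDelta_sub he] at this
      exact this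
  have hnear : ‖∫ ξ, g ξ ∂μ‖ ≤ (2 * deltaMass)⁻¹ * (2 * M * deltaMass +
      d⁻¹ * ∫ w, ‖dbar (fun w => (η w : ℂ)) w * cauchyTransform μ w‖) := by
    rw [← norm_neg] at hbound
    rw [← P, norm_mul] at hbound
    have : ‖(2 : ℂ) * deltaMass‖ = 2 * deltaMass := by
      rw [norm_mul, Complex.norm_real, Real.norm_of_nonneg hκ.le]; simp
    rw [this] at hbound
    rwa [inv_mul_eq_div, le_div_iff₀' (by positivity)]
  have hgi : Integrable g μ := hgd.continuous.integrable_of_hasCompactSupport hgs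
  have hsplit : cauchyReg e μ z = ∫ ξ, g ξ ∂μ + ∫ ξ, (1 - (η ξ : ℂ)) * k ξ ∂μ := by
    have : ∀ ξ, (1 - (η ξ : ℂ)) * k ξ = regCauchy e (z - ξ) - g ξ := fun ξ => by
      rw [hg, ← hk']; ring
    simp_rw [this]
    rw [integral_sub (integrable_regCauchy_sub μ he z) hgi, cauchyReg]
    ring
  rw [hsplit]
  refine (norm_add_le _ _).trans (add_le_add hnear ?_)
  rw [mul_comm]
  refine norm_integral_le_of_norm_le_const (Eventually.of_forall fun ξ => ?_)
  rcases le_or_gt ‖ξ - z‖ d with h | h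
  · rw [hz ξ h]
    simp [hd.le]
  · rw [norm_mul, ← Complex.ofReal_one, ← Complex.ofReal_sub, Complex.norm_real,
      Real.norm_of_nonneg (by linarith [(hη1 ξ).2])]
    calc (1 - η ξ) * ‖k ξ‖ ≤ 1 * d⁻¹ := by
          have := (hη1 ξ).1
          have h2 := (hη1 ξ).2
          gcongr
          · linarith
          · exact hkfar ξ h.le
      _ = d⁻¹ := one_mul _

end Bounds

section EnergyIdentity

/-- The difference of two regularised logarithmic potentials. -/
noncomputable def potDiff (e : ℝ) (μ ν : Measure ℂ) (z : ℂ) : ℝ := logReg e μ z - logReg e ν z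

variable {e r : ℝ} {μ ν : Measure ℂ}

section Finite

variable [IsFiniteMeasure μ] [IsFiniteMeasure ν]

lemma hasFDerivAt_potDiff (hμ : μ (closedBall 0 r)ᶜ = 0) (hν : ν (closedBall 0 r)ᶜ = 0)
    (he : 0 < e) (z : ℂ) : HasFDerivAt (potDiff e μ ν)
      (Complex.reCLM.comp (ContinuousLinearMap.mul ℝ ℂ (cauchyReg e μ z - cauchyReg e ν z))) z := by
  refine ((hasFDerivAt_logReg hμ he z).sub (hasFDerivAt_logReg hν he z)).congr_fderiv ?_
  ext v
  simp

lemma contDiff_potDiff (hμ : μ (closedBall 0 r)ᶜ = 0) (hν : ν (closedBall 0 r)ᶜ = 0)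
    (he : 0 < e) : ContDiff ℝ 1 (potDiff e μ ν) := by
  refine contDiff_one_iff_hasFDerivAt.2 ⟨_, ?_, hasFDerivAt_potDiff hμ hν he⟩
  exact continuous_const.clm_comp ((ContinuousLinearMap.mul ℝ ℂ).continuous.comp
    ((continuous_cauchyReg μ he).sub (continuous_cauchyReg ν he)))

lemma dbar_comp_potDiff (hμ : μ (closedBall 0 r)ᶜ = 0) (hν : ν (closedBall 0 r)ᶜ = 0)
    (he : 0 < e) {ω ω' : ℝ → ℝ} (hω : ∀ x, HasDerivAt ω (ω' x) x) (z : ℂ) :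
    dbar (fun z => (ω (potDiff e μ ν z) : ℂ)) z =
      ω' (potDiff e μ ν z) * conj (cauchyReg e μ z - cauchyReg e ν z) := by
  rw [dbar_ofReal_of_hasFDerivAt (g := fun z => ω (potDiff e μ ν z)) ((hω _).comp_hasFDerivAt z (hasFDerivAt_potDiff hμ hν he z))]
  generalize cauchyReg e μ z - cauchyReg e ν z = w
  apply Complex.ext <;> simp

/-- Integration by parts against a function of the potential difference. -/
lemma integral_cutoff_mul_deltaReg (hμ : μ (closedBall 0 r)ᶜ = 0) (hν : ν (closedBall 0 r)ᶜ = 0)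
    (he : 0 < e) {ω ω' : ℝ → ℝ} (hω : ∀ x, HasDerivAt ω (ω' x) x) (hω' : Continuous ω')
    {χ : ℂ → ℝ} (hχ : ContDiff ℝ 1 χ) (hχs : HasCompactSupport χ) (ρ : Measure ℂ)
    [IsFiniteMeasure ρ] :
    ((∫ z, χ z * ω (potDiff e μ ν z) * (2 * deltaReg e ρ z) : ℝ) : ℂ) =
      -(∫ z, dbar (fun z => (χ z : ℂ)) z * ω (potDiff e μ ν z) * cauchyReg e ρ z) -
      ∫ z, χ z * (ω' (potDiff e μ ν z) * conj (cauchyReg e μ z - cauchyReg e ν z)) *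
        cauchyReg e ρ z := by
  have hωc : ContDiff ℝ 1 ω := by
    rw [contDiff_one_iff_deriv]
    refine ⟨fun x => (hω x).differentiableAt, ?_⟩
    rwa [show deriv ω = ω' from funext fun x => (hω x).deriv]
  have hD := contDiff_potDiff hμ hν he
  have h1 : ContDiff ℝ 1 (fun z => (χ z : ℂ)) := Complex.ofRealCLM.contDiff.comp hχ
  have h2 : ContDiff ℝ 1 (fun z => (ω (potDiff e μ ν z) : ℂ)) :=
    Complex.ofRealCLM.contDiff.comp (hωc.comp hD)
  have h1s : HasCompactSupport (fun z => (χ z : ℂ)) := hχs.comp_left Complex.ofReal_zero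
  have hD' := hD.continuous
  have hc : Continuous fun z => conj (cauchyReg e μ z - cauchyReg e ν z) :=
    Complex.continuous_conj.comp ((continuous_cauchyReg μ he).sub (continuous_cauchyReg ν he))
  have hP := integral_mul_deltaReg ρ he (h1.mul h2) h1s.mul_right
  have hdb : ∀ z, dbar (fun z => (χ z : ℂ) * (ω (potDiff e μ ν z) : ℂ)) z =
      dbar (fun z => (χ z : ℂ)) z * ω (potDiff e μ ν z) +
      χ z * (ω' (potDiff e μ ν z) * conj (cauchyReg e μ z - cauchyReg e ν z)) := fun z => by
    rw [dbar_mul (h1.differentiable one_ne_zero z) (h2.differentiable one_ne_zero z),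
      dbar_comp_potDiff hμ hν he hω]
  simp_rw [hdb, add_mul] at hP
  rw [integral_add, neg_add'] at hP
  · rw [← hP, ← integral_complex_ofReal]
    congr 1
    ext z
    push_cast
    ring
  · exact ((h1.continuous_dbar.mul h2.continuous).mul
      (continuous_cauchyReg ρ he)).integrable_of_hasCompactSupport h1s.dbar.mul_right.mul_right
  · exact ((h1.continuous.mul ((Complex.continuous_ofReal.comp (hω'.comp hD')).mul hc)).mul
      (continuous_cauchyReg ρ he)).integrable_of_hasCompactSupport h1s.mul_right.mul_right

end Finite

lemma integral_cutoff_mul_deltaReg_le (he : 0 < e) {χ : ℂ → ℝ} (hχ : Continuous χ)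
    (hχs : HasCompactSupport χ) (hχ1 : ∀ z, χ z ∈ Icc 0 1) [IsProbabilityMeasure μ] :
    ∫ z, χ z * (2 * deltaReg e μ z) ≤ 2 * deltaMass := by
  have h := integral_mul_deltaReg_eq_integral_integral μ he (g := fun z => (χ z : ℂ))
    (Complex.continuous_ofReal.comp hχ) (hχs.comp_left Complex.ofReal_zero)
  have h1 : ((∫ z, χ z * (2 * deltaReg e μ z) : ℝ) : ℂ) =
      ((∫ ξ, (∫ z, χ z * (2 * regDelta e (z - ξ))) ∂μ : ℝ) : ℂ) := by
    rw [← integral_complex_ofReal, ← integral_complex_ofReal]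
    simp_rw [← integral_complex_ofReal]
    push_cast
    exact h
  rw [Complex.ofReal_inj.1 h1]
  refine (Real.le_norm_self _).trans
    ((norm_integral_le_of_norm_le_const (C := 2 * deltaMass) (Eventually.of_forall fun ξ => ?_)).trans
      (by simp))
  rw [Real.norm_of_nonneg (integral_nonneg fun z => mul_nonneg (hχ1 z).1
    (mul_nonneg zero_le_two (regDelta_nonneg _ _))), ← integral_regDelta_sub he ξ,
    ← integral_const_mul]
  refine integral_mono_of_nonneg (Eventually.of_forall fun z => mul_nonneg (hχ1 z).1
    (mul_nonneg zero_le_two (regDelta_nonneg _ _)))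
    ((integrable_regDelta_sub_volume he ξ).const_mul 2) (Eventually.of_forall fun z => ?_)
  exact mul_le_of_le_one_left (mul_nonneg zero_le_two (regDelta_nonneg _ _)) (hχ1 z).2

lemma hasDerivAt_arctan_sq (x : ℝ) :
    HasDerivAt (fun x => Real.arctan x ^ 2) (2 * Real.arctan x * (1 / (1 + x ^ 2))) x := by
  simpa using (Real.hasDerivAt_arctan x).fun_pow 2

lemma abs_arctan_le_two (x : ℝ) : |Real.arctan x| ≤ 2 := by
  have h1 := Real.arctan_lt_pi_div_two x
  have h2 := Real.neg_pi_div_two_lt_arctan x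
  have := Real.pi_le_four
  rw [abs_le]; constructor <;> linarith

lemma abs_arctan_le_abs (x : ℝ) : |Real.arctan x| ≤ |x| := by
  have h := Convex.norm_image_sub_le_of_norm_hasDerivWithin_le (f := Real.arctan)
    (f' := fun x => 1 / (1 + x ^ 2)) (s := univ) (C := 1) (x := 0) (y := x)
    (fun y _ => (Real.hasDerivAt_arctan y).hasDerivWithinAt) (fun y _ => ?_) convex_univ
    (mem_univ _) (mem_univ _)
  · simpa using h
  · rw [Real.norm_of_nonneg (by positivity)]
    exact div_le_one_of_le₀ (by nlinarith [sq_nonneg y]) (by positivity)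

variable [IsProbabilityMeasure μ] [IsProbabilityMeasure ν]

/-- The energy inequality: the weighted Dirichlet integral of the potential difference is
controlled by boundary terms and by the product of the sum and the difference of the Cauchy
transforms. -/
lemma dirichlet_le (hμ : μ (closedBall 0 r)ᶜ = 0) (hν : ν (closedBall 0 r)ᶜ = 0)
    (he : 0 < e) {χ : ℂ → ℝ} (hχ : ContDiff ℝ 1 χ) (hχs : HasCompactSupport χ)
    (hχ1 : ∀ z, χ z ∈ Icc 0 1) {t ε : ℝ} (ht : 0 < t)
    (hI : -(∫ z, dbar (fun z => (χ z : ℂ)) z * (Real.arctan (potDiff e μ ν z) ^ 2 : ℝ) *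
      (cauchyReg e μ z + cauchyReg e ν z)).re ≤ ε)
    (hII : -(∫ z, dbar (fun z => (χ z : ℂ)) z * Real.arctan (potDiff e μ ν z) *
      (cauchyReg e μ z - cauchyReg e ν z)).re ≤ ε)
    (hY : ∫ z, χ z * ‖(cauchyReg e μ z - cauchyReg e ν z) * (cauchyReg e μ z + cauchyReg e ν z)‖ ≤ ε) :
    ∫ z, χ z * (1 / (1 + potDiff e μ ν z ^ 2) * ‖cauchyReg e μ z - cauchyReg e ν z‖ ^ 2) ≤
      ε + 5 * ε / (2 * t) + 2 * t * deltaMass := by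
  have hD := (contDiff_potDiff hμ hν he).continuous
  have hD1 : Continuous fun z => Real.arctan (potDiff e μ ν z) := Real.continuous_arctan.comp hD
  have hq : ∀ z, 1 + potDiff e μ ν z ^ 2 ≠ 0 := fun z => by positivity
  have hq' : Continuous fun x : ℝ => 1 / (1 + x ^ 2) :=
    continuous_const.div (by fun_prop) fun x => by positivity
  have hc1 := continuous_cauchyReg μ he
  have hc2 := continuous_cauchyReg ν he
  have hp1 := continuous_deltaReg μ he
  have hp2 := continuous_deltaReg ν he
  have hχc := hχ.continuous
  have hχC : Continuous fun z => (χ z : ℂ) := Complex.continuous_ofReal.comp hχc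
  have hχCs : HasCompactSupport (fun z => (χ z : ℂ)) := hχs.comp_left Complex.ofReal_zero
  have hdχ : Continuous (dbar fun z => (χ z : ℂ)) :=
    (Complex.ofRealCLM.contDiff.comp hχ).continuous_dbar
  have hC1 : Continuous fun z => (Real.arctan (potDiff e μ ν z) : ℂ) :=
    Complex.continuous_ofReal.comp hD1
  have hC2 : Continuous fun z => ((Real.arctan (potDiff e μ ν z) ^ 2 : ℝ) : ℂ) :=
    Complex.continuous_ofReal.comp (hD1.pow 2)
  have hω2 : Continuous fun x : ℝ => 2 * Real.arctan x * (1 / (1 + x ^ 2)) :=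
    (continuous_const.mul Real.continuous_arctan).mul hq'
  have hC3 : Continuous fun z => ((2 * Real.arctan (potDiff e μ ν z) *
      (1 / (1 + potDiff e μ ν z ^ 2)) : ℝ) : ℂ) := Complex.continuous_ofReal.comp (hω2.comp hD)
  have hC4 : Continuous fun z => ((1 / (1 + potDiff e μ ν z ^ 2) : ℝ) : ℂ) :=
    Complex.continuous_ofReal.comp (hq'.comp hD)
  have hcc : Continuous fun z => conj (cauchyReg e μ z - cauchyReg e ν z) :=
    Complex.continuous_conj.comp (hc1.sub hc2)
  have hC5 : Continuous fun z => ((2 * Real.arctan (potDiff e μ ν z) *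
      (1 / (1 + potDiff e μ ν z ^ 2)) : ℝ) : ℂ) * conj (cauchyReg e μ z - cauchyReg e ν z) :=
    hC3.mul hcc
  have hC6 : Continuous fun z => ((1 / (1 + potDiff e μ ν z ^ 2) : ℝ) : ℂ) *
      conj (cauchyReg e μ z - cauchyReg e ν z) := hC4.mul hcc
  have a1 := integral_cutoff_mul_deltaReg hμ hν he hasDerivAt_arctan_sq hω2 hχ hχs μ
  have a2 := integral_cutoff_mul_deltaReg hμ hν he hasDerivAt_arctan_sq hω2 hχ hχs ν
  have b1 := integral_cutoff_mul_deltaReg hμ hν he Real.hasDerivAt_arctan hq' hχ hχs μ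
  have b2 := integral_cutoff_mul_deltaReg hμ hν he Real.hasDerivAt_arctan hq' hχ hχs ν
  have i1 : ∀ ρ : Measure ℂ, [IsFiniteMeasure ρ] → ∀ {k : ℂ → ℂ}, Continuous k →
      Integrable fun z => dbar (fun z => (χ z : ℂ)) z * k z * cauchyReg e ρ z := fun ρ _ k hk =>
    ((hdχ.mul hk).mul (continuous_cauchyReg ρ he)).integrable_of_hasCompactSupport
      hχCs.dbar.mul_right.mul_right
  have i2 : ∀ ρ : Measure ℂ, [IsFiniteMeasure ρ] → ∀ {k : ℂ → ℂ}, Continuous k →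
      Integrable fun z => (χ z : ℂ) * k z * cauchyReg e ρ z := fun ρ _ k hk =>
    ((hχC.mul hk).mul (continuous_cauchyReg ρ he)).integrable_of_hasCompactSupport
      hχCs.mul_right.mul_right
  have i3 : ∀ {k : ℂ → ℝ}, Continuous k → Integrable fun z => χ z * k z := fun hk =>
    (hχc.mul hk).integrable_of_hasCompactSupport hχs.mul_right
  set J := (∫ z, χ z * Real.arctan (potDiff e μ ν z) ^ 2 * (2 * deltaReg e μ z)) +
    ∫ z, χ z * Real.arctan (potDiff e μ ν z) ^ 2 * (2 * deltaReg e ν z) with hJ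
  have hJle : J ≤ 5 * ε := by
    have h1 : (J : ℂ) = -(∫ z, dbar (fun z => (χ z : ℂ)) z *
        (Real.arctan (potDiff e μ ν z) ^ 2 : ℝ) * (cauchyReg e μ z + cauchyReg e ν z)) -
        ∫ z, χ z * (((2 * Real.arctan (potDiff e μ ν z) * (1 / (1 + potDiff e μ ν z ^ 2)) : ℝ) : ℂ) *
          conj (cauchyReg e μ z - cauchyReg e ν z)) * (cauchyReg e μ z + cauchyReg e ν z) := by
      rw [hJ, Complex.ofReal_add, a1, a2]
      simp_rw [mul_add]
      rw [integral_add (i1 μ hC2) (i1 ν hC2), integral_add (i2 μ hC5) (i2 ν hC5)]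
      ring
    have h2 : ‖∫ z, χ z * (((2 * Real.arctan (potDiff e μ ν z) *
          (1 / (1 + potDiff e μ ν z ^ 2)) : ℝ) : ℂ) *
          conj (cauchyReg e μ z - cauchyReg e ν z)) * (cauchyReg e μ z + cauchyReg e ν z)‖ ≤ 4 * ε := by
      refine (norm_integral_le_of_norm_le ((i3 (((hc1.sub hc2).mul (hc1.add hc2)).norm)).const_mul 4)
        (Eventually.of_forall fun z => ?_)).trans ?_
      · have h3 : ‖(2 * Real.arctan (potDiff e μ ν z) * (1 / (1 + potDiff e μ ν z ^ 2)) : ℝ)‖ ≤ 4 := by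
          rw [norm_mul, norm_mul, Real.norm_two, Real.norm_eq_abs (Real.arctan _),
            Real.norm_of_nonneg (by positivity)]
          have h4 : 1 / (1 + potDiff e μ ν z ^ 2) ≤ 1 :=
            div_le_one_of_le₀ (by nlinarith [sq_nonneg (potDiff e μ ν z)]) (by positivity)
          have h5 := abs_arctan_le_two (potDiff e μ ν z)
          exact (mul_le_mul (mul_le_mul_of_nonneg_left h5 zero_le_two) h4 (by positivity)
            (by norm_num)).trans (by norm_num)
        have h6 := (hχ1 z).1
        rw [norm_mul, norm_mul, norm_mul, Complex.norm_real, Complex.norm_real, RCLike.norm_conj,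
          Real.norm_of_nonneg h6]
        change _ ≤ 4 * (χ z * ‖(cauchyReg e μ z - cauchyReg e ν z) *
          (cauchyReg e μ z + cauchyReg e ν z)‖)
        rw [norm_mul (cauchyReg e μ z - cauchyReg e ν z)]
        calc _ ≤ χ z * (4 * ‖cauchyReg e μ z - cauchyReg e ν z‖) *
              ‖cauchyReg e μ z + cauchyReg e ν z‖ := by gcongr
          _ = _ := by ring
      · rw [integral_const_mul]
        exact mul_le_mul_of_nonneg_left hY (by norm_num)
    have h7 := congrArg Complex.re h1
    rw [Complex.ofReal_re, Complex.sub_re, Complex.neg_re] at h7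
    have h8 := Complex.abs_re_le_norm (∫ z, χ z * (((2 * Real.arctan (potDiff e μ ν z) *
          (1 / (1 + potDiff e μ ν z ^ 2)) : ℝ) : ℂ) *
          conj (cauchyReg e μ z - cauchyReg e ν z)) * (cauchyReg e μ z + cauchyReg e ν z))
    have h9 := neg_abs_le (∫ z, χ z * (((2 * Real.arctan (potDiff e μ ν z) *
          (1 / (1 + potDiff e μ ν z ^ 2)) : ℝ) : ℂ) *
          conj (cauchyReg e μ z - cauchyReg e ν z)) * (cauchyReg e μ z + cauchyReg e ν z)).re
    linarith
  have hK : (∫ z, χ z * (1 / (1 + potDiff e μ ν z ^ 2) * ‖cauchyReg e μ z - cauchyReg e ν z‖ ^ 2)) =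
      -(∫ z, dbar (fun z => (χ z : ℂ)) z * Real.arctan (potDiff e μ ν z) *
        (cauchyReg e μ z - cauchyReg e ν z)).re -
      ((∫ z, χ z * Real.arctan (potDiff e μ ν z) * (2 * deltaReg e μ z)) -
        ∫ z, χ z * Real.arctan (potDiff e μ ν z) * (2 * deltaReg e ν z)) := by
    have h1 : (((∫ z, χ z * Real.arctan (potDiff e μ ν z) * (2 * deltaReg e μ z)) -
        (∫ z, χ z * Real.arctan (potDiff e μ ν z) * (2 * deltaReg e ν z)) : ℝ) : ℂ) =
        -(∫ z, dbar (fun z => (χ z : ℂ)) z * Real.arctan (potDiff e μ ν z) *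
          (cauchyReg e μ z - cauchyReg e ν z)) -
        ((∫ z, χ z * (1 / (1 + potDiff e μ ν z ^ 2) *
          ‖cauchyReg e μ z - cauchyReg e ν z‖ ^ 2) : ℝ) : ℂ) := by
      have h2 : ((∫ z, χ z * (1 / (1 + potDiff e μ ν z ^ 2) *
          ‖cauchyReg e μ z - cauchyReg e ν z‖ ^ 2) : ℝ) : ℂ) =
          ∫ z, χ z * (((1 / (1 + potDiff e μ ν z ^ 2) : ℝ) : ℂ) *
          conj (cauchyReg e μ z - cauchyReg e ν z)) * (cauchyReg e μ z - cauchyReg e ν z) := by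
        rw [← integral_complex_ofReal]
        congr 1
        ext z
        rw [mul_assoc, mul_assoc, ← Complex.normSq_eq_conj_mul_self, ← Complex.sq_norm]
        push_cast
        ring
      rw [h2, Complex.ofReal_sub, b1, b2]
      simp_rw [mul_sub (_ * _)]
      rw [integral_sub (i1 μ hC1) (i1 ν hC1), integral_sub (i2 μ hC6) (i2 ν hC6)]
      ring
    have h3 := congrArg Complex.re h1
    rw [Complex.ofReal_re, Complex.sub_re, Complex.neg_re, Complex.ofReal_re] at h3
    linarith
  have hAM : ∀ ρ : Measure ℂ, [IsProbabilityMeasure ρ] →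
      |∫ z, χ z * Real.arctan (potDiff e μ ν z) * (2 * deltaReg e ρ z)| ≤
      (∫ z, χ z * Real.arctan (potDiff e μ ν z) ^ 2 * (2 * deltaReg e ρ z)) / (2 * t) +
        t * deltaMass := by
    intro ρ _
    have hp := continuous_deltaReg ρ he
    have hint1 : Integrable fun z => χ z * Real.arctan (potDiff e μ ν z) ^ 2 * (2 * deltaReg e ρ z) := by
      simp_rw [mul_assoc]
      exact i3 ((hD1.pow 2).mul (continuous_const.mul hp))
    have hint2 : Integrable fun z => χ z * (2 * deltaReg e ρ z) := i3 (continuous_const.mul hp)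
    have hle := integral_cutoff_mul_deltaReg_le (μ := ρ) he hχc hχs hχ1
    rw [← Real.norm_eq_abs]
    refine (norm_integral_le_of_norm_le ((hint1.div_const (2 * t)).add (hint2.const_mul (t / 2)))
      (Eventually.of_forall fun z => ?_)).trans ?_
    · have hp0 := deltaReg_nonneg e ρ z
      have h6 := (hχ1 z).1
      rw [norm_mul, norm_mul, Real.norm_of_nonneg h6, Real.norm_eq_abs,
        Real.norm_of_nonneg (by positivity : (0 : ℝ) ≤ 2 * deltaReg e ρ z)]
      have h7 : |Real.arctan (potDiff e μ ν z)| ≤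
          Real.arctan (potDiff e μ ν z) ^ 2 / (2 * t) + t / 2 := by
        rw [← sq_abs]
        generalize |Real.arctan (potDiff e μ ν z)| = x
        rw [div_add_div _ _ (by positivity) two_ne_zero, le_div_iff₀ (by positivity)]
        nlinarith [sq_nonneg (x - t)]
      calc χ z * |Real.arctan (potDiff e μ ν z)| * (2 * deltaReg e ρ z)
          ≤ χ z * (Real.arctan (potDiff e μ ν z) ^ 2 / (2 * t) + t / 2) * (2 * deltaReg e ρ z) := by
            gcongr
        _ = χ z * Real.arctan (potDiff e μ ν z) ^ 2 * (2 * deltaReg e ρ z) / (2 * t) +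
            t / 2 * (χ z * (2 * deltaReg e ρ z)) := by ring
    · have := integral_add (hint1.div_const (2 * t)) (hint2.const_mul (t / 2))
      rw [integral_div, integral_const_mul] at this
      refine (le_of_eq this).trans ?_
      have : t / 2 * ∫ z, χ z * (2 * deltaReg e ρ z) ≤ t / 2 * (2 * deltaMass) := by gcongr
      linarith
  have c1 := abs_le.1 (hAM μ)
  have c2 := abs_le.1 (hAM ν)
  have c3 : J / (2 * t) ≤ 5 * ε / (2 * t) := by gcongr
  rw [hJ, add_div] at c3
  rw [hK]
  linarith [c1.1, c2.2]

end EnergyIdentity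

section Boundary

lemma neg_re_integral_dbar_holeCutoff_le {A : Finset ℂ} {R d δ M : ℝ} {F : ℂ → ℂ} {w : ℂ → ℝ}
    (hF : Continuous F) (hw : Continuous w) (h : HolesFit A R d) {g : ℂ → ℂ → ℝ}
    (hg : ∀ a ∈ A, Integrable (g a))
    (hgle : ∀ a ∈ A, ∀ z, (dbar (fun z => (bump a d z : ℂ)) z * w z * F z).re ≤ g a z)
    (hgδ : ∀ a ∈ A, ∫ z, g a z ≤ δ) (hM0 : 0 ≤ M)
    (hM : ∀ z, R ≤ ‖z‖ → ‖dbar (fun z => (bump 0 R z : ℂ)) z * w z * F z‖ ≤ M) :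
    -(∫ z, dbar (fun z => (holeCutoff A R d z : ℂ)) z * w z * F z).re ≤
      M * (4 * Real.pi * R ^ 2) + A.card * δ := by
  have hχ : ContDiff ℝ 1 (fun z => (holeCutoff A R d z : ℂ)) :=
    Complex.ofRealCLM.contDiff.comp (contDiff_holeCutoff A R d)
  have hχs : HasCompactSupport (fun z => (holeCutoff A R d z : ℂ)) :=
    h.hasCompactSupport.comp_left Complex.ofReal_zero
  have hint : Integrable fun z => dbar (fun z => (holeCutoff A R d z : ℂ)) z * w z * F z :=
    ((hχ.continuous_dbar.mul (Complex.continuous_ofReal.comp hw)).mul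
      hF).integrable_of_hasCompactSupport hχs.dbar.mul_right.mul_right
  have hre : (∫ z, dbar (fun z => (holeCutoff A R d z : ℂ)) z * w z * F z).re =
      ∫ z, (dbar (fun z => (holeCutoff A R d z : ℂ)) z * w z * F z).re :=
    (Complex.reCLM.integral_comp_comm hint).symm
  have hind : Integrable ((ball (0 : ℂ) (2 * R)).indicator fun _ => M) :=
    (integrable_indicator_iff measurableSet_ball).2 (integrableOn_const measure_ball_lt_top.ne)
  have hsum : Integrable fun z => ∑ a ∈ A, g a z := integrable_finsetSum A hg
  rw [hre, ← integral_neg]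
  refine (integral_mono hint.re.neg (hind.add hsum) fun z => ?_).trans ?_
  · simp only [Pi.add_apply, Pi.neg_apply]
    rw [dbar_holeCutoff]
    have h1 : -((dbar (fun z => (bump 0 R z : ℂ)) z * w z * F z).re) ≤
        (ball (0 : ℂ) (2 * R)).indicator (fun _ => M) z := by
      by_cases hz : z ∈ ball (0 : ℂ) (2 * R)
      · rw [indicator_of_mem hz]
        by_cases hz' : R ≤ ‖z‖
        · exact (neg_le_abs _).trans ((Complex.abs_re_le_norm _).trans (hM z hz'))
        · rw [dbar_bump_eq_zero_of_le h.Rpos (by simpa using hz')]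
          simpa using hM0
      · rw [indicator_of_notMem hz, dbar_bump_eq_zero h.Rpos (by simpa using hz)]
        simp
    have h2 := Finset.sum_le_sum fun a ha => hgle a ha z
    have h3 : RCLike.re ((dbar (fun z => (bump 0 R z : ℂ)) z -
        ∑ a ∈ A, dbar (fun z => (bump a d z : ℂ)) z) * w z * F z) =
        (dbar (fun z => (bump 0 R z : ℂ)) z * w z * F z).re -
        ∑ a ∈ A, (dbar (fun z => (bump a d z : ℂ)) z * w z * F z).re := by
      rw [sub_mul, sub_mul, Finset.sum_mul, Finset.sum_mul, ← Complex.re_sum, ← Complex.sub_re]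
      rfl
    rw [h3]
    linarith
  · have h1 := integral_add hind hsum
    simp only [Pi.add_apply] at h1 ⊢
    rw [h1, integral_indicator_const _ measurableSet_ball, integral_finsetSum A hg,
      measureReal_def, Complex.volume_ball, smul_eq_mul]
    refine add_le_add (le_of_eq ?_) ((Finset.sum_le_card_nsmul A _ δ hgδ).trans (by simp))
    have hR := h.Rpos
    rw [ENNReal.toReal_mul, ENNReal.toReal_pow, ENNReal.toReal_ofReal (by positivity)]
    simp
    ring

lemma integrable_norm_dbar_bump_mul (μ : Measure ℂ) [IsFiniteMeasure μ] {e d : ℝ} (he : 0 < e)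
    (hd : 0 < d) (a : ℂ) (m : ℝ) : Integrable fun z => ‖dbar (fun z => (bump a d z : ℂ)) z‖ *
      ‖cauchyReg e μ z - m * (z - a)⁻¹‖ := by
  have hc : Continuous (dbar fun z => (bump a d z : ℂ)) :=
    (Complex.ofRealCLM.contDiff.comp (contDiff_bump a d)).continuous_dbar
  have hs : HasCompactSupport (dbar fun z => (bump a d z : ℂ)) :=
    ((hasCompactSupport_bump a hd).comp_left Complex.ofReal_zero).dbar
  have h1 := integrable_mul_cauchyReg μ he hc hs
  have h2 := integrable_mul_cauchyTransform (Measure.dirac a) hc hs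
  refine (h1.sub (h2.const_mul (m : ℂ))).norm.congr (Eventually.of_forall fun z => ?_)
  simp only [Pi.sub_apply, cauchyTransform, integral_dirac]
  rw [← norm_mul]
  congr 1
  ring

lemma eventually_integral_dbar_bump_le (μ : Measure ℂ) [IsFiniteMeasure μ] (a : ℂ) {δ : ℝ}
    (hδ : 0 < δ) : ∀ᶠ d in 𝓝[>] (0 : ℝ), ∀ᶠ e in 𝓝[>] (0 : ℝ),
      ∫ z, ‖dbar (fun z => (bump a d z : ℂ)) z‖ *
        ‖cauchyReg e μ z - μ.real {a} * (z - a)⁻¹‖ ≤ δ := by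
  filter_upwards [(tendsto_integral_dbar_bump_mul μ a).eventually (gt_mem_nhds (half_pos hδ)),
    self_mem_nhdsWithin] with d hlt hd
  have hd : 0 < d := hd
  have hc : Continuous (dbar fun z => (bump a d z : ℂ)) :=
    (Complex.ofRealCLM.contDiff.comp (contDiff_bump a d)).continuous_dbar
  have hs : HasCompactSupport (dbar fun z => (bump a d z : ℂ)) :=
    ((hasCompactSupport_bump a hd).comp_left Complex.ofReal_zero).dbar
  filter_upwards [(tendsto_integral_mul_sub_zero μ hc hs).eventually (gt_mem_nhds (half_pos hδ)),
    self_mem_nhdsWithin] with e hlt' he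
  have he : 0 < e := he
  have i1 := integrable_mul_cauchyReg μ he hc hs
  have i2 := integrable_mul_cauchyTransform μ hc hs
  have i3 := integrable_mul_cauchyTransform (Measure.dirac a) hc hs
  have j1 : Integrable fun z => ‖dbar (fun z => (bump a d z : ℂ)) z‖ *
      ‖cauchyReg e μ z - cauchyTransform μ z‖ := by
    refine (i1.sub i2).norm.congr (Eventually.of_forall fun z => ?_)
    simp only [Pi.sub_apply]
    rw [← norm_mul, mul_sub]
  have j2 : Integrable fun z => ‖dbar (fun z => (bump a d z : ℂ)) z‖ *
      ‖cauchyTransform μ z - μ.real {a} * (z - a)⁻¹‖ := by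
    refine (i2.sub (i3.const_mul (μ.real {a} : ℂ))).norm.congr (Eventually.of_forall fun z => ?_)
    simp only [Pi.sub_apply]
    rw [← norm_mul]
    congr 1
    simp only [cauchyTransform, integral_dirac]
    ring
  calc _ ≤ ∫ z, (‖dbar (fun z => (bump a d z : ℂ)) z‖ * ‖cauchyReg e μ z - cauchyTransform μ z‖ +
        ‖dbar (fun z => (bump a d z : ℂ)) z‖ *
        ‖cauchyTransform μ z - μ.real {a} * (z - a)⁻¹‖) := by
        refine integral_mono (integrable_norm_dbar_bump_mul μ he hd a _) (j1.add j2) fun z => ?_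
        simp only
        rw [← mul_add]
        gcongr
        exact norm_sub_le_norm_sub_add_norm_sub _ _ _
    _ ≤ δ := by rw [integral_add j1 j2]; linarith

variable {μ ν : Measure ℂ} [IsProbabilityMeasure μ] [IsProbabilityMeasure ν] {r : ℝ}

/-- There are cutoffs, equal to one away from the exceptional points, for which the boundary terms
in the energy inequality are small. -/
lemma exists_holeCutoff_boundary_le (hr : 0 < r) (hμ : μ (closedBall 0 r)ᶜ = 0)
    (hν : ν (closedBall 0 r)ᶜ = 0)
    (hsq : ∀ᵐ z, cauchyTransform μ z ^ 2 = cauchyTransform ν z ^ 2) (A : Finset ℂ)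
    {ε : ℝ} (hε : 0 < ε) (R₁ : ℝ) {d₁ : ℝ} (hd₁ : 0 < d₁) :
    ∃ R d, HolesFit A R d ∧ R₁ ≤ R ∧ 2 * d ≤ d₁ ∧ ∀ᶠ e in 𝓝[>] (0 : ℝ),
      -(∫ z, dbar (fun z => (holeCutoff A R d z : ℂ)) z *
        (Real.arctan (potDiff e μ ν z) ^ 2 : ℝ) * (cauchyReg e μ z + cauchyReg e ν z)).re ≤ ε ∧
      -(∫ z, dbar (fun z => (holeCutoff A R d z : ℂ)) z * Real.arctan (potDiff e μ ν z) *
        (cauchyReg e μ z - cauchyReg e ν z)).re ≤ ε := by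
  obtain ⟨L, hL0, hL⟩ := exists_norm_dbar_bump_le
  obtain ⟨R₀, d₀, h0⟩ := eventually_holesFit A
  set R := max (max R₀ R₁) (max (2 * r) (640 * Real.pi * r * L / ε)) with hRdef
  have hR0 : R₀ ≤ R := (le_max_left _ _).trans (le_max_left _ _)
  have hR1 : R₁ ≤ R := (le_max_right _ _).trans (le_max_left _ _)
  have hR2 : 2 * r ≤ R := (le_max_left _ _).trans (le_max_right _ _)
  have hR3 : 640 * Real.pi * r * L / ε ≤ R := (le_max_right _ _).trans (le_max_right _ _)
  have hRpos : 0 < R := by linarith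
  set δ := ε / (16 * (A.card + 1)) with hδdef
  have hδ : 0 < δ := by positivity
  have ev1 : ∀ᶠ d in 𝓝[>] (0 : ℝ), ∀ a ∈ A, ∀ᶠ e in 𝓝[>] (0 : ℝ),
      ∫ z, ‖dbar (fun z => (bump a d z : ℂ)) z‖ *
        ‖cauchyReg e μ z - μ.real {a} * (z - a)⁻¹‖ ≤ δ :=
    (eventually_all_finset A).2 fun a _ => eventually_integral_dbar_bump_le μ a hδ
  have ev2 : ∀ᶠ d in 𝓝[>] (0 : ℝ), ∀ a ∈ A, ∀ᶠ e in 𝓝[>] (0 : ℝ),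
      ∫ z, ‖dbar (fun z => (bump a d z : ℂ)) z‖ *
        ‖cauchyReg e ν z - ν.real {a} * (z - a)⁻¹‖ ≤ δ :=
    (eventually_all_finset A).2 fun a _ => eventually_integral_dbar_bump_le ν a hδ
  have ev3 : ∀ᶠ d in 𝓝[>] (0 : ℝ), d ≤ d₀ := mem_nhdsWithin_of_mem_nhds (Iic_mem_nhds h0.pos)
  have ev4 : ∀ᶠ d in 𝓝[>] (0 : ℝ), d ≤ d₁ / 2 :=
    mem_nhdsWithin_of_mem_nhds (Iic_mem_nhds (half_pos hd₁))
  obtain ⟨d, hd1, hd2, hd3, hd4, hdpos⟩ :=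
    (ev1.and (ev2.and (ev3.and (ev4.and self_mem_nhdsWithin)))).exists
  have hdpos : 0 < d := hdpos
  have hfit := h0.mono hR0 hdpos hd3
  refine ⟨R, d, hfit, hR1, by linarith, ?_⟩
  filter_upwards [(eventually_all_finset A).2 hd1, (eventually_all_finset A).2 hd2,
    self_mem_nhdsWithin] with e he1 he2 he
  have he : 0 < e := he
  have hcμ := continuous_cauchyReg μ he
  have hcν := continuous_cauchyReg ν he
  have hD := (contDiff_potDiff hμ hν he).continuous
  have hat := Real.continuous_arctan.comp hD
  have hbound : 80 * r * L / R ^ 3 * (4 * Real.pi * R ^ 2) + A.card * (8 * δ) ≤ ε := by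
    have h1 : 80 * r * L / R ^ 3 * (4 * Real.pi * R ^ 2) = 640 * Real.pi * r * L / R / 2 := by
      field_simp
      ring
    have h2 : 640 * Real.pi * r * L / R ≤ ε := by
      rw [div_le_iff₀ hε] at hR3
      rw [div_le_iff₀ hRpos]
      linarith
    have h3 : A.card * (8 * δ) ≤ ε / 2 := by
      rw [hδdef, ← mul_assoc, mul_div_assoc', div_le_div_iff₀ (by positivity) two_pos]
      nlinarith
    rw [h1]
    linarith
  have hDfar : ∀ z : ℂ, R ≤ ‖z‖ → |Real.arctan (potDiff e μ ν z)| ≤ 10 * r / R := fun z hz => by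
    have hz0 : 0 < ‖z‖ := hRpos.trans_le hz
    have h1 := abs_logReg_sub_regLog_le hμ he (hR2.trans hz) hz0
    have h2 := abs_logReg_sub_regLog_le hν he (hR2.trans hz) hz0
    have h3 : 5 * r / ‖z‖ ≤ 5 * r / R := by gcongr
    refine (abs_arctan_le_abs _).trans ?_
    have h4 : potDiff e μ ν z = (logReg e μ z - regLog e z) - (logReg e ν z - regLog e z) := by
      rw [potDiff]; ring
    rw [h4]
    refine (abs_sub _ _).trans ?_
    have h5 : 10 * r / R = 5 * r / R + 5 * r / R := by ring
    linarith
  have hCfar : ∀ z : ℂ, R ≤ ‖z‖ → ‖cauchyReg e μ z‖ ≤ 2 / R ∧ ‖cauchyReg e ν z‖ ≤ 2 / R := by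
    intro z hz
    have hz0 : 0 < ‖z‖ := hRpos.trans_le hz
    have h3 : 2 / ‖z‖ ≤ 2 / R := by gcongr
    exact ⟨(norm_cauchyReg_le_of_far hμ he (hR2.trans hz) hz0).trans h3,
      (norm_cauchyReg_le_of_far hν he (hR2.trans hz) hz0).trans h3⟩
  have hfar : ∀ z : ℂ, R ≤ ‖z‖ → ∀ (w : ℝ) (c : ℂ), |w| ≤ 2 * |Real.arctan (potDiff e μ ν z)| →
      ‖c‖ ≤ ‖cauchyReg e μ z‖ + ‖cauchyReg e ν z‖ →
      ‖dbar (fun z => (bump 0 R z : ℂ)) z * w * c‖ ≤ 80 * r * L / R ^ 3 := by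
    intro z hz w c hw hc
    have h1 := hDfar z hz
    have h2 := hCfar z hz
    rw [norm_mul, norm_mul, Complex.norm_real, Real.norm_eq_abs]
    have h3 : |w| ≤ 20 * r / R := by
      have : 20 * r / R = 2 * (10 * r / R) := by ring
      linarith
    have h4 : ‖c‖ ≤ 4 / R := by
      have : 4 / R = 2 / R + 2 / R := by ring
      linarith
    calc _ ≤ L / R * (20 * r / R) * (4 / R) := by
          gcongr
          exact hL 0 R hRpos z
      _ = 80 * r * L / R ^ 3 := by field_simp; ring
  set g : ℂ → ℂ → ℝ := fun a z => 4 * (‖dbar (fun z => (bump a d z : ℂ)) z‖ *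
      ‖cauchyReg e μ z - μ.real {a} * (z - a)⁻¹‖ + ‖dbar (fun z => (bump a d z : ℂ)) z‖ *
      ‖cauchyReg e ν z - ν.real {a} * (z - a)⁻¹‖) with hg
  have hgi : ∀ a ∈ A, Integrable (g a) := fun a _ =>
    ((integrable_norm_dbar_bump_mul μ he hdpos a _).add
      (integrable_norm_dbar_bump_mul ν he hdpos a _)).const_mul 4
  have hgδ : ∀ a ∈ A, ∫ z, g a z ≤ 8 * δ := fun a ha => by
    rw [hg]
    simp only
    rw [integral_const_mul, integral_add (integrable_norm_dbar_bump_mul μ he hdpos a _)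
      (integrable_norm_dbar_bump_mul ν he hdpos a _)]
    linarith [he1 a ha, he2 a ha]
  have hM0 : 0 ≤ 80 * r * L / R ^ 3 := by positivity
  have hnear : ∀ a z, ∀ (w : ℝ) (u v : ℂ), |w| ≤ 4 →
      ‖u‖ ≤ ‖cauchyReg e μ z - μ.real {a} * (z - a)⁻¹‖ →
      ‖v‖ ≤ ‖cauchyReg e ν z - ν.real {a} * (z - a)⁻¹‖ →
      (dbar (fun z => (bump a d z : ℂ)) z * w * (u + v)).re ≤ g a z := by
    intro a z w u v hw hu hv
    refine (Complex.re_le_norm _).trans ?_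
    rw [norm_mul, norm_mul, Complex.norm_real, Real.norm_eq_abs, hg]
    simp only
    rw [← mul_add]
    calc _ ≤ ‖dbar (fun z => (bump a d z : ℂ)) z‖ * 4 *
        (‖cauchyReg e μ z - μ.real {a} * (z - a)⁻¹‖ +
          ‖cauchyReg e ν z - ν.real {a} * (z - a)⁻¹‖) := by
          gcongr
          exact (norm_add_le _ _).trans (add_le_add hu hv)
      _ = _ := by ring
  have habs := fun z => abs_arctan_le_two (potDiff e μ ν z)
  constructor
  · refine (neg_re_integral_dbar_holeCutoff_le (hcμ.add hcν) (hat.pow 2) hfit hgi ?_ hgδ hM0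
      ?_).trans hbound
    · intro a ha z
      have h1 := hnear a z (Real.arctan (potDiff e μ ν z) ^ 2) _ _ (by
        rw [abs_pow]; nlinarith [habs z, abs_nonneg (Real.arctan (potDiff e μ ν z))]) le_rfl le_rfl
      have h2 := re_dbar_bump_mul_inv_nonpos a d z
      have h3 : dbar (fun z => (bump a d z : ℂ)) z * (Real.arctan (potDiff e μ ν z) ^ 2 : ℝ) *
          (cauchyReg e μ z + cauchyReg e ν z) =
          dbar (fun z => (bump a d z : ℂ)) z * (Real.arctan (potDiff e μ ν z) ^ 2 : ℝ) *
          ((cauchyReg e μ z - μ.real {a} * (z - a)⁻¹) +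
            (cauchyReg e ν z - ν.real {a} * (z - a)⁻¹)) +
          ((Real.arctan (potDiff e μ ν z) ^ 2 * (μ.real {a} + ν.real {a}) : ℝ) : ℂ) *
          (dbar (fun z => (bump a d z : ℂ)) z * (z - a)⁻¹) := by
        push_cast
        ring
      change (dbar (fun z => (bump a d z : ℂ)) z * (Real.arctan (potDiff e μ ν z) ^ 2 : ℝ) *
          (cauchyReg e μ z + cauchyReg e ν z)).re ≤ _
      rw [h3, Complex.add_re, Complex.re_ofReal_mul]
      have h4 : Real.arctan (potDiff e μ ν z) ^ 2 * (μ.real {a} + ν.real {a}) *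
          (dbar (fun z => (bump a d z : ℂ)) z * (z - a)⁻¹).re ≤ 0 :=
        mul_nonpos_of_nonneg_of_nonpos (by positivity) h2
      linarith
    · intro z hz
      refine hfar z hz _ _ ?_ (norm_add_le _ _)
      change |Real.arctan (potDiff e μ ν z) ^ 2| ≤ _
      rw [abs_pow]
      nlinarith [habs z, abs_nonneg (Real.arctan (potDiff e μ ν z))]
  · refine (neg_re_integral_dbar_holeCutoff_le (hcμ.sub hcν) hat hfit hgi ?_ hgδ hM0
      ?_).trans hbound
    · intro a ha z
      have hm := atom_eq_of_sq_cauchyTransform_ae_eq hsq a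
      have h1 := hnear a z (Real.arctan (potDiff e μ ν z))
        (cauchyReg e μ z - μ.real {a} * (z - a)⁻¹) (-(cauchyReg e ν z - ν.real {a} * (z - a)⁻¹))
        (by linarith [habs z]) le_rfl (norm_neg _).le
      rw [hm] at h1
      change (dbar (fun z => (bump a d z : ℂ)) z * (Real.arctan (potDiff e μ ν z) : ℝ) *
          (cauchyReg e μ z - cauchyReg e ν z)).re ≤ _
      convert h1 using 3
      ring
    · intro z hz
      refine hfar z hz _ _ ?_ (norm_sub_le _ _)
      change |Real.arctan (potDiff e μ ν z)| ≤ _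
      linarith [abs_nonneg (Real.arctan (potDiff e μ ν z))]

end Boundary

section Uniqueness

lemma isCompact_setOf_holes (A : Finset ℂ) (ρ t : ℝ) :
    IsCompact {z : ℂ | ‖z‖ ≤ ρ ∧ ∀ a ∈ A, t ≤ ‖z - a‖} := by
  refine (isCompact_closedBall (0 : ℂ) ρ).of_isClosed_subset ?_ fun z hz => by simpa using hz.1
  refine (isClosed_le continuous_norm continuous_const).inter ?_
  change IsClosed {z : ℂ | ∀ a ∈ A, t ≤ ‖z - a‖}
  simp only [ofPred_forall]
  exact isClosed_biInter fun a _ =>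
    isClosed_le continuous_const (continuous_id.sub continuous_const).norm

/-- The Cauchy transform is essentially bounded on compact sets avoiding `A`. -/
def BoundedOff (A : Finset ℂ) (μ : Measure ℂ) : Prop :=
  ∀ E : Set ℂ, IsCompact E → (∀ a ∈ A, a ∉ E) → ∃ M, ∀ᵐ z, z ∈ E → ‖cauchyTransform μ z‖ ≤ M

variable {A : Finset ℂ}

lemma BoundedOff.exists_norm_cauchyReg_le {μ : Measure ℂ} [IsFiniteMeasure μ]
    (hμ : BoundedOff A μ) {R d : ℝ} (h : HolesFit A R d) :
    ∃ B, 0 ≤ B ∧ ∀ e, 0 < e → ∀ z, holeCutoff A R d z ≠ 0 → ‖cauchyReg e μ z‖ ≤ B := by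
  have hd := h.pos
  have hR := h.Rpos
  have h' : HolesFit A (2 * R + d) (d / 4) := h.mono (by linarith) (by linarith) (by linarith)
  obtain ⟨M, hM⟩ := hμ {z : ℂ | ‖z‖ ≤ 2 * (2 * R + d) ∧ ∀ a ∈ A, d / 4 ≤ ‖z - a‖}
    (isCompact_setOf_holes A _ _) fun a ha hmem => by
      have := hmem.2 a ha
      rw [sub_self, norm_zero] at this
      linarith
  have hM' : ∀ᵐ z, holeCutoff A (2 * R + d) (d / 4) z ≠ 0 → ‖cauchyTransform μ z‖ ≤ max M 0 := by
    filter_upwards [hM] with z hz hne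
    refine (hz ⟨?_, fun a ha => ?_⟩).trans (le_max_left _ _)
    · by_contra hlt
      exact hne (h'.eq_zero_of_far (not_le.1 hlt).le)
    · by_contra hlt
      exact hne (h'.eq_zero_of_near ha (not_le.1 hlt).le)
  refine ⟨_, ?_, fun e he z hz => norm_cauchyReg_le_of_bound μ (contDiff_holeCutoff A _ _)
    h'.hasCompactSupport h'.mem_Icc (le_max_right _ _) hM' (half_pos hd) he fun w hw =>
      h'.eq_one (fun a ha => ?_) ?_⟩
  · have := deltaMass_pos
    have : 0 ≤ max M 0 := le_max_right _ _
    positivity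
  · have h1 : d < ‖z - a‖ := by
      by_contra hlt
      exact hz (h.eq_zero_of_near ha (not_lt.1 hlt))
    have h2 : ‖z - a‖ ≤ ‖w - a‖ + ‖w - z‖ := by
      rw [norm_sub_rev w z, add_comm]
      exact norm_sub_le_norm_sub_add_norm_sub _ _ _
    linarith
  · have h1 : ‖z‖ < 2 * R := by
      by_contra hlt
      exact hz (h.eq_zero_of_far (not_lt.1 hlt))
    have h2 : ‖w‖ ≤ ‖w - z‖ + ‖z‖ := by simpa using norm_add_le (w - z) z
    linarith

variable {μ ν : Measure ℂ}

lemma tendsto_integral_holeCutoff_mul [IsFiniteMeasure μ] [IsFiniteMeasure ν]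
    (hμ : BoundedOff A μ) (hν : BoundedOff A ν)
    (hsq : ∀ᵐ z, cauchyTransform μ z ^ 2 = cauchyTransform ν z ^ 2) {R d : ℝ}
    (h : HolesFit A R d) :
    Tendsto (fun e => ∫ z, holeCutoff A R d z * ‖(cauchyReg e μ z - cauchyReg e ν z) *
      (cauchyReg e μ z + cauchyReg e ν z)‖) (𝓝[>] 0) (𝓝 0) := by
  obtain ⟨B₁, hB₁, h1⟩ := hμ.exists_norm_cauchyReg_le h
  obtain ⟨B₂, hB₂, h2⟩ := hν.exists_norm_cauchyReg_le h
  have hc := (contDiff_holeCutoff A R d).continuous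
  have hlim := tendsto_integral_filter_of_dominated_convergence (μ := volume) (l := 𝓝[>] (0 : ℝ))
    (F := fun e z => holeCutoff A R d z * ‖(cauchyReg e μ z - cauchyReg e ν z) *
      (cauchyReg e μ z + cauchyReg e ν z)‖) (f := fun _ => 0)
    (bound := fun z => holeCutoff A R d z * (B₁ + B₂) ^ 2) ?_ ?_ ?_ ?_
  · simpa using hlim
  · filter_upwards [self_mem_nhdsWithin] with e he
    have h1 := continuous_cauchyReg μ he
    have h2 := continuous_cauchyReg ν he
    exact (hc.mul ((h1.sub h2).mul (h1.add h2)).norm).aestronglyMeasurable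
  · filter_upwards [self_mem_nhdsWithin] with e he
    refine Eventually.of_forall fun z => ?_
    have h0 := (h.mem_Icc z).1
    rw [norm_mul, Real.norm_of_nonneg h0, norm_norm]
    by_cases hz : holeCutoff A R d z = 0
    · simp [hz]
    · gcongr
      rw [norm_mul, sq]
      have := h1 e he z hz
      have := h2 e he z hz
      gcongr
      · exact (norm_sub_le _ _).trans (by linarith)
      · exact (norm_add_le _ _).trans (by linarith)
  · exact (hc.integrable_of_hasCompactSupport h.hasCompactSupport).mul_const _
  · filter_upwards [ae_integrable_inv_sub μ, ae_integrable_inv_sub ν, hsq] with z hz1 hz2 hz3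
    have t1 := tendsto_cauchyReg μ hz1
    have t2 := tendsto_cauchyReg ν hz2
    have t3 := (((t1.sub t2).mul (t1.add t2)).norm).const_mul (holeCutoff A R d z)
    rw [mul_comm (_ - _), ← sq_sub_sq, hz3, sub_self, norm_zero, mul_zero] at t3
    exact t3

variable [IsProbabilityMeasure μ] [IsProbabilityMeasure ν] {r : ℝ}

lemma eventually_lintegral_potDiff_le (hr : 0 < r) (hμ : μ (closedBall 0 r)ᶜ = 0)
    (hν : ν (closedBall 0 r)ᶜ = 0) (hbμ : BoundedOff A μ) (hbν : BoundedOff A ν)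
    (hsq : ∀ᵐ z, cauchyTransform μ z ^ 2 = cauchyTransform ν z ^ 2) (R₁ : ℝ) {d₁ : ℝ}
    (hd₁ : 0 < d₁) {ε : ℝ} (hε : 0 < ε) : ∀ᶠ e in 𝓝[>] (0 : ℝ),
      ∫⁻ z in {z : ℂ | ‖z‖ ≤ R₁ ∧ ∀ a ∈ A, d₁ ≤ ‖z - a‖}, ENNReal.ofReal
        (1 / (1 + potDiff e μ ν z ^ 2) * ‖cauchyReg e μ z - cauchyReg e ν z‖ ^ 2) ≤
      ENNReal.ofReal ε := by
  have hm := deltaMass_pos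
  set t := ε / (4 * deltaMass) with ht
  have ht0 : 0 < t := by positivity
  set ε' := ε / 2 / (1 + 5 / (2 * t)) with hε'
  have hε'0 : 0 < ε' := by positivity
  obtain ⟨R, d, hfit, hR, hd, hev⟩ :=
    exists_holeCutoff_boundary_le hr hμ hν hsq A hε'0 R₁ hd₁
  filter_upwards [hev, (tendsto_integral_holeCutoff_mul hbμ hbν hsq hfit).eventually
    (gt_mem_nhds hε'0), self_mem_nhdsWithin] with e he1 he2 he
  have he : 0 < e := he
  have hχ := contDiff_holeCutoff A R d
  have hkey := dirichlet_le hμ hν he hχ hfit.hasCompactSupport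
    hfit.mem_Icc ht0 he1.1 he1.2 he2.le
  have hle : ε' + 5 * ε' / (2 * t) + 2 * t * deltaMass ≤ ε := by
    have h1 : ε' + 5 * ε' / (2 * t) = ε' * (1 + 5 / (2 * t)) := by ring
    have h2 : 2 * t * deltaMass = ε / 2 := by rw [ht]; field_simp; ring
    rw [h1, h2, hε', div_mul_cancel₀ _ (by positivity)]
    linarith
  have hD := (contDiff_potDiff hμ hν he).continuous
  have hq : ∀ z, 1 + potDiff e μ ν z ^ 2 ≠ 0 := fun z => by positivity
  have hcont : Continuous fun z => 1 / (1 + potDiff e μ ν z ^ 2) *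
      ‖cauchyReg e μ z - cauchyReg e ν z‖ ^ 2 :=
    (continuous_const.div (continuous_const.add (hD.pow 2)) hq).mul
      (((continuous_cauchyReg μ he).sub (continuous_cauchyReg ν he)).norm.pow 2)
  have hint : Integrable fun z => holeCutoff A R d z * (1 / (1 + potDiff e μ ν z ^ 2) *
      ‖cauchyReg e μ z - cauchyReg e ν z‖ ^ 2) :=
    (hχ.continuous.mul hcont).integrable_of_hasCompactSupport hfit.hasCompactSupport.mul_right
  refine le_trans ?_ (ENNReal.ofReal_le_ofReal (hkey.trans hle))
  rw [ofReal_integral_eq_lintegral_ofReal hint (Eventually.of_forall fun z =>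
    mul_nonneg (hfit.mem_Icc z).1 (by positivity))]
  refine le_trans (setLIntegral_mono' (isCompact_setOf_holes A R₁ d₁).measurableSet fun z hz => ?_)
    (setLIntegral_le_lintegral _ _)
  rw [hfit.eq_one (fun a ha => hd.trans (hz.2 a ha)) (hz.1.trans hR), one_mul]

lemma cauchyTransform_ae_eq_on (hr : 0 < r) (hμ : μ (closedBall 0 r)ᶜ = 0)
    (hν : ν (closedBall 0 r)ᶜ = 0) (hbμ : BoundedOff A μ) (hbν : BoundedOff A ν)
    (hsq : ∀ᵐ z, cauchyTransform μ z ^ 2 = cauchyTransform ν z ^ 2) (R₁ : ℝ) {d₁ : ℝ}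
    (hd₁ : 0 < d₁) : ∀ᵐ z : ℂ, (‖z‖ ≤ R₁ ∧ ∀ a ∈ A, d₁ ≤ ‖z - a‖) →
      cauchyTransform μ z = cauchyTransform ν z := by
  set E := {z : ℂ | ‖z‖ ≤ R₁ ∧ ∀ a ∈ A, d₁ ≤ ‖z - a‖} with hE
  have hEm : MeasurableSet E := (isCompact_setOf_holes A R₁ d₁).measurableSet
  set f : ℕ → ℂ → ENNReal := fun k z => ENNReal.ofReal
    (1 / (1 + potDiff (1 / ((k : ℝ) + 1)) μ ν z ^ 2) *
      ‖cauchyReg (1 / ((k : ℝ) + 1)) μ z - cauchyReg (1 / ((k : ℝ) + 1)) ν z‖ ^ 2) with hf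
  have hek : ∀ k : ℕ, (0 : ℝ) < 1 / ((k : ℝ) + 1) := fun k => by positivity
  have hseq : Tendsto (fun k : ℕ => 1 / ((k : ℝ) + 1)) atTop (𝓝[>] 0) :=
    tendsto_nhdsWithin_iff.2 ⟨tendsto_one_div_add_atTop_nhds_zero_nat, Eventually.of_forall hek⟩
  have hfm : ∀ k, Measurable (f k) := fun k => by
    have hD := (contDiff_potDiff hμ hν (hek k)).continuous
    have hq : ∀ z, 1 + potDiff (1 / ((k : ℝ) + 1)) μ ν z ^ 2 ≠ 0 := fun z => by positivity
    exact ((continuous_const.div (continuous_const.add (hD.pow 2)) hq).mul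
      (((continuous_cauchyReg μ (hek k)).sub
        (continuous_cauchyReg ν (hek k))).norm.pow 2)).measurable.ennreal_ofReal
  have hlim : Tendsto (fun k => ∫⁻ z in E, f k z) atTop (𝓝 0) := by
    rw [ENNReal.tendsto_nhds_zero]
    intro ε hε
    obtain ⟨x, hx0, hx⟩ := ENNReal.lt_iff_exists_real_btwn.1 hε
    have hx1 : 0 < x := by simpa using hx.1
    filter_upwards [hseq.eventually
      (eventually_lintegral_potDiff_le hr hμ hν hbμ hbν hsq R₁ hd₁ hx1)] with k hk
    exact hk.trans hx.2.le
  have hfatou := lintegral_liminf_le (μ := volume.restrict E) (u := atTop) hfm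
  rw [hlim.liminf_eq, nonpos_iff_eq_zero,
    lintegral_eq_zero_iff (Measurable.liminf hfm)] at hfatou
  rw [EventuallyEq, ae_restrict_iff' hEm] at hfatou
  filter_upwards [hfatou, ae_integrable_inv_sub μ, ae_integrable_inv_sub ν,
    ae_exists_abs_logReg_le hμ, ae_exists_abs_logReg_le hν] with z hz hz1 hz2 hz3 hz4 hzE
  obtain ⟨M₁, hM₁⟩ := hz3
  obtain ⟨M₂, hM₂⟩ := hz4
  have t1 := ((tendsto_cauchyReg μ hz1).comp hseq).sub ((tendsto_cauchyReg ν hz2).comp hseq)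
  have t2 := (ENNReal.continuous_ofReal.tendsto _).comp
    ((t1.norm.pow 2).const_mul (1 / (1 + (M₁ + M₂) ^ 2)))
  have hle : ∀ k : ℕ, ENNReal.ofReal (1 / (1 + (M₁ + M₂) ^ 2) *
      ‖cauchyReg (1 / ((k : ℝ) + 1)) μ z - cauchyReg (1 / ((k : ℝ) + 1)) ν z‖ ^ 2) ≤ f k z := by
    intro k
    have hk1 : 1 / ((k : ℝ) + 1) ≤ 1 := div_le_one_of_le₀ (by linarith [k.cast_nonneg (α := ℝ)])
      (by positivity)
    have h1 := hM₁ _ (hek k) hk1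
    have h2 := hM₂ _ (hek k) hk1
    have h3 : |potDiff (1 / ((k : ℝ) + 1)) μ ν z| ≤ M₁ + M₂ :=
      (abs_sub _ _).trans (add_le_add h1 h2)
    have h4 : potDiff (1 / ((k : ℝ) + 1)) μ ν z ^ 2 ≤ (M₁ + M₂) ^ 2 := by
      rw [← sq_abs]
      gcongr
    refine ENNReal.ofReal_le_ofReal ?_
    gcongr
  have h5 := liminf_le_liminf (Eventually.of_forall hle) (f := atTop)
  have h6 := t2.liminf_eq
  simp only [Function.comp_def] at h6
  rw [h6, hz hzE] at h5
  have h7 := ENNReal.ofReal_eq_zero.1 (nonpos_iff_eq_zero.1 h5)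
  have h8 : ‖cauchyTransform μ z - cauchyTransform ν z‖ ^ 2 ≤ 0 := by
    by_contra hlt
    have : 0 < 1 / (1 + (M₁ + M₂) ^ 2) * ‖cauchyTransform μ z - cauchyTransform ν z‖ ^ 2 :=
      mul_pos (by positivity) (not_le.1 hlt)
    linarith
  have h9 : ‖cauchyTransform μ z - cauchyTransform ν z‖ = 0 :=
    pow_eq_zero_iff two_ne_zero |>.1 (le_antisymm h8 (by positivity))
  exact sub_eq_zero.1 (norm_eq_zero.1 h9)

/-- Two compactly supported probability measures whose Cauchy transforms have the same square are
equal, provided these are locally bounded away from a finite set. -/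
theorem eq_of_sq_cauchyTransform_ae_eq (hr : 0 < r) (hμ : μ (closedBall 0 r)ᶜ = 0)
    (hν : ν (closedBall 0 r)ᶜ = 0) (hbμ : BoundedOff A μ) (hbν : BoundedOff A ν)
    (hsq : ∀ᵐ z, cauchyTransform μ z ^ 2 = cauchyTransform ν z ^ 2) : μ = ν := by
  refine eq_of_cauchyTransform_ae_eq ?_
  have h1 : ∀ᵐ z : ℂ, ∀ n : ℕ, (‖z‖ ≤ n ∧ ∀ a ∈ A, 1 / ((n : ℝ) + 1) ≤ ‖z - a‖) →
      cauchyTransform μ z = cauchyTransform ν z :=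
    ae_all_iff.2 fun n => cauchyTransform_ae_eq_on hr hμ hν hbμ hbν hsq n (by positivity)
  have h2 : ∀ᵐ z : ℂ, z ∉ (A : Set ℂ) :=
    measure_eq_zero_iff_ae_notMem.1 (A.finite_toSet.measure_zero volume)
  filter_upwards [h1, h2] with z hz hzA
  have e1 : ∀ᶠ n : ℕ in atTop, ‖z‖ ≤ n :=
    tendsto_natCast_atTop_atTop.eventually (eventually_ge_atTop ‖z‖)
  have e2 : ∀ᶠ n : ℕ in atTop, ∀ a ∈ A, 1 / ((n : ℝ) + 1) ≤ ‖z - a‖ := by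
    refine (eventually_all_finset A).2 fun a ha => ?_
    have h3 : 0 < ‖z - a‖ := norm_pos_iff.2 (sub_ne_zero.2 fun h => hzA (h ▸ ha))
    filter_upwards [tendsto_one_div_add_atTop_nhds_zero_nat.eventually (gt_mem_nhds h3)] with n hn
    exact hn.le
  obtain ⟨n, hn⟩ := (e1.and e2).exists
  exact hz n hn

end Uniqueness

section WeakLimits

open scoped BoundedContinuousFunction

lemma exists_subseq_tendsto_ae_zero {α : Type*} [MeasurableSpace α] {μ : Measure α}
    {f : ℕ → α → ENNReal} (hf : ∀ k, AEMeasurable (f k) μ)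
    (h : Tendsto (fun k => ∫⁻ x, f k x ∂μ) atTop (𝓝 0)) :
    ∃ φ : ℕ → ℕ, StrictMono φ ∧ ∀ᵐ x ∂μ, Tendsto (fun k => f (φ k) x) atTop (𝓝 0) := by
  obtain ⟨φ, hφ, hle⟩ := extraction_forall_of_eventually
    (P := fun n k => ∫⁻ x, f k x ∂μ ≤ (2 : ENNReal)⁻¹ ^ n) fun n =>
      ENNReal.tendsto_nhds_zero.1 h _ (ENNReal.pow_pos (by simp) n)
  refine ⟨φ, hφ, ?_⟩
  have h1 : ∫⁻ x, ∑' k, f (φ k) x ∂μ ≠ ⊤ := by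
    rw [lintegral_tsum fun k => hf (φ k)]
    refine ne_top_of_le_ne_top ?_ (ENNReal.tsum_le_tsum hle)
    rw [ENNReal.tsum_geometric]
    simp
  filter_upwards [ae_lt_top' (AEMeasurable.tsum fun k => hf (φ k)) h1] with x hx
  exact ENNReal.tendsto_atTop_zero_of_tsum_ne_top hx.ne

variable {μ : ℕ → Measure ℂ} {ν : Measure ℂ}

lemma tendsto_integral_complex_of_weak [∀ k, IsProbabilityMeasure (μ k)] [IsProbabilityMeasure ν]
    (hw : ∀ f : ℂ →ᵇ ℝ, Tendsto (fun k => ∫ z, f z ∂(μ k)) atTop (𝓝 (∫ z, f z ∂ν)))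
    {g : ℂ → ℂ} (hg : Continuous g) {M : ℝ} (hM : ∀ z, ‖g z‖ ≤ M) :
    Tendsto (fun k => ∫ z, g z ∂(μ k)) atTop (𝓝 (∫ z, g z ∂ν)) := by
  have hre := hw (BoundedContinuousFunction.ofNormedAddCommGroup (fun z => (g z).re)
    (Complex.continuous_re.comp hg) M fun z => (Complex.abs_re_le_norm _).trans (hM z))
  have him := hw (BoundedContinuousFunction.ofNormedAddCommGroup (fun z => (g z).im)
    (Complex.continuous_im.comp hg) M fun z => (Complex.abs_im_le_norm _).trans (hM z))
  have hint : ∀ ρ : Measure ℂ, [IsProbabilityMeasure ρ] → Integrable g ρ := fun ρ _ =>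
    Integrable.of_bound hg.aestronglyMeasurable M (Eventually.of_forall hM)
  have hsplit : ∀ ρ : Measure ℂ, [IsProbabilityMeasure ρ] → ∫ z, g z ∂ρ =
      ((∫ z, (g z).re ∂ρ : ℝ) : ℂ) + ((∫ z, (g z).im ∂ρ : ℝ) : ℂ) * Complex.I := fun ρ _ => by
    exact (integral_re_add_im (hint ρ)).symm
  simp_rw [fun k => hsplit (μ k), hsplit ν]
  exact ((Complex.continuous_ofReal.tendsto _).comp hre).add
    (((Complex.continuous_ofReal.tendsto _).comp him).mul_const _)

/-- Weak convergence of probability measures implies local `L¹` convergence of their Cauchy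
transforms. -/
lemma tendsto_lintegral_ball_cauchyTransform_sub [∀ k, IsProbabilityMeasure (μ k)]
    [IsProbabilityMeasure ν]
    (hw : ∀ f : ℂ →ᵇ ℝ, Tendsto (fun k => ∫ z, f z ∂(μ k)) atTop (𝓝 (∫ z, f z ∂ν)))
    {r : ℝ} (hr : 0 < r) :
    Tendsto (fun k => ∫⁻ z in ball 0 r, ‖cauchyTransform (μ k) z - cauchyTransform ν z‖ₑ)
      atTop (𝓝 0) := by
  have hreg : ∀ e, 0 < e → Tendsto (fun k => ∫⁻ z in ball 0 r,
      ‖cauchyReg e (μ k) z - cauchyReg e ν z‖ₑ) atTop (𝓝 0) := by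
    intro e he
    have hpt : ∀ z, Tendsto (fun k => cauchyReg e (μ k) z) atTop (𝓝 (cauchyReg e ν z)) := fun z =>
      tendsto_integral_complex_of_weak hw ((contDiff_regCauchy he).continuous.comp
        (continuous_const.sub continuous_id)) fun ξ => norm_regCauchy_le he _
    have hb : ∀ (ρ : Measure ℂ) [IsProbabilityMeasure ρ] (z : ℂ), ‖cauchyReg e ρ z‖ ≤ 1 / e :=
      fun ρ _ z => (norm_integral_le_of_norm_le_const
        (Eventually.of_forall fun ξ => norm_regCauchy_le he _)).trans (by simp)
    have h := tendsto_lintegral_of_dominated_convergence (μ := volume.restrict (ball (0 : ℂ) r))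
      (F := fun k z => ‖cauchyReg e (μ k) z - cauchyReg e ν z‖ₑ) (f := fun _ => 0)
      (fun _ => ENNReal.ofReal (2 / e)) (fun k => ((continuous_cauchyReg (μ k) he).sub
        (continuous_cauchyReg ν he)).enorm.measurable)
      (fun k => Eventually.of_forall fun z => ?_) ?_ (Eventually.of_forall fun z => ?_)
    · simpa using h
    · change ‖cauchyReg e (μ k) z - cauchyReg e ν z‖ₑ ≤ ENNReal.ofReal (2 / e)
      rw [← ofReal_norm]
      refine ENNReal.ofReal_le_ofReal ((norm_sub_le _ _).trans ?_)
      have := hb (μ k) z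
      have := hb ν z
      have : 2 / e = 1 / e + 1 / e := by ring
      linarith
    · rw [lintegral_const, Measure.restrict_apply_univ]
      exact ENNReal.mul_ne_top ENNReal.ofReal_ne_top measure_ball_lt_top.ne
    · have h1 := ((hpt z).sub_const (cauchyReg e ν z)).enorm
      simpa using h1
  rw [ENNReal.tendsto_nhds_zero]
  intro ε hε
  have hε3 : 0 < ε / 3 := ENNReal.div_pos hε.ne' (by simp)
  have hsmall : Tendsto (fun e : ℝ => ENNReal.ofReal (e ^ (1 / 2 : ℝ) *
      (5 * Real.pi * r ^ (1 / 2 : ℝ)))) (𝓝[>] 0) (𝓝 0) := by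
    have h1 : ContinuousAt (fun e : ℝ => e ^ (1 / 2 : ℝ)) 0 :=
      Real.continuousAt_rpow_const _ _ (Or.inr (by norm_num))
    have h2 := (h1.tendsto.mono_left nhdsWithin_le_nhds :
      Tendsto _ (𝓝[>] (0 : ℝ)) _).mul_const (5 * Real.pi * r ^ (1 / 2 : ℝ))
    rw [Real.zero_rpow (by norm_num), zero_mul] at h2
    simpa [Function.comp_def] using (ENNReal.continuous_ofReal.tendsto _).comp h2
  obtain ⟨e, he1, he⟩ := ((ENNReal.tendsto_nhds_zero.1 hsmall _ hε3).and
    self_mem_nhdsWithin).exists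
  have he : 0 < e := he
  have hb : ∀ (ρ : Measure ℂ) [IsProbabilityMeasure ρ], ∫⁻ z in ball 0 r,
      ‖cauchyReg e ρ z - cauchyTransform ρ z‖ₑ ≤ ε / 3 := fun ρ _ => by
    have := lintegral_ball_cauchyReg_sub_le ρ he 0 hr
    rw [measure_univ, mul_one] at this
    exact this.trans he1
  have hm : ∀ (ρ : Measure ℂ) [IsProbabilityMeasure ρ], AEMeasurable
      (fun z => ‖cauchyReg e ρ z - cauchyTransform ρ z‖ₑ) (volume.restrict (ball 0 r)) :=
    fun ρ _ => ((continuous_cauchyReg ρ he).aestronglyMeasurable.sub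
      (aestronglyMeasurable_cauchyTransform ρ)).enorm.restrict
  filter_upwards [ENNReal.tendsto_nhds_zero.1 (hreg e he) _ hε3] with k hk
  calc ∫⁻ z in ball 0 r, ‖cauchyTransform (μ k) z - cauchyTransform ν z‖ₑ
      ≤ ∫⁻ z in ball 0 r, (‖cauchyReg e (μ k) z - cauchyTransform (μ k) z‖ₑ +
        (‖cauchyReg e ν z - cauchyTransform ν z‖ₑ +
        ‖cauchyReg e (μ k) z - cauchyReg e ν z‖ₑ)) := by
        refine lintegral_mono fun z => ?_
        have : cauchyTransform (μ k) z - cauchyTransform ν z =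
          -(cauchyReg e (μ k) z - cauchyTransform (μ k) z) +
          ((cauchyReg e ν z - cauchyTransform ν z) + (cauchyReg e (μ k) z - cauchyReg e ν z)) := by
          ring
        simp only
        rw [this, ← enorm_neg (cauchyReg e (μ k) z - cauchyTransform (μ k) z)]
        exact (enorm_add_le _ _).trans (by gcongr; exact enorm_add_le _ _)
    _ ≤ ε / 3 + (ε / 3 + ε / 3) := by
        rw [lintegral_add_left' (hm (μ k)), lintegral_add_left' (hm ν)]
        exact add_le_add (hb (μ k)) (add_le_add (hb ν) hk)
    _ = ε := by rw [← add_assoc, ENNReal.add_thirds]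

/-- Passing to the limit in a Riccati equation satisfied by Cauchy transforms. -/
lemma sq_cauchyTransform_of_riccati [∀ k, IsProbabilityMeasure (μ k)] [IsProbabilityMeasure ν]
    (hw : ∀ f : ℂ →ᵇ ℝ, Tendsto (fun k => ∫ z, f z ∂(μ k)) atTop (𝓝 (∫ z, f z ∂ν)))
    {q p w : ℂ → ℂ} {h W : ℕ → ℂ → ℂ} {c : ℕ → ℂ} {s : ℝ} (hs : 0 < s)
    (hhm : ∀ k, Measurable (h k))
    (hh : ∀ r : ℝ, 0 < r → Tendsto (fun k => ∫⁻ z in ball 0 r, ‖h k z‖ₑ ^ s) atTop (𝓝 0))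
    (hc : Tendsto c atTop (𝓝 0)) (hW : ∀ z, Tendsto (fun k => W k z) atTop (𝓝 (w z)))
    (hric : ∀ k, ∀ᵐ z, q z * cauchyTransform (μ k) z ^ 2 =
      q z * h k z + c k * p z * cauchyTransform (μ k) z + W k z) :
    ∀ᵐ z, q z * cauchyTransform ν z ^ 2 = w z := by
  refine ae_of_forall_ball fun n => ?_
  have hball : (volume.restrict (ball (0 : ℂ) n)) ≤ volume.restrict (ball (0 : ℂ) (n + 1)) :=
    Measure.restrict_mono (ball_subset_ball (by linarith)) le_rfl
  refine ae_mono hball ?_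
  have hr : (0 : ℝ) < n + 1 := by positivity
  have hm1 : ∀ k, AEMeasurable (fun z => ‖cauchyTransform (μ k) z - cauchyTransform ν z‖ₑ)
      (volume.restrict (ball 0 ((n : ℝ) + 1))) := fun k =>
    ((aestronglyMeasurable_cauchyTransform (μ k)).sub
      (aestronglyMeasurable_cauchyTransform ν)).enorm.restrict
  have hm2 : ∀ k, Measurable fun z => ‖h k z‖ₑ ^ s := fun k => (hhm k).enorm.pow_const s
  have hlim := (tendsto_lintegral_ball_cauchyTransform_sub hw hr).add (hh _ hr)
  rw [add_zero] at hlim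
  obtain ⟨φ, hφ, hae⟩ := exists_subseq_tendsto_ae_zero
    (fun k => (hm1 k).add (hm2 k).aemeasurable) (by
      refine hlim.congr fun k => ?_
      exact (lintegral_add_left' (hm1 k) _).symm)
  filter_upwards [hae, ae_restrict_of_ae (ae_all_iff.2 hric)] with z hz hr
  have hφt := hφ.tendsto_atTop
  have t1 : Tendsto (fun k => cauchyTransform (μ (φ k)) z) atTop (𝓝 (cauchyTransform ν z)) := by
    rw [tendsto_iff_edist_tendsto_0]
    refine tendsto_of_tendsto_of_tendsto_of_le_of_le tendsto_const_nhds hz (fun _ => zero_le)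
      fun k => ?_
    rw [edist_eq_enorm_sub]
    exact le_self_add
  have t2 : Tendsto (fun k => h (φ k) z) atTop (𝓝 0) := by
    have h1 : Tendsto (fun k => ‖h (φ k) z‖ₑ ^ s) atTop (𝓝 0) :=
      tendsto_of_tendsto_of_tendsto_of_le_of_le tendsto_const_nhds hz (fun _ => zero_le)
        fun k => by rw [Pi.add_apply]; exact le_add_self
    have h2 := h1.ennrpow_const s⁻¹
    simp_rw [← ENNReal.rpow_mul, mul_inv_cancel₀ hs.ne', ENNReal.rpow_one] at h2
    rw [ENNReal.zero_rpow_of_pos (by positivity)] at h2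
    rw [tendsto_iff_edist_tendsto_0]
    simpa [edist_eq_enorm_sub] using h2
  have t3 := ((t2.const_mul (q z)).add (((hc.comp hφt).mul_const (p z)).mul t1)).add
    ((hW z).comp hφt)
  have t4 := (t1.pow 2).const_mul (q z)
  refine tendsto_nhds_unique t4 (Tendsto.congr (fun k => (hr (φ k)).symm) ?_)
  simpa using t3

end WeakLimits

section Compactness

open scoped BoundedContinuousFunction

lemma exists_subseq_weak_limit {μ : ℕ → Measure ℂ} [∀ k, IsProbabilityMeasure (μ k)] {R : ℝ}
    (hμ : ∀ k, μ k (closedBall 0 R)ᶜ = 0) :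
    ∃ ν : Measure ℂ, IsProbabilityMeasure ν ∧ ν (closedBall 0 R)ᶜ = 0 ∧ ∃ φ : ℕ → ℕ,
      StrictMono φ ∧ ∀ f : ℂ →ᵇ ℝ,
        Tendsto (fun k => ∫ z, f z ∂(μ (φ k))) atTop (𝓝 (∫ z, f z ∂ν)) := by
  let m : ℕ → ProbabilityMeasure ℂ := fun k => ⟨μ k, inferInstance⟩
  have htight : IsTightMeasureSet {((ρ : ProbabilityMeasure ℂ) : Measure ℂ) | ρ ∈ range m} := by
    rw [isTightMeasureSet_iff_exists_isCompact_measure_compl_le]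
    refine fun ε hε => ⟨closedBall 0 R, isCompact_closedBall 0 R, ?_⟩
    rintro _ ⟨_, ⟨k, rfl⟩, rfl⟩
    exact (hμ k).le.trans zero_le
  obtain ⟨ν, -, φ, hφ, hlim⟩ := (isCompact_closure_of_isTightMeasureSet htight).tendsto_subseq
    fun k => subset_closure (mem_range_self k)
  refine ⟨ν, inferInstance, ?_, φ, hφ,
    ProbabilityMeasure.tendsto_iff_forall_integral_tendsto.1 hlim⟩
  have h := ProbabilityMeasure.le_liminf_measure_open_of_tendsto hlim
    (isClosed_closedBall (x := (0 : ℂ)) (ε := R)).isOpen_compl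
  have h0 : ∀ k, ((m ∘ φ) k : Measure ℂ) (closedBall 0 R)ᶜ = 0 := fun k => hμ (φ k)
  simp_rw [h0, liminf_const] at h
  exact nonpos_iff_eq_zero.1 h

/-- A sequence of probability measures on a fixed compact disc, all of whose weak limits have a
property that characterises a measure uniquely, converges. -/
lemma exists_weak_limit_of_unique {μ : ℕ → Measure ℂ} [∀ k, IsProbabilityMeasure (μ k)] {R : ℝ}
    (hμ : ∀ k, μ k (closedBall 0 R)ᶜ = 0) {G : Measure ℂ → Prop}
    (hG : ∀ ns : ℕ → ℕ, Tendsto ns atTop atTop → ∀ ν : Measure ℂ, IsProbabilityMeasure ν →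
      (∀ f : ℂ →ᵇ ℝ, Tendsto (fun k => ∫ z, f z ∂(μ (ns k))) atTop (𝓝 (∫ z, f z ∂ν))) → G ν)
    (huniq : ∀ ν ν' : Measure ℂ, IsProbabilityMeasure ν → IsProbabilityMeasure ν' →
      ν (closedBall 0 R)ᶜ = 0 → ν' (closedBall 0 R)ᶜ = 0 → G ν → G ν' → ν = ν') :
    ∃ ν : Measure ℂ, IsProbabilityMeasure ν ∧ ν (closedBall 0 R)ᶜ = 0 ∧ G ν ∧
      ∀ f : ℂ →ᵇ ℝ, Tendsto (fun k => ∫ z, f z ∂(μ k)) atTop (𝓝 (∫ z, f z ∂ν)) := by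
  obtain ⟨ν, hν, hνs, φ, hφ, hlim⟩ := exists_subseq_weak_limit hμ
  have hGν := hG φ hφ.tendsto_atTop ν hν hlim
  refine ⟨ν, hν, hνs, hGν, fun f => tendsto_of_subseq_tendsto fun ns hns => ?_⟩
  obtain ⟨ν', hν', hνs', ψ, hψ, hlim'⟩ := exists_subseq_weak_limit fun k => hμ (ns k)
  have hGν' := hG (ns ∘ ψ) (hns.comp hψ.tendsto_atTop) ν' hν' hlim'
  obtain rfl := huniq ν ν' hν hν' hνs hνs' hGν hGν'
  exact ⟨ψ, hlim' f⟩

end Compactness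

/-- A polynomial of degree at most `2` is quadratically bounded outside the unit disc. -/
theorem exists_norm_eval_le_sq {P : ℂ[X]} (hP : P.natDegree ≤ 2) :
    ∃ K : ℝ, 0 ≤ K ∧ ∀ z : ℂ, 1 ≤ ‖z‖ → ‖P.eval z‖ ≤ K * ‖z‖ ^ 2 := by
  refine ⟨‖P.coeff 0‖ + ‖P.coeff 1‖ + ‖P.coeff 2‖, by positivity, fun z hz => ?_⟩
  rw [eval_eq_sum_range' (Nat.lt_succ_of_le hP)]
  simp only [Finset.sum_range_succ, Finset.sum_range_zero, pow_zero, mul_one, zero_add, pow_one]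
  refine (norm_add₃_le).trans ?_
  rw [norm_mul, norm_mul, norm_pow]
  have h2 : 1 ≤ ‖z‖ ^ 2 := one_le_pow₀ hz
  have h1 : ‖z‖ ≤ ‖z‖ ^ 2 := by nlinarith
  nlinarith [mul_le_mul_of_nonneg_left h2 (norm_nonneg (P.coeff 0)),
    mul_le_mul_of_nonneg_left h1 (norm_nonneg (P.coeff 1))]

/-- For `Q` monic cubic and `P` at most quadratic, `z P(z)` is dominated by `Q(z)` near infinity. -/
theorem exists_norm_mul_eval_le {Q P : ℂ[X]} (hQ : Q.Monic) (hQd : Q.natDegree = 3)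
    (hP : P.natDegree ≤ 2) :
    ∃ R : ℝ, 0 < R ∧ ∃ K : ℝ, 0 ≤ K ∧ ∀ z : ℂ, R < ‖z‖ →
      Q.eval z ≠ 0 ∧ ‖z * P.eval z‖ ≤ K * ‖Q.eval z‖ := by
  obtain ⟨K, hK, hPz⟩ := exists_norm_eval_le_sq hP
  have hd : (Q - X ^ 3).natDegree ≤ 2 := by
    have : (Q - X ^ 3).degree < Q.degree := by
      refine degree_sub_lt_left ?_ hQ.ne_zero (by simp [hQ.leadingCoeff])
      rw [degree_eq_natDegree hQ.ne_zero, hQd, degree_X_pow]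
    rw [degree_eq_natDegree hQ.ne_zero, hQd] at this
    by_cases h0 : Q - X ^ 3 = 0
    · simp [h0]
    · rw [degree_eq_natDegree h0] at this
      have h3 : (Q - X ^ 3).natDegree < 3 := by exact_mod_cast this
      omega
  obtain ⟨K', hK', hQz⟩ := exists_norm_eval_le_sq hd
  refine ⟨2 * K' + 1, by positivity, 2 * K, by positivity, fun z hz => ?_⟩
  have hz1 : 1 ≤ ‖z‖ := by linarith
  have hq : ‖z‖ ^ 3 ≤ 2 * ‖Q.eval z‖ := by
    have h1 := hQz z hz1
    rw [eval_sub, eval_pow, eval_X] at h1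
    have h2 := norm_sub_norm_le (z ^ 3) (Q.eval z)
    rw [norm_sub_rev, norm_pow] at h2
    nlinarith [sq_nonneg ‖z‖]
  have hpos : 0 < ‖z‖ ^ 3 := by positivity
  refine ⟨fun h => ?_, ?_⟩
  · rw [h, norm_zero] at hq; linarith
  · rw [norm_mul]
    nlinarith [mul_le_mul_of_nonneg_left (hPz z hz1) (norm_nonneg z),
      mul_le_mul_of_nonneg_left hq hK]

/-- At a multiple root of a solution of `Q S'' + P S' + V S = 0` the leading coefficient `Q`
vanishes. -/
theorem eval_derivative_ne_zero_of_isRoot {Q P V S : ℂ[X]} (hS : S ≠ 0)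
    (h : Q * derivative (derivative S) + P * derivative S + V * S = 0) {a : ℂ}
    (ha : S.IsRoot a) (hQ : Q.eval a ≠ 0) : (derivative S).eval a ≠ 0 := by
  intro h'
  have hm1 : (derivative S).rootMultiplicity a = S.rootMultiplicity a - 1 :=
    derivative_rootMultiplicity_of_root ha
  have hm2 : (derivative (derivative S)).rootMultiplicity a = (derivative S).rootMultiplicity a - 1 :=
    derivative_rootMultiplicity_of_root h'
  have hS1 : derivative S ≠ 0 := by
    intro h0
    have := derivative_eq_zero.1 h0
    obtain ⟨c, rfl⟩ := natDegree_eq_zero.1 this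
    simp [IsRoot] at ha
    exact hS (by simp [ha])
  have hpos : 0 < (derivative S).rootMultiplicity a := (rootMultiplicity_pos hS1).2 h'
  have hS2 : derivative (derivative S) ≠ 0 := by
    intro h0
    have := derivative_eq_zero.1 h0
    obtain ⟨c, hc⟩ := natDegree_eq_zero.1 this
    rw [← hc] at h'
    simp at h'
    exact hS1 (by rw [← hc]; simp [h'])
  set m := (derivative S).rootMultiplicity a with hm
  have hd1 : (X - C a) ^ m ∣ derivative S := pow_rootMultiplicity_dvd _ _
  have hd0 : (X - C a) ^ m ∣ S :=
    (pow_dvd_pow _ (by omega)).trans (pow_rootMultiplicity_dvd S a)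
  have hd2 : (X - C a) ^ m ∣ Q * derivative (derivative S) := by
    have : Q * derivative (derivative S) = -(P * derivative S + V * S) := by
      linear_combination h
    rw [this]
    exact ((hd1.mul_left _).add (hd0.mul_left _)).neg_right
  have hcop : IsCoprime ((X - C a) ^ m) Q := by
    refine IsCoprime.pow_left ((irreducible_X_sub_C a).coprime_iff_not_dvd.2 fun hdv => ?_)
    exact hQ (dvd_iff_isRoot.1 hdv)
  have := (le_rootMultiplicity_iff hS2).2 (hcop.dvd_of_dvd_mul_left hd2)
  omega

theorem half_le_re_div_sub {z w : ℂ} (hw : ‖w‖ ≤ ‖z‖) (hne : z ≠ w) :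
    1 / 2 ≤ (z * (1 / (z - w))).re := by
  have hz : z - w ≠ 0 := sub_ne_zero.2 hne
  have hn : 0 < Complex.normSq (z - w) := Complex.normSq_pos.2 hz
  have hle : Complex.normSq w ≤ Complex.normSq z := by
    rw [Complex.normSq_eq_norm_sq, Complex.normSq_eq_norm_sq]; gcongr
  rw [mul_one_div, Complex.div_re, ← add_div, div_le_div_iff₀ two_pos hn]
  simp only [Complex.normSq_apply, Complex.sub_re, Complex.sub_im] at *
  nlinarith

theorem card_div_two_le_re_sum {z : ℂ} (s : Multiset ℂ) (hs : ∀ w ∈ s, ‖w‖ ≤ ‖z‖ ∧ z ≠ w) :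
    (s.card : ℝ) / 2 ≤ (z * (s.map fun w => 1 / (z - w)).sum).re := by
  induction s using Multiset.induction_on with
  | empty => simp
  | cons a s ih =>
    have h1 := ih fun w hw => hs w (Multiset.mem_cons_of_mem hw)
    have h2 := half_le_re_div_sub (hs a (Multiset.mem_cons_self a s)).1
      (hs a (Multiset.mem_cons_self a s)).2
    rw [Multiset.map_cons, Multiset.sum_cons, mul_add, Complex.add_re, Multiset.card_cons]
    push_cast
    linarith

/-- The roots of all polynomial solutions of large degree lie in one disc. -/
theorem exists_roots_bound {Q P : ℂ[X]} (hQ : Q.Monic) (hQd : Q.natDegree = 3)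
    (hP : P.natDegree ≤ 2) :
    ∃ R : ℝ, 0 < R ∧ ∃ N : ℕ, ∀ n, N ≤ n → ∀ S V : ℂ[X], S.natDegree = n →
      Q * derivative (derivative S) + P * derivative S + V * S = 0 →
      ∀ z ∈ S.roots, ‖z‖ ≤ R := by
  obtain ⟨R, hR, K, hK, hQP⟩ := exists_norm_mul_eval_le hQ hQd hP
  obtain ⟨N, hN⟩ := exists_nat_gt (2 * K + 1)
  refine ⟨R, hR, N, fun n hn S V hS h z hz => ?_⟩
  by_contra hzR
  push Not at hzR
  have hn1 : 2 * K + 1 < (n : ℝ) := hN.trans_le (by exact_mod_cast hn)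
  have hnpos : 0 < n := by
    have : (0 : ℝ) < n := by linarith
    exact_mod_cast this
  have hS0 : S ≠ 0 := by rintro rfl; simp at hz
  obtain ⟨a, ha, hmax⟩ := S.roots.toFinset.exists_max_image (fun w => ‖w‖)
    ⟨z, by simpa using hz⟩
  have ha' : S.IsRoot a := (mem_roots hS0).1 (by simpa using ha)
  have haR : R < ‖a‖ := hzR.trans_le (hmax z (by simpa using hz))
  obtain ⟨hQa, hPa⟩ := hQP a haR
  have hne := eval_derivative_ne_zero_of_isRoot hS0 h ha' hQa
  have hsum := (IsAlgClosed.splits (derivative S)).eval_derivative_div_eval_of_ne_zero hne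
  have hcard := card_div_two_le_re_sum (z := a) (derivative S).roots fun w hw => by
    have hw' := (mem_roots'.1 hw)
    refine ⟨?_, fun hh => hne (hh ▸ hw'.2)⟩
    have hdeg : 0 < S.degree := natDegree_pos_iff_degree_pos.1 (by omega)
    have hsub := Polynomial.rootSet_derivative_subset_convexHull_rootSet hdeg
    have hcv : convexHull ℝ (S.rootSet ℂ) ⊆ closedBall 0 ‖a‖ :=
      convexHull_min (fun w hw => by
        rw [mem_closedBall_zero_iff]
        refine hmax w ?_
        rw [mem_rootSet] at hw
        simp [hS0]
        simpa [coe_aeval_eq_eval] using hw.2) (convex_closedBall _ _)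
    have := hcv (hsub (by
      rw [mem_rootSet]
      exact ⟨hw'.1, by simpa [coe_aeval_eq_eval] using hw'.2⟩))
    simpa using this
  rw [← hsum, ← (IsAlgClosed.splits (derivative S)).natDegree_eq_card_roots,
    natDegree_derivative, hS] at hcard
  have hev : Q.eval a * (derivative (derivative S)).eval a + P.eval a * (derivative S).eval a = 0 := by
    have := congrArg (eval a) h
    rw [eval_add, eval_add, eval_mul, eval_mul, eval_mul, ha'.eq_zero] at this
    simpa using this
  have hratio : a * ((derivative (derivative S)).eval a / (derivative S).eval a)
      = -(a * P.eval a) / Q.eval a := by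
    field_simp
    linear_combination a * hev
  rw [hratio] at hcard
  have hle : ‖-(a * P.eval a) / Q.eval a‖ ≤ K := by
    rw [norm_div, norm_neg, div_le_iff₀ (norm_pos_iff.2 hQa)]
    exact hPa
  have := hcard.trans ((Complex.re_le_norm _).trans hle)
  rw [Nat.cast_sub hnpos] at this
  push_cast at this
  linarith

/-- The top coefficient of `V` is determined by the equation `Q S'' + P S' + V S = 0`. -/
theorem coeff_one_of_heun {Q P V S : ℂ[X]} (hQ : Q.Monic) (hQd : Q.natDegree = 3)
    (hP : P.natDegree ≤ 2) (hV : V.natDegree ≤ 1) {n : ℕ} (hn : 2 ≤ n) (hS : S.natDegree = n)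
    (h : Q * derivative (derivative S) + P * derivative S + V * S = 0) :
    V.coeff 1 = -((n : ℂ) * (n - 1) + P.coeff 2 * n) := by
  obtain ⟨k, rfl⟩ : ∃ k, n = k + 2 := ⟨n - 2, by omega⟩
  have hS1 : (derivative S).natDegree ≤ k + 1 := by rw [natDegree_derivative, hS]; omega
  have hS2 : (derivative (derivative S)).natDegree ≤ k := by
    rw [natDegree_derivative, natDegree_derivative, hS]; omega
  have h1 := coeff_mul_add_eq_of_natDegree_le hQd.le hS2
  have h2 := coeff_mul_add_eq_of_natDegree_le hP hS1
  have h3 := coeff_mul_add_eq_of_natDegree_le hV hS.le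
  have h0 := congrArg (fun p => coeff p (k + 3)) h
  simp only [coeff_add, coeff_zero] at h0
  rw [show 3 + k = k + 3 by omega] at h1
  rw [show 2 + (k + 1) = k + 3 by omega] at h2
  rw [show 1 + (k + 2) = k + 3 by omega] at h3
  rw [h1, h2, h3] at h0
  have hq : Q.coeff 3 = 1 := by rw [← hQd]; exact hQ.coeff_natDegree
  have hs : S.coeff (k + 2) ≠ 0 := by
    rw [← hS]
    refine leadingCoeff_ne_zero.2 ?_
    rintro rfl
    simp at hS
  simp only [coeff_derivative, hq] at h0
  refine mul_right_cancel₀ hs ?_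
  push_cast at h0 ⊢
  linear_combination h0

theorem eval_of_degree_one {V : ℂ[X]} (hV : V.natDegree ≤ 1) {b : ℂ} (hb : V.IsRoot b) (z : ℂ) :
    V.eval z = V.coeff 1 * (z - b) := by
  have h : ∀ x, V.eval x = V.coeff 0 + V.coeff 1 * x := fun x => by
    rw [eval_eq_sum_range' (Nat.lt_succ_of_le hV)]
    simp [Finset.sum_range_succ]
  have h0 := h b
  rw [hb.eq_zero] at h0
  rw [h]
  linear_combination -h0

theorem eval_derivatives_multiset_prod (s : Multiset ℂ) {x : ℂ} (hx : x ∉ s) :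
    (derivative (s.map (X - C ·)).prod).eval x
      = (s.map (X - C ·)).prod.eval x * (s.map fun a => (x - a)⁻¹).sum ∧
    (derivative (derivative (s.map (X - C ·)).prod)).eval x
      = (s.map (X - C ·)).prod.eval x *
        ((s.map fun a => (x - a)⁻¹).sum ^ 2 - (s.map fun a => ((x - a)⁻¹) ^ 2).sum) := by
  induction s using Multiset.induction_on with
  | empty => simp
  | cons a s ih =>
    rw [Multiset.mem_cons, not_or] at hx
    obtain ⟨h1, h2⟩ := ih hx.2
    have hxa : x - a ≠ 0 := sub_ne_zero.2 hx.1
    simp only [Multiset.map_cons, Multiset.prod_cons, Multiset.sum_cons, derivative_mul,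
      derivative_add, derivative_sub, derivative_X, derivative_C, eval_add, eval_mul, eval_sub,
      eval_X, eval_C, sub_zero, one_mul, h1, h2]
    constructor
    · field_simp
    · field_simp
      ring

/-- The Riccati equation satisfied by the logarithmic derivative of a solution. -/
theorem riccati_of_heun {Q P V S : ℂ[X]} {x : ℂ}
    (h : Q * derivative (derivative S) + P * derivative S + V * S = 0) (hx : S.eval x ≠ 0) :
    Q.eval x * (S.roots.map fun a => (x - a)⁻¹).sum ^ 2
      = Q.eval x * (S.roots.map fun a => ((x - a)⁻¹) ^ 2).sum
        - P.eval x * (S.roots.map fun a => (x - a)⁻¹).sum - V.eval x := by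
  have hxs : x ∉ S.roots := fun h => hx (isRoot_of_mem_roots h)
  obtain ⟨h1, h2⟩ := eval_derivatives_multiset_prod S.roots hxs
  set p := (S.roots.map (X - C ·)).prod with hp
  have hS : S = C S.leadingCoeff * p := (IsAlgClosed.splits S).eq_prod_roots
  have e0 : S.eval x = S.leadingCoeff * p.eval x := by
    conv_lhs => rw [hS]
    rw [eval_mul, eval_C]
  have e1 : (derivative S).eval x = S.leadingCoeff * (derivative p).eval x := by
    conv_lhs => rw [hS]
    rw [derivative_C_mul, eval_mul, eval_C]
  have e2 : (derivative (derivative S)).eval x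
      = S.leadingCoeff * (derivative (derivative p)).eval x := by
    conv_lhs => rw [hS]
    rw [derivative_C_mul, derivative_C_mul, eval_mul, eval_C]
  have hev := congrArg (eval x) h
  rw [eval_add, eval_add, eval_mul, eval_mul, eval_mul, e1, e2, h1, h2, eval_zero] at hev
  refine mul_left_cancel₀ hx ?_
  rw [e0] at hev ⊢
  linear_combination hev

theorem integrable_integral_multiset_sum_dirac {E : Type*} [NormedAddCommGroup E] [NormedSpace ℝ E]
    [CompleteSpace E] (s : Multiset ℂ) (f : ℂ → E) :
    Integrable f (s.map Measure.dirac).sum ∧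
      ∫ z, f z ∂(s.map Measure.dirac).sum = (s.map f).sum := by
  induction s using Multiset.induction_on with
  | empty => simp
  | cons a s ih =>
    have ha : Integrable f (Measure.dirac a) := integrable_dirac (by simp)
    rw [Multiset.map_cons, Multiset.sum_cons, Multiset.map_cons, Multiset.sum_cons]
    refine ⟨ha.add_measure ih.1, ?_⟩
    rw [integral_add_measure ha ih.1, ih.2, integral_dirac]

theorem multiset_sum_dirac_apply_univ (s : Multiset ℂ) :
    (s.map Measure.dirac).sum (univ : Set ℂ) = s.card := by
  induction s using Multiset.induction_on with
  | empty => simp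
  | cons a s ih => simp [ih, add_comm]

theorem multiset_sum_dirac_compl_eq_zero (s : Multiset ℂ) {K : Set ℂ} (hK : MeasurableSet K)
    (hs : ∀ a ∈ s, a ∈ K) : (s.map Measure.dirac).sum Kᶜ = 0 := by
  induction s using Multiset.induction_on with
  | empty => simp
  | cons a s ih =>
    have h1 := ih fun w hw => hs w (Multiset.mem_cons_of_mem hw)
    simp [h1, Measure.dirac_apply' _ hK.compl, hs a (Multiset.mem_cons_self a s)]

theorem isProbabilityMeasure_rootMeasure {S : ℂ[X]} (hS : S.natDegree ≠ 0) :
    IsProbabilityMeasure (rootMeasure S) := by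
  refine ⟨?_⟩
  rw [rootMeasure, Measure.smul_apply, multiset_sum_dirac_apply_univ,
    ← (IsAlgClosed.splits S).natDegree_eq_card_roots, smul_eq_mul]
  exact ENNReal.inv_mul_cancel (by exact_mod_cast hS) (by simp)

theorem rootMeasure_compl_eq_zero {S : ℂ[X]} {K : Set ℂ} (hK : MeasurableSet K)
    (hS : ∀ z ∈ S.roots, z ∈ K) : rootMeasure S Kᶜ = 0 := by
  rw [rootMeasure, Measure.smul_apply, multiset_sum_dirac_compl_eq_zero _ hK hS, smul_zero]

theorem cauchyTransform_rootMeasure (S : ℂ[X]) (z : ℂ) :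
    cauchyTransform (rootMeasure S) z
      = (S.natDegree : ℂ)⁻¹ * (S.roots.map fun a => (z - a)⁻¹).sum := by
  rw [cauchyTransform, rootMeasure, integral_smul_measure,
    (integrable_integral_multiset_sum_dirac S.roots _).2]
  simp

theorem lintegral_enorm_sum_inv_sq_rpow_le (s : Multiset ℂ) {r : ℝ} (hr : 0 < r) :
    ∫⁻ z in ball (0 : ℂ) r, ‖(s.map fun a => ((z - a)⁻¹) ^ 2).sum‖ₑ ^ (3 / 4 : ℝ)
      ≤ s.card * ENNReal.ofReal ((2 * Real.pi / (2 - 3 / 2) + Real.pi) * r ^ (2 - 3 / 2 : ℝ)) := by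
  induction s using Multiset.induction_on with
  | empty => simp
  | cons a s ih =>
    have hpt : ∀ z : ℂ, ‖((z - a)⁻¹) ^ 2‖ₑ ^ (3 / 4 : ℝ)
        ≤ ENNReal.ofReal (‖z - a‖ ^ (-(3 / 2) : ℝ)) := fun z => by
      rw [← ofReal_norm, ENNReal.ofReal_rpow_of_nonneg (norm_nonneg _) (by norm_num)]
      refine ENNReal.ofReal_le_ofReal (le_of_eq ?_)
      rw [norm_pow, norm_inv, Real.rpow_neg (norm_nonneg _), ← Real.inv_rpow (norm_nonneg _),
        ← Real.rpow_natCast, ← Real.rpow_mul (by positivity)]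
      norm_num
    calc _ ≤ ∫⁻ z in ball (0 : ℂ) r, (ENNReal.ofReal (‖z - a‖ ^ (-(3 / 2) : ℝ))
            + ‖(s.map fun a => ((z - a)⁻¹) ^ 2).sum‖ₑ ^ (3 / 4 : ℝ)) := by
          refine lintegral_mono fun z => ?_
          rw [Multiset.map_cons, Multiset.sum_cons]
          refine (ENNReal.rpow_le_rpow (enorm_add_le _ _) (by norm_num)).trans ?_
          refine (ENNReal.rpow_add_le_add_rpow _ _ (by norm_num) (by norm_num)).trans ?_
          gcongr
          exact hpt z
      _ = (∫⁻ z in ball (0 : ℂ) r, ENNReal.ofReal (‖z - a‖ ^ (-(3 / 2) : ℝ)))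
            + ∫⁻ z in ball (0 : ℂ) r,
              ‖(s.map fun a => ((z - a)⁻¹) ^ 2).sum‖ₑ ^ (3 / 4 : ℝ) :=
          lintegral_add_left (by fun_prop) _
      _ ≤ _ := by
          rw [Multiset.card_cons]
          push_cast
          rw [add_mul, one_mul, add_comm]
          exact add_le_add ih
            (lintegral_ball_norm_sub_rpow_le (by norm_num) (by norm_num) 0 a hr)

theorem measurable_sum_inv_sq (s : Multiset ℂ) :
    Measurable fun z : ℂ => (s.map fun a => ((z - a)⁻¹) ^ 2).sum := by
  induction s using Multiset.induction_on with
  | empty => simp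
  | cons a s ih =>
    simp only [Multiset.map_cons, Multiset.sum_cons]
    exact Measurable.add (by fun_prop) ih

theorem lintegral_enorm_normalized_sum_inv_sq_rpow_le (s : Multiset ℂ) (hs : 0 < s.card)
    {r : ℝ} (hr : 0 < r) :
    ∫⁻ z in ball (0 : ℂ) r,
        ‖((s.card : ℂ) ^ 2)⁻¹ * (s.map fun a => ((z - a)⁻¹) ^ 2).sum‖ₑ ^ (3 / 4 : ℝ)
      ≤ ENNReal.ofReal ((s.card : ℝ) ^ (-(1 / 2) : ℝ) *
          ((2 * Real.pi / (2 - 3 / 2) + Real.pi) * r ^ (2 - 3 / 2 : ℝ))) := by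
  have hn : (0 : ℝ) < s.card := by exact_mod_cast hs
  have hc : ‖((s.card : ℂ) ^ 2)⁻¹‖ₑ ^ (3 / 4 : ℝ)
      = ENNReal.ofReal ((s.card : ℝ) ^ (-(3 / 2) : ℝ)) := by
    rw [← ofReal_norm, ENNReal.ofReal_rpow_of_nonneg (norm_nonneg _) (by norm_num)]
    congr 1
    rw [norm_inv, norm_pow, Complex.norm_natCast, ← Real.rpow_natCast, ← Real.rpow_neg hn.le,
      ← Real.rpow_mul hn.le]
    norm_num
  have hcard : (s.card : ENNReal) = ENNReal.ofReal (s.card : ℝ) := by simp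
  simp_rw [enorm_mul, ENNReal.mul_rpow_of_nonneg _ _ (show (0 : ℝ) ≤ 3 / 4 by norm_num)]
  rw [lintegral_const_mul' _ _ (by rw [hc]; exact ENNReal.ofReal_ne_top), hc]
  refine (mul_le_mul_right (lintegral_enorm_sum_inv_sq_rpow_le s hr) _).trans (le_of_eq ?_)
  rw [hcard, ← mul_assoc, ← ENNReal.ofReal_mul (by positivity), ← ENNReal.ofReal_mul (by positivity)]
  congr 2
  nth_rw 2 [← Real.rpow_one (s.card : ℝ)]
  rw [← Real.rpow_add hn]
  norm_num

theorem ae_eval_ne_zero {Q : ℂ[X]} (hQ : Q ≠ 0) : ∀ᵐ z : ℂ, Q.eval z ≠ 0 := by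
  have h : ((Q.roots.toFinset : Finset ℂ) : Set ℂ).Finite := Finset.finite_toSet _
  filter_upwards [h.countable.ae_notMem volume] with z hz hz0
  exact hz (by simpa [hQ] using hz0)

theorem boundedOff_of_sq_cauchyTransform {Q : ℂ[X]} (hQ : Q ≠ 0) {bt : ℂ} {ν : Measure ℂ}
    (h : ∀ᵐ z, cauchyTransform ν z ^ 2 = (z - bt) / Q.eval z) :
    BoundedOff Q.roots.toFinset ν := by
  intro E hE hEQ
  have hcont : ContinuousOn (fun z => (z - bt) / Q.eval z) E := by
    refine ContinuousOn.div (by fun_prop) Q.continuous.continuousOn fun z hz hz0 => ?_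
    exact hEQ z (by simpa [hQ] using hz0) hz
  obtain ⟨M, hM⟩ := hE.exists_bound_of_continuousOn hcont
  refine ⟨M + 1, ?_⟩
  filter_upwards [h] with z hz hzE
  have h1 := hM z hzE
  rw [← hz, norm_pow] at h1
  nlinarith [sq_nonneg (‖cauchyTransform ν z‖ - 1), norm_nonneg (cauchyTransform ν z)]

/-- Every weak limit of normalized root-counting measures of solutions has the expected Cauchy
transform. -/
theorem sq_cauchyTransform_of_weak_limit {Q P : ℂ[X]} (hQ : Q.Monic) (hQd : Q.natDegree = 3)
    (hP : P.natDegree ≤ 2) {S V : ℕ → ℂ[X]} {b : ℕ → ℂ} {bt : ℂ} {m : ℕ → ℕ}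
    (hm : Tendsto m atTop atTop) (hm2 : ∀ k, 2 ≤ m k)
    (hS : ∀ k, (S k).natDegree = m k) (hV : ∀ k, (V k).natDegree ≤ 1)
    (heq : ∀ k, Q * derivative (derivative (S k)) + P * derivative (S k) + V k * S k = 0)
    (hb : ∀ k, (V k).IsRoot (b k)) (hbt : Tendsto b atTop (𝓝 bt))
    {ν : Measure ℂ} [IsProbabilityMeasure ν]
    (hw : ∀ f : BoundedContinuousFunction ℂ ℝ,
      Tendsto (fun k => ∫ z, f z ∂(rootMeasure (S k))) atTop (𝓝 (∫ z, f z ∂ν))) :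
    ∀ᵐ z, cauchyTransform ν z ^ 2 = (z - bt) / Q.eval z := by
  have hprob : ∀ k, IsProbabilityMeasure (rootMeasure (S k)) := fun k =>
    isProbabilityMeasure_rootMeasure (by rw [hS]; have := hm2 k; omega)
  have hcard : ∀ k, (S k).roots.card = m k := fun k => by
    rw [← (IsAlgClosed.splits (S k)).natDegree_eq_card_roots, hS]
  have hmC : ∀ k, (m k : ℂ) ≠ 0 := fun k => by
    have := hm2 k
    exact_mod_cast (show m k ≠ 0 by omega)
  have hinv : Tendsto (fun k => ((m k : ℂ))⁻¹) atTop (𝓝 0) :=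
    (tendsto_inv_atTop_nhds_zero_nat (𝕜 := ℂ)).comp hm
  have hmR : Tendsto (fun k => (m k : ℝ)) atTop atTop := tendsto_natCast_atTop_atTop.comp hm
  have key : ∀ᵐ z, Q.eval z * cauchyTransform ν z ^ 2 = z - bt := by
    refine sq_cauchyTransform_of_riccati (μ := fun k => rootMeasure (S k)) hw
      (q := fun z => Q.eval z) (p := fun z => P.eval z) (s := 3 / 4)
      (h := fun k z => ((m k : ℂ) ^ 2)⁻¹ * ((S k).roots.map fun a => ((z - a)⁻¹) ^ 2).sum)
      (W := fun k z => -((m k : ℂ) ^ 2)⁻¹ * (V k).eval z)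
      (c := fun k => -((m k : ℂ))⁻¹) (by norm_num)
      (fun k => (measurable_sum_inv_sq _).const_mul _) ?_ (by simpa using hinv.neg) ?_ ?_
    · intro r hr
      have hlim : Tendsto (fun k => ENNReal.ofReal ((m k : ℝ) ^ (-(1 / 2) : ℝ) *
          ((2 * Real.pi / (2 - 3 / 2) + Real.pi) * r ^ (2 - 3 / 2 : ℝ)))) atTop (𝓝 0) := by
        have h1 := ((tendsto_rpow_neg_atTop (show (0 : ℝ) < 1 / 2 by norm_num)).comp hmR).mul_const
          ((2 * Real.pi / (2 - 3 / 2) + Real.pi) * r ^ (2 - 3 / 2 : ℝ))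
        rw [zero_mul] at h1
        simpa using ENNReal.tendsto_ofReal h1
      refine tendsto_of_tendsto_of_tendsto_of_le_of_le tendsto_const_nhds hlim
        (fun _ => zero_le) fun k => ?_
      have := lintegral_enorm_normalized_sum_inv_sq_rpow_le (S k).roots
        (by rw [hcard]; have := hm2 k; omega) hr
      rwa [hcard] at this
    · intro z
      have heval : ∀ k, -((m k : ℂ) ^ 2)⁻¹ * (V k).eval z
          = (1 - (m k : ℂ)⁻¹ + P.coeff 2 * (m k : ℂ)⁻¹) * (z - b k) := fun k => by
        have := hmC k
        rw [eval_of_degree_one (hV k) (hb k),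
          coeff_one_of_heun hQ hQd hP (hV k) (hm2 k) (hS k) (heq k)]
        field_simp
      simp_rw [heval]
      have := ((hinv.const_sub 1).add (hinv.const_mul (P.coeff 2))).mul (hbt.const_sub z)
      simpa using this
    · intro k
      have hS0 : S k ≠ 0 := by
        intro h0
        have h1 := hS k
        have h2 := hm2 k
        rw [h0, natDegree_zero] at h1
        omega
      filter_upwards [ae_eval_ne_zero hS0] with z hz
      have h1 := riccati_of_heun (heq k) hz
      rw [cauchyTransform_rootMeasure, hS]
      linear_combination ((m k : ℂ)⁻¹) ^ 2 * h1
  filter_upwards [key, ae_eval_ne_zero hQ.ne_zero] with z hz hz0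
  rw [eq_div_iff hz0, mul_comm, hz]

/-- A compactly supported probability measure is determined by the equation
`C_ν(z)² = (z - bt) / Q(z)`. -/
theorem eq_of_sq_cauchyTransform_eq_div {Q : ℂ[X]} (hQ : Q ≠ 0) {bt : ℂ} {ν ν' : Measure ℂ}
    [IsProbabilityMeasure ν] [IsProbabilityMeasure ν'] {K K' : Set ℂ} (hK : IsCompact K)
    (hK' : IsCompact K') (hνK : ν Kᶜ = 0) (hνK' : ν' K'ᶜ = 0)
    (h : ∀ᵐ z, cauchyTransform ν z ^ 2 = (z - bt) / Q.eval z)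
    (h' : ∀ᵐ z, cauchyTransform ν' z ^ 2 = (z - bt) / Q.eval z) : ν' = ν := by
  obtain ⟨r, hr, hsub⟩ := (hK.union hK').isBounded.subset_closedBall_lt 0 0
  refine eq_of_sq_cauchyTransform_ae_eq hr
    (measure_mono_null (compl_subset_compl.2 (subset_union_right.trans hsub)) hνK')
    (measure_mono_null (compl_subset_compl.2 (subset_union_left.trans hsub)) hνK)
    (boundedOff_of_sq_cauchyTransform hQ h') (boundedOff_of_sq_cauchyTransform hQ h) ?_
  filter_upwards [h, h'] with z hz hz'
  rw [hz, hz']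

end

/-- Theorem 3: if for all large `n` the Heun equation `Q Sₙ'' + P Sₙ' + Vₙ Sₙ = 0` has a
polynomial solution `Sₙ` of degree `n` with `Vₙ` of degree exactly `1`, and the roots
`bₙ` of `Vₙ` converge to `bt`, then there is a unique compactly supported positive
probability measure `ν` with `C_ν(z)² = (z - bt)/Q(z)` a.e., and the root-counting
measures of the `Sₙ` converge weakly to `ν`. -/
theorem stmt8 (Q P : Polynomial ℂ) (hQmonic : Q.Monic) (hQdeg : Q.natDegree = 3)
    (hP : P.degree ≤ 2)
    (S V : ℕ → Polynomial ℂ) (b : ℕ → ℂ) (N : ℕ)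
    (hS : ∀ n : ℕ, N ≤ n → (S n).natDegree = n)
    (hV : ∀ n : ℕ, N ≤ n → (V n).degree = 1)
    (heq : ∀ n : ℕ, N ≤ n →
      Q * (derivative (derivative (S n))) + P * (derivative (S n)) + V n * S n = 0)
    (hb : ∀ n : ℕ, N ≤ n → (V n).IsRoot (b n))
    (bt : ℂ) (hbconv : Tendsto b atTop (nhds bt)) :
    ∃ ν : Measure ℂ, IsProbabilityMeasure ν ∧
      (∃ K : Set ℂ, IsCompact K ∧ ν Kᶜ = 0) ∧
      (∀ᵐ z ∂(MeasureTheory.volume : Measure ℂ),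
        Integrable (fun ξ => (z - ξ)⁻¹) ν ∧
        (∫ ξ, (z - ξ)⁻¹ ∂ν) ^ 2 = (z - bt) / Q.eval z) ∧
      (∀ ν' : Measure ℂ, IsProbabilityMeasure ν' →
        (∃ K : Set ℂ, IsCompact K ∧ ν' Kᶜ = 0) →
        (∀ᵐ z ∂(MeasureTheory.volume : Measure ℂ),
          Integrable (fun ξ => (z - ξ)⁻¹) ν' ∧
          (∫ ξ, (z - ξ)⁻¹ ∂ν') ^ 2 = (z - bt) / Q.eval z) →
        ν' = ν) ∧
      (∀ f : BoundedContinuousFunction ℂ ℝ,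
        Tendsto (fun n => ∫ z, f z ∂(rootMeasure (S n))) atTop (nhds (∫ z, f z ∂ν))) := by
  have hP' : P.natDegree ≤ 2 := natDegree_le_of_degree_le hP
  obtain ⟨R, hR, N₁, hroots⟩ := exists_roots_bound hQmonic hQdeg hP'
  obtain ⟨M, hMN, hMN₁, hM2⟩ : ∃ M, N ≤ M ∧ N₁ ≤ M ∧ 2 ≤ M :=
    ⟨N + N₁ + 2, by omega, by omega, by omega⟩
  have hprob : ∀ k, IsProbabilityMeasure (rootMeasure (S (k + M))) := fun k =>
    isProbabilityMeasure_rootMeasure (by rw [hS _ (by omega)]; omega)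
  have hV' : ∀ k, N ≤ k → (V k).natDegree ≤ 1 := fun k hk =>
    natDegree_le_of_degree_le (hV k hk).le
  obtain ⟨ν, hν, hνR, hνsq, hνlim⟩ :=
    exists_weak_limit_of_unique (μ := fun k => rootMeasure (S (k + M))) (R := R)
      (G := fun ν => ∀ᵐ z, cauchyTransform ν z ^ 2 = (z - bt) / Q.eval z)
      (fun k => rootMeasure_compl_eq_zero Metric.isClosed_closedBall.measurableSet fun z hz => by
        simpa using hroots (k + M) (by omega) (S (k + M)) (V (k + M)) (hS _ (by omega))
          (heq _ (by omega)) z hz)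
      (fun ns hns ν hν hw => by
        have hm : Tendsto (fun k => ns k + M) atTop atTop := tendsto_atTop_mono (fun k => Nat.le_add_right _ M) hns
        exact sq_cauchyTransform_of_weak_limit hQmonic hQdeg hP'
          (S := fun k => S (ns k + M)) (V := fun k => V (ns k + M))
          (b := fun k => b (ns k + M)) hm (fun k => by omega) (fun k => hS _ (by omega))
          (fun k => hV' _ (by omega)) (fun k => heq _ (by omega)) (fun k => hb _ (by omega))
          (hbconv.comp hm) hw)
      (fun ν ν' _ _ hνR hνR' h h' =>
        eq_of_sq_cauchyTransform_eq_div hQmonic.ne_zero (isCompact_closedBall 0 R)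
          (isCompact_closedBall 0 R) hνR' hνR h' h)
  refine ⟨ν, hν, ⟨_, isCompact_closedBall 0 R, hνR⟩, ?_, ?_, fun f => ?_⟩
  · filter_upwards [ae_integrable_inv_sub ν, hνsq] with z h1 h2 using ⟨h1, h2⟩
  · rintro ν' hν' ⟨K, hK, hν'K⟩ h
    exact eq_of_sq_cauchyTransform_eq_div hQmonic.ne_zero (isCompact_closedBall 0 R) hK hνR hν'K
      hνsq (h.mono fun z hz => hz.2)
  · exact (tendsto_add_atTop_iff_nat M).1 (hνlim f)
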